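/- arXiv:0708.3105 — 3 statements merged into one kernel-verified Lean document; each statement's English description precedes it below -/
import Mathlib

section
/- Let k be an algebraically closed field and let (A,m) be a Noetherian local domain, essentially of finite type over k with residue field A/m = k, which is integrally closed in its fraction field. If a, b ∈ A and a ∉ bA, then there exists a k-algebra homomorphism ρ : A → k[[z]] with ρ(m) ⊆ (z) such that ρ(a) ∉ ρ(b)·k[[z]]. -/
open PowerSeries in
/-- If every element is congruent to a constant modulo the nonzero nonunit `π`,
then expansion in powers of `π` is a homomorphism to the power series ring. -/
theorem exists_algHom_powerSeries_of_uniformizer {k V : Type*} [Field k] [CommRing V] [IsDomain V]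
    [Algebra k V] {π : V} (hπ0 : π ≠ 0) (hπ : ¬ IsUnit π)
    (hres : ∀ x : V, ∃ c : k, π ∣ x - algebraMap k V c) :
    ∃ ρ : V →ₐ[k] k⟦X⟧, ρ π = X := by
  let E (v : V) (f : k⟦X⟧) : Prop := ∀ n, π ^ n ∣ v - Polynomial.aeval π (trunc n f)
  have exists_E (v : V) : ∃ f, E v f := by
    choose c r hr using hres
    refine ⟨mk fun n ↦ c (r^[n] v), fun n ↦ ⟨r^[n] v, ?_⟩⟩
    induction n with
    | zero => simp
    | succ n ih =>
      rw [trunc_succ, map_add, ← sub_sub, ih, Function.iterate_succ_apply',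
        Polynomial.aeval_monomial,
        coeff_mk, pow_succ, mul_assoc, ← hr]
      ring
  have E_sub {v w f g} (hf : E v f) (hg : E w g) : E (v - w) (f - g) := fun n ↦ by
    rw [map_sub, map_sub, sub_sub_sub_comm]
    exact dvd_sub (hf n) (hg n)
  have E_add {v w f g} (hf : E v f) (hg : E w g) : E (v + w) (f + g) := fun n ↦ by
    rw [map_add, map_add, add_sub_add_comm]
    exact dvd_add (hf n) (hg n)
  have E_mul {v w f g} (hf : E v f) (hg : E w g) : E (v * w) (f * g) := fun n ↦ by
    have h : (Polynomial.X : Polynomial k) ^ n ∣ trunc n f * trunc n g - trunc n (f * g) := by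
      rw [Polynomial.X_pow_dvd_iff]
      intro d hd
      rw [← trunc_trunc_mul_trunc, Polynomial.coeff_sub, coeff_trunc, if_pos hd,
        ← Polynomial.coe_mul, Polynomial.coeff_coe, sub_self]
    have h' := map_dvd (Polynomial.aeval π) h
    simp only [map_pow, Polynomial.aeval_X, map_sub, map_mul] at h'
    have e : v * w - Polynomial.aeval π (trunc n (f * g)) =
      (v - Polynomial.aeval π (trunc n f)) * w +
      Polynomial.aeval π (trunc n f) * (w - Polynomial.aeval π (trunc n g)) +
      (Polynomial.aeval π (trunc n f) * Polynomial.aeval π (trunc n g) -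
        Polynomial.aeval π (trunc n (f * g))) := by ring
    rw [e]
    exact dvd_add (dvd_add ((hf n).mul_right _) ((hg n).mul_left _)) h'
  have E_C (c : k) : E (algebraMap k V c) (algebraMap k k⟦X⟧ c) := fun n ↦ by
    cases n with
    | zero => simp
    | succ n => simp
  have E_X : E π X := fun n ↦ by
    match n with
    | 0 => simp
    | 1 => simp
    | n + 2 => simp [trunc_X]
  have E_zero {f} (hf : E 0 f) : f = 0 := by
    by_contra h0
    classical
    have hex : ∃ n, coeff n f ≠ 0 := by
      by_contra! h; exact h0 (by ext n; simpa using h n)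
    set n := Nat.find hex with hn
    have hlow : trunc n f = 0 := by
      ext i
      rw [coeff_trunc]
      split_ifs with hi
      · simpa using Nat.find_min hex hi
      · simp
    have h := hf (n + 1)
    rw [trunc_succ, hlow, zero_add, zero_sub, dvd_neg, Polynomial.aeval_monomial, pow_succ,
      mul_comm, mul_dvd_mul_iff_right (pow_ne_zero _ hπ0)] at h
    exact hπ (isUnit_of_dvd_unit h ((Nat.find_spec hex).isUnit.map (algebraMap k V)))
  have uniq {v f g} (hf : E v f) (hg : E v g) : f = g :=
    sub_eq_zero.1 (E_zero (by simpa using E_sub hf hg))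
  choose ρ hρ using exists_E
  refine ⟨{ toFun := ρ
            map_one' := uniq (hρ 1) (by simpa using E_C 1)
            map_mul' := fun x y ↦ uniq (hρ _) (E_mul (hρ x) (hρ y))
            map_zero' := uniq (hρ 0) (by simpa using E_C 0)
            map_add' := fun x y ↦ uniq (hρ _) (E_add (hρ x) (hρ y))
            commutes' := fun c ↦ uniq (hρ _) (E_C c) }, uniq (hρ π) E_X⟩

open Polynomial in
/-- A family that is linearly independent over `k` modulo `X` is linearly independent
over `k[X]`. -/
theorem linearIndependent_polynomial_of_mod_X {k V ι : Type*} [Field k] [CommRing V] [IsDomain V]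
    [Algebra k V] [Algebra k[X] V] [IsScalarTower k k[X] V] [FaithfulSMul k[X] V] [Fintype ι]
    (u : ι → V)
    (hu : LinearIndependent k
      fun i ↦ Ideal.Quotient.mk (Ideal.span {algebraMap k[X] V X}) (u i)) :
    LinearIndependent k[X] u := by
  have hX : algebraMap k[X] V X ≠ 0 := by
    simp [X_ne_zero]
  have key (N : ℕ) : ∀ f : ι → k[X], ∑ i, f i • u i = 0 → ∀ i, X ^ N ∣ f i := by
    induction N with
    | zero => simp
    | succ N ih =>
      intro f hf
      have hdvd : ∀ i, X ∣ f i := by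
        rw [Fintype.linearIndependent_iff] at hu
        intro i
        rw [X_dvd_iff]
        refine hu (fun i ↦ (f i).coeff 0) ?_ i
        have h := congr(Ideal.Quotient.mk (Ideal.span {algebraMap k[X] V X}) $hf)
        rw [map_sum, map_zero] at h
        rw [← h]
        refine Finset.sum_congr rfl fun j _ ↦ ?_
        rw [← Ideal.Quotient.mkₐ_eq_mk k, ← map_smul, Ideal.Quotient.mkₐ_eq_mk,
          Ideal.Quotient.mk_eq_mk_iff_sub_mem, Ideal.mem_span_singleton]
        have h2 : X ∣ C ((f j).coeff 0) - f j := by simp [X_dvd_iff]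
        have h3 := (map_dvd (algebraMap k[X] V) h2).mul_right (u j)
        rwa [map_sub, sub_mul, ← Algebra.smul_def, ← Algebra.smul_def, ← algebraMap_eq,
          algebraMap_smul] at h3
      choose g hg using hdvd
      have hg0 : ∑ i, g i • u i = 0 := by
        have : algebraMap k[X] V X * ∑ i, g i • u i = 0 := by
          rw [← hf, Finset.mul_sum]
          refine Finset.sum_congr rfl fun j _ ↦ ?_
          rw [hg j, mul_smul, Algebra.smul_def X]
        exact (mul_eq_zero.1 this).resolve_left hX
      intro i
      rw [hg i, pow_succ']
      exact mul_dvd_mul_left _ (ih g hg0 i)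
  rw [Fintype.linearIndependent_iff]
  intro f hf i
  by_contra h0
  have := natDegree_le_of_dvd (key ((f i).natDegree + 1) f hf i) h0
  simp at this

open Polynomial in
theorem finite_quotient_span_X {k V : Type*} [Field k] [CommRing V] [IsDomain V]
    [Algebra k V] [Algebra k[X] V] [IsScalarTower k k[X] V] [FaithfulSMul k[X] V]
    (hV : Module.rank k[X] V < Cardinal.aleph0) :
    Module.Finite k (V ⧸ Ideal.span {algebraMap k[X] V X}) := by
  obtain ⟨n, hn⟩ := Cardinal.lt_aleph0.1 hV
  rw [← Module.rank_lt_aleph0_iff]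
  refine (rank_le (n := n) fun s hs ↦ ?_).trans_lt (Cardinal.natCast_lt_aleph0)
  choose u hu using Ideal.Quotient.mk_surjective (I := Ideal.span {algebraMap k[X] V X})
  have := (linearIndependent_polynomial_of_mod_X (k := k) (fun i : s ↦ u i.1)
    (by simpa only [hu] using hs)).cardinal_le_rank
  rw [hn] at this
  simpa using this

open Polynomial in
theorem aeval_powerSeries_ne_zero_of_X_dvd {k : Type*} [Field k] {σ : PowerSeries k} (h0 : σ ≠ 0)
    (hσ : PowerSeries.X ∣ σ) {F : k[X]} (hF : F ≠ 0) : aeval σ F ≠ 0 := by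
  obtain ⟨G, hG, hGX⟩ := exists_eq_pow_rootMultiplicity_mul_and_not_dvd F hF 0
  rw [C_0, sub_zero] at hG hGX
  rw [hG, map_mul, map_pow, aeval_X]
  refine mul_ne_zero (pow_ne_zero _ h0) fun h ↦ hGX ?_
  rw [X_dvd_iff]
  rw [PowerSeries.X_dvd_iff] at hσ
  have h1 : PowerSeries.constantCoeff (aeval σ G) = G.coeff 0 := by
    rw [aeval_def, hom_eval₂, hσ, eval₂_at_zero]
    simp
  rw [← h1, h, map_zero]

open Polynomial in
/-- A valuation ring of finite rank over `k[X]` in which `X` is not a unit has a local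
homomorphism to `k⟦X⟧` that is injective on `k[X]`. -/
theorem ValuationRing.exists_algHom_powerSeries {k V : Type*} [Field k] [IsAlgClosed k]
    [CommRing V] [IsDomain V] [ValuationRing V]
    [Algebra k V] [Algebra k[X] V] [IsScalarTower k k[X] V] [FaithfulSMul k[X] V]
    (hV : Module.rank k[X] V < Cardinal.aleph0) (hX : ¬ IsUnit (algebraMap k[X] V X)) :
    ∃ ρ : V →ₐ[k] PowerSeries k, (∀ x, ¬ IsUnit x → PowerSeries.X ∣ ρ x) ∧
      ∀ F : k[X], F ≠ 0 → ρ (algebraMap k[X] V F) ≠ 0 := by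
  set s := algebraMap k[X] V X with hs
  have hs0 : s ≠ 0 := by simp [hs, X_ne_zero]
  set m := IsLocalRing.maximalIdeal V
  have hsm : Ideal.span {s} ≤ m := by
    rw [Ideal.span_singleton_le_iff_mem]; exact hX
  have hfin : Module.Finite k (V ⧸ Ideal.span {s}) := finite_quotient_span_X hV
  have : IsArtinianRing (V ⧸ Ideal.span {s}) := isArtinian_of_tower k inferInstance
  have : IsNoetherian V (V ⧸ Ideal.span {s}) := isNoetherian_of_tower k inferInstance
  have hmfg : m.FG := by
    refine Submodule.fg_of_fg_map_of_fg_inf_ker (Ideal.span {s}).mkQ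
      (IsNoetherian.noetherian _) ?_
    rw [Submodule.ker_mkQ, inf_eq_right.2 hsm]
    exact ⟨{s}, by simp⟩
  obtain ⟨⟨π, hπ⟩⟩ := IsBezout.isPrincipal_of_FG m hmfg
  change m = Ideal.span {π} at hπ
  have hmem {x : V} : ¬ IsUnit x ↔ π ∣ x := by
    rw [← Ideal.mem_span_singleton, ← hπ]; rfl
  have hπ0 : π ≠ 0 := by
    rintro rfl
    exact hs0 (zero_dvd_iff.1 (hmem.1 hX))
  have hres (x : V) : ∃ c : k, π ∣ x - algebraMap k V c := by
    have : Module.Finite k (V ⧸ m) :=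
      Module.Finite.of_surjective (Ideal.Quotient.factorₐ k hsm).toLinearMap
        (Ideal.Quotient.factor_surjective hsm)
    obtain ⟨c, hc⟩ := (IsAlgClosed.algebraMap_bijective_of_isIntegral (k := k) (K := V ⧸ m)).2
      (Ideal.Quotient.mk m x)
    refine ⟨c, ?_⟩
    rw [← Ideal.mem_span_singleton, ← hπ, ← Ideal.Quotient.mk_eq_mk_iff_sub_mem, ← hc]
    rfl
  obtain ⟨ρ, hρ⟩ := exists_algHom_powerSeries_of_uniformizer hπ0 (hmem.2 dvd_rfl) hres
  have hρX {x : V} (hx : ¬ IsUnit x) : PowerSeries.X ∣ ρ x := hρ ▸ map_dvd ρ (hmem.1 hx)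
  have hρs : ρ s ≠ 0 := by
    obtain ⟨n, hn⟩ := IsArtinianRing.isNilpotent_jacobson_bot (R := V ⧸ Ideal.span {s})
    have hjac : Ideal.Quotient.mk (Ideal.span {s}) π ∈ Ideal.jacobson ⊥ := by
      rw [Ideal.mem_jacobson_bot]
      intro y
      obtain ⟨y, rfl⟩ := Ideal.Quotient.mk_surjective y
      rw [← map_mul, ← map_one (Ideal.Quotient.mk (Ideal.span {s})), ← map_add]
      refine IsUnit.map _ ?_
      by_contra h
      exact hmem.2 dvd_rfl (isUnit_of_dvd_one ((dvd_add_right (dvd_mul_right π y)).1 (hmem.1 h)))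
    have : s ∣ π ^ n := by
      rw [← Ideal.mem_span_singleton, ← Ideal.Quotient.eq_zero_iff_mem, map_pow]
      simpa [hn] using Ideal.pow_mem_pow hjac n
    obtain ⟨c, hc⟩ := map_dvd ρ this
    rw [map_pow, hρ] at hc
    intro h
    exact pow_ne_zero n PowerSeries.X_ne_zero (by rw [hc, h, zero_mul])
  refine ⟨ρ, fun x ↦ hρX, fun F hF ↦ ?_⟩
  have : ρ (algebraMap k[X] V F) = aeval (ρ s) F := by
    rw [aeval_algHom_apply, hs, aeval_algebraMap_apply, aeval_X_left_apply]
  rw [this]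
  exact aeval_powerSeries_ne_zero_of_X_dvd hρs (hρX hX) hF

open Polynomial in
/-- Curve case: a point of a domain finite over `k[X]` extends to a formal arc on which a given
nonzero function does not vanish. -/
theorem exists_algHom_powerSeries_of_finite_polynomial {k T : Type*} [Field k] [IsAlgClosed k]
    [CommRing T] [IsDomain T] [Algebra k T] [Algebra k[X] T] [IsScalarTower k k[X] T]
    [FaithfulSMul k[X] T] [Module.Finite k[X] T] (φ : T →ₐ[k] k)
    (hφ : φ (algebraMap k[X] T X) = 0) {a : T} (ha : a ≠ 0) :
    ∃ ρ : T →ₐ[k] PowerSeries k, (∀ x, PowerSeries.constantCoeff (ρ x) = φ x) ∧ ρ a ≠ 0 := by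
  let L := FractionRing T
  let j : T ≃+* (algebraMap T L).range :=
    RingEquiv.ofBijective _ (⟨(RingHom.injective_codRestrict).2 (IsFractionRing.injective T L),
      (algebraMap T L).rangeRestrict_surjective⟩ :
        Function.Bijective (algebraMap T L).rangeRestrict)
  obtain ⟨V, hTV, hV⟩ := Ideal.image_subset_nonunits_valuationSubring
    ((RingHom.ker φ).comap j.symm.toRingHom) (by
      rw [Ne, Ideal.comap_eq_top_iff]
      exact RingHom.ker_ne_top φ)
  have hTV' (x : T) : algebraMap T L x ∈ V := hTV ⟨x, rfl⟩
  have hker (x : T) (hx : φ x = 0) : algebraMap T L x ∈ V.nonunits :=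
    hV ⟨j x, by simpa using hx, rfl⟩
  let i : T →+* V := (algebraMap T L).codRestrict V hTV'
  let _ : Algebra T V := i.toAlgebra
  let _ : Algebra k V := (i.comp (algebraMap k T)).toAlgebra
  let _ : Algebra k[X] V := (i.comp (algebraMap k[X] T)).toAlgebra
  have : IsScalarTower k T V := .of_algebraMap_eq' rfl
  have : IsScalarTower k[X] T V := .of_algebraMap_eq' rfl
  have : IsScalarTower k k[X] V := .of_algebraMap_eq' (by
    change i.comp _ = (i.comp _).comp _
    rw [RingHom.comp_assoc, ← IsScalarTower.algebraMap_eq])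
  have hi : Function.Injective i :=
    (RingHom.injective_codRestrict).2 (IsFractionRing.injective T L)
  have : FaithfulSMul k[X] V := (faithfulSMul_iff_algebraMap_injective _ _).2
    (hi.comp (FaithfulSMul.algebraMap_injective k[X] T))
  have hunit (x : T) (hx : φ x = 0) : ¬ IsUnit (algebraMap T V x) :=
    V.coe_mem_nonunits_iff.1 (hker x hx)
  have hrank : Module.rank k[X] V < Cardinal.aleph0 := by
    have h1 : Module.rank k[X] L = Module.rank k[X] T := by
      simpa using IsLocalizedModule.lift_rank_eq (nonZeroDivisors k[X])
        (IsScalarTower.toAlgHom k[X] T L).toLinearMap le_rfl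
    let f : V →ₗ[k[X]] L :=
      { toFun := (↑)
        map_add' := fun _ _ ↦ rfl
        map_smul' := fun c x ↦ by
          rw [Algebra.smul_def, Algebra.smul_def]; rfl }
    refine (LinearMap.rank_le_of_injective f Subtype.val_injective).trans_lt ?_
    rw [h1]
    exact Module.rank_lt_aleph0 _ _
  obtain ⟨ρ, hρ, hρF⟩ := ValuationRing.exists_algHom_powerSeries hrank
    (by rw [IsScalarTower.algebraMap_apply k[X] T V]; exact hunit _ hφ)
  refine ⟨ρ.comp (IsScalarTower.toAlgHom k T V), fun x ↦ ?_, fun h ↦ ?_⟩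
  · have h := hρ _ (hunit (x - algebraMap k T (φ x)) (by simp))
    rw [PowerSeries.X_dvd_iff, map_sub, map_sub, ← IsScalarTower.algebraMap_apply, ρ.commutes,
      map_sub, sub_eq_zero] at h
    simpa [PowerSeries.algebraMap_apply] using h
  · obtain ⟨F, hF, b, hb⟩ := (Algebra.IsAlgebraic.isAlgebraic (R := k[X]) a).exists_nonzero_dvd
      (mem_nonZeroDivisors_of_ne_zero ha)
    refine hρF F hF ?_
    have h' : ρ (algebraMap T V a) = 0 := h
    rw [IsScalarTower.algebraMap_apply k[X] T V, hb, map_mul, map_mul, h', zero_mul]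

/-- A `k`-point of an affine variety extends to a formal arc on which a given nonzero function does
not vanish: by going down from a Noether normalization, some curve through the point is not
contained in the zero locus of the function. -/
theorem exists_algHom_powerSeries_of_finiteType {k R : Type*} [Field k] [IsAlgClosed k]
    [CommRing R] [IsDomain R] [Algebra k R] [Algebra.FiniteType k R] (φ : R →ₐ[k] k)
    {a : R} (ha : a ≠ 0) :
    ∃ ρ : R →ₐ[k] PowerSeries k, (∀ x, PowerSeries.constantCoeff (ρ x) = φ x) ∧ ρ a ≠ 0 := by
  by_cases hφa : φ a = 0
  swap
  · refine ⟨(Algebra.ofId k _).comp φ, fun x ↦ ?_, ?_⟩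
    · simp [Algebra.ofId_apply]
    · simpa [Algebra.ofId_apply] using hφa
  obtain ⟨d, g, hg, hgfin⟩ := exists_finite_inj_algHom_of_fg k R
  let _ : Algebra (MvPolynomial (Fin d) k) R := g.toAlgebra
  have : IsScalarTower k (MvPolynomial (Fin d) k) R := .of_algebraMap_eq' g.comp_algebraMap.symm
  have : Module.Finite (MvPolynomial (Fin d) k) R := hgfin
  have : FaithfulSMul (MvPolynomial (Fin d) k) R := (faithfulSMul_iff_algebraMap_injective _ _).2 hg
  obtain ⟨F, hF, r, hr⟩ :=
    (Algebra.IsAlgebraic.isAlgebraic (R := MvPolynomial (Fin d) k) a).exists_nonzero_dvd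
      (mem_nonZeroDivisors_of_ne_zero ha)
  let c : Fin d → k := fun i ↦ φ (g (.X i))
  have hc (p : MvPolynomial (Fin d) k) :
      φ (algebraMap (MvPolynomial (Fin d) k) R p) = MvPolynomial.eval c p := by
    have : φ.comp g = MvPolynomial.aeval c := by
      ext i; simp [c]
    exact DFunLike.congr_fun this p
  have hFc : MvPolynomial.eval c F = 0 := by rw [← hc, hr, map_mul, hφa, zero_mul]
  obtain ⟨w, hw⟩ : ∃ w, MvPolynomial.eval w F ≠ 0 := by
    by_contra! h
    exact hF (MvPolynomial.funext fun x ↦ by simpa using h x)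
  obtain ⟨i, hi⟩ : ∃ i, w i - c i ≠ 0 := by
    by_contra! h
    exact hw (by rwa [show w = c from funext fun i ↦ sub_eq_zero.1 (h i)])
  -- restriction of polynomials to the line through `c` and `w`
  let e : MvPolynomial (Fin d) k →ₐ[k] Polynomial k :=
    MvPolynomial.aeval fun i ↦ Polynomial.C (c i) + Polynomial.C (w i - c i) * Polynomial.X
  have he (t : k) (p : MvPolynomial (Fin d) k) :
      (e p).eval t = MvPolynomial.eval (fun i ↦ c i + (w i - c i) * t) p := by
    have : (Polynomial.aeval t).comp e = MvPolynomial.aeval fun i ↦ c i + (w i - c i) * t := by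
      ext i; simp [e]
    simpa [Polynomial.coe_aeval_eq_eval, MvPolynomial.aeval_eq_eval] using DFunLike.congr_fun this p
  let x₀ : MvPolynomial (Fin d) k :=
    MvPolynomial.C (w i - c i)⁻¹ * (MvPolynomial.X i - MvPolynomial.C (c i))
  have hex₀ : e x₀ = Polynomial.X := by
    simp only [e, x₀, map_mul, map_sub, MvPolynomial.aeval_X, MvPolynomial.aeval_C,
      Polynomial.algebraMap_eq, add_sub_cancel_left]
    rw [← Polynomial.C_sub, ← mul_assoc, ← Polynomial.C_mul, inv_mul_cancel₀ hi,
      Polynomial.C_1, one_mul]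
  have hesurj : Function.Surjective e := fun q ↦
    ⟨Polynomial.aeval x₀ q, by
      rw [← Polynomial.aeval_algHom_apply, hex₀, Polynomial.aeval_X_left_apply]⟩
  have heF : e F ≠ 0 := fun h ↦ hw (by simpa [h] using (he 1 F).symm)
  have hle : RingHom.ker e ≤ (RingHom.ker φ).under (MvPolynomial (Fin d) k) := fun p hp ↦ by
    rw [Ideal.mem_comap, RingHom.mem_ker, hc]
    have := he 0 p
    rw [RingHom.mem_ker.1 hp] at this
    simpa using this.symm
  have : (RingHom.ker φ).IsPrime := RingHom.ker_isPrime φ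
  have : (RingHom.ker e).IsPrime := RingHom.ker_isPrime e
  obtain ⟨q, hqle, hq, hqover⟩ := Ideal.exists_ideal_le_liesOver_of_le (RingHom.ker φ) hle
  have hqe {p : MvPolynomial (Fin d) k} :
      algebraMap (MvPolynomial (Fin d) k) R p ∈ q ↔ e p = 0 := by
    rw [← RingHom.mem_ker, hqover.over]; rfl
  let ι : Polynomial k →ₐ[k] R ⧸ q :=
    (Ideal.Quotient.liftₐ (RingHom.ker e) ((Ideal.Quotient.mkₐ k q).comp g) fun p hp ↦
      Ideal.Quotient.eq_zero_iff_mem.2 (hqe.2 hp)).comp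
      (Ideal.quotientKerAlgEquivOfSurjective hesurj).symm.toAlgHom
  have hι (p : MvPolynomial (Fin d) k) :
      ι (e p) = Ideal.Quotient.mk q (algebraMap (MvPolynomial (Fin d) k) R p) := by
    have : (Ideal.quotientKerAlgEquivOfSurjective hesurj).symm (e p) = Ideal.Quotient.mk _ p := by
      rw [AlgEquiv.symm_apply_eq]; rfl
    simp only [ι, AlgHom.comp_apply, AlgEquiv.toAlgHom_apply, this]
    rfl
  let _ : Algebra (Polynomial k) (R ⧸ q) := ι.toAlgebra
  have : IsScalarTower k (Polynomial k) (R ⧸ q) := .of_algebraMap_eq' ι.comp_algebraMap.symm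
  have : FaithfulSMul (Polynomial k) (R ⧸ q) := by
    rw [faithfulSMul_iff_algebraMap_injective]
    refine (injective_iff_map_eq_zero ι).2 fun y hy ↦ ?_
    obtain ⟨p, rfl⟩ := hesurj y
    rwa [hι, Ideal.Quotient.eq_zero_iff_mem, hqe] at hy
  have : Module.Finite (Polynomial k) (R ⧸ q) := by
    have h : (ι.toRingHom.comp e.toRingHom).Finite := by
      have : ι.toRingHom.comp e.toRingHom =
          (Ideal.Quotient.mk q).comp (algebraMap (MvPolynomial (Fin d) k) R) :=
        RingHom.ext hι
      rw [this]
      exact (RingHom.Finite.of_surjective _ Ideal.Quotient.mk_surjective).comp hgfin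
    exact h.of_comp_finite
  let φq : R ⧸ q →ₐ[k] k := Ideal.Quotient.liftₐ q φ fun x hx ↦ hqle hx
  have hφq : φq (algebraMap (Polynomial k) (R ⧸ q) Polynomial.X) = 0 := by
    change φq (ι Polynomial.X) = 0
    rw [← hex₀, hι]
    change φ _ = 0
    rw [hc]
    simp [x₀]
  have haq : Ideal.Quotient.mk q a ≠ 0 := fun h ↦ heF (by
    rw [← hqe, hr]
    exact q.mul_mem_right _ (Ideal.Quotient.eq_zero_iff_mem.1 h))
  obtain ⟨ρ, hρ, hρa⟩ := exists_algHom_powerSeries_of_finite_polynomial φq hφq haq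
  exact ⟨ρ.comp (Ideal.Quotient.mkₐ k q), fun x ↦ hρ _, hρa⟩

theorem exists_algHom_powerSeries_of_essFiniteType {k S : Type*} [Field k] [IsAlgClosed k]
    [CommRing S] [IsDomain S] [Algebra k S] [Algebra.EssFiniteType k S] (φ : S →ₐ[k] k)
    {a : S} (ha : a ≠ 0) :
    ∃ ρ : S →ₐ[k] PowerSeries k, (∀ x, PowerSeries.constantCoeff (ρ x) = φ x) ∧ ρ a ≠ 0 := by
  let R := Algebra.EssFiniteType.subalgebra k S
  let M := Algebra.EssFiniteType.submonoid k S
  obtain ⟨⟨a₀, s⟩, hs⟩ := IsLocalization.surj M a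
  have hM (m : M) : IsUnit (algebraMap R S m) := IsLocalization.map_units S m
  have ha₀ : a₀ ≠ 0 := by
    rintro rfl
    rw [map_zero] at hs
    exact mul_ne_zero ha (hM s).ne_zero hs
  obtain ⟨ρ, hρ, hρa⟩ := exists_algHom_powerSeries_of_finiteType (φ.comp R.val) ha₀
  have hunit (m : M) : IsUnit (ρ m) := by
    rw [PowerSeries.isUnit_iff_constantCoeff, hρ]
    exact (hM m).map φ
  let ρS : S →ₐ[k] PowerSeries k := IsLocalization.liftAlgHom (M := M) (f := ρ) hunit
  have hρS (x : R) : ρS (algebraMap R S x) = ρ x := IsLocalization.lift_eq _ x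
  refine ⟨ρS, fun x ↦ ?_, fun h ↦ hρa ?_⟩
  · obtain ⟨⟨y, m⟩, hm⟩ := IsLocalization.surj M x
    have h1 := congr(PowerSeries.constantCoeff (ρS $hm))
    have h2 := congr(φ $hm)
    rw [map_mul, map_mul, hρS, hρS, hρ, hρ] at h1
    rw [map_mul] at h2
    exact mul_right_cancel₀ ((hM m).map φ).ne_zero (h1.trans h2.symm)
  · rw [← hρS, ← hs, map_mul, h, zero_mul]

theorem exists_algHom_of_forall_exists_sub_mem {k S : Type*} [Field k] [CommRing S] [Algebra k S]
    {I : Ideal S} (hI : I ≠ ⊤) (h : ∀ x : S, ∃ c : k, x - algebraMap k S c ∈ I) :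
    ∃ φ : S →ₐ[k] k, ∀ x ∈ I, φ x = 0 := by
  have : Nontrivial (S ⧸ I) := Ideal.Quotient.nontrivial_iff.2 hI
  have hbij : Function.Bijective (Algebra.ofId k (S ⧸ I)) := by
    refine ⟨(algebraMap k (S ⧸ I)).injective, fun x ↦ ?_⟩
    obtain ⟨x, rfl⟩ := Ideal.Quotient.mk_surjective x
    obtain ⟨c, hc⟩ := h x
    exact ⟨c, (Ideal.Quotient.mk_eq_mk_iff_sub_mem _ _).2 hc |>.symm⟩
  refine ⟨(AlgEquiv.ofBijective _ hbij).symm.toAlgHom.comp (Ideal.Quotient.mkₐ k I), fun x hx ↦ ?_⟩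
  have : Ideal.Quotient.mkₐ k I x = 0 := Ideal.Quotient.eq_zero_iff_mem.2 hx
  rw [AlgHom.comp_apply, this, map_zero]

open Algebra Polynomial in
/-- If `t⁻¹` is not integral over the local ring `A`, the maximal ideal of `A` together with `t`
generates a proper ideal of `A[t]`. -/
theorem map_maximalIdeal_sup_span_ne_top {A K : Type*} [CommRing A] [IsLocalRing A]
    [Field K] [Algebra A K] (t : K) (ht : ¬ IsIntegral A t⁻¹) :
    (IsLocalRing.maximalIdeal A).map (algebraMap A (adjoin A {t})) ⊔
      .span {⟨t, subset_adjoin rfl⟩} ≠ ⊤ := by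
  intro eq
  have ht0 : t ≠ 0 := by
    rintro rfl
    exact ht (by simpa using isIntegral_zero)
  let := invertibleOfNonzero ht0
  obtain ⟨p, hp, hpx⟩ :=
    exists_aeval_invOf_eq_zero_of_idealMap_adjoin_sup_span_eq_top t _
      (IsLocalRing.maximalIdeal.isMaximal A).ne_top eq
  have H : IsUnit p.leadingCoeff := of_not_not fun h ↦ by simpa using sub_mem h hp
  refine ht ⟨C H.unit⁻¹.1 * p, monic_C_mul_of_mul_leadingCoeff_eq_one H.val_inv_mul, ?_⟩
  rw [← aeval_def, map_mul, ← invOf_eq_inv, hpx, mul_zero]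

theorem exists_sub_algebraMap_mem_map_maximalIdeal_sup_span {k A K : Type*} [Field k] [CommRing A]
    [IsLocalRing A] [Algebra k A] [Field K] [Algebra A K] [Algebra k K] [IsScalarTower k A K]
    (hres : ∀ x : A, ∃ c : k, x - algebraMap k A c ∈ IsLocalRing.maximalIdeal A) (t : K)
    (x : Algebra.adjoin A {t}) :
    ∃ c : k, x - algebraMap k _ c ∈
      (IsLocalRing.maximalIdeal A).map (algebraMap A (Algebra.adjoin A {t})) ⊔
        .span {⟨t, Algebra.subset_adjoin rfl⟩} := by
  obtain ⟨x, hx⟩ := x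
  set I := (IsLocalRing.maximalIdeal A).map (algebraMap A (Algebra.adjoin A {t})) ⊔
        .span {⟨t, Algebra.subset_adjoin rfl⟩}
  induction hx using Algebra.adjoin_induction with
  | mem x hx =>
    obtain rfl : x = t := hx
    refine ⟨0, ?_⟩
    rw [map_zero, sub_zero]
    exact Ideal.mem_sup_right (Ideal.mem_span_singleton_self _)
  | algebraMap r =>
    obtain ⟨c, hc⟩ := hres r
    refine ⟨c, Ideal.mem_sup_left ?_⟩
    have := Ideal.mem_map_of_mem (algebraMap A (Algebra.adjoin A {t})) hc
    rwa [map_sub, ← IsScalarTower.algebraMap_apply] at this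
  | add x y hx hy ihx ihy =>
    obtain ⟨c, hc⟩ := ihx
    obtain ⟨d, hd⟩ := ihy
    refine ⟨c + d, ?_⟩
    rw [map_add, ← AddMemClass.mk_add_mk _ x y hx hy, add_sub_add_comm]
    exact I.add_mem hc hd
  | mul x y hx hy ihx ihy =>
    obtain ⟨c, hc⟩ := ihx
    obtain ⟨d, hd⟩ := ihy
    refine ⟨c * d, ?_⟩
    have := I.add_mem (I.mul_mem_left ⟨x, hx⟩ hd) (I.mul_mem_right (algebraMap k _ d) hc)
    rw [map_mul, ← MulMemClass.mk_mul_mk _ x y hx hy]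
    convert this using 1
    ring

/-- Lemma 5.3, after Böger: let `k` be an algebraically closed field and
`(A,m)` a Noetherian local domain, essentially of finite type over `k` with residue field
`k`, which is integrally closed in its fraction field.  If `a ∉ bA`, then there is a local
`k`-algebra homomorphism `ρ : A → k[[z]]` with `ρ(a) ∉ ρ(b)·k[[z]]`. -/
theorem exists_local_hom_powerSeries {k A : Type*} [Field k] [IsAlgClosed k]
    [CommRing A] [IsDomain A] [IsNoetherianRing A] [IsLocalRing A]
    [Algebra k A] [Algebra.EssFiniteType k A] [IsIntegrallyClosed A]
    (hres : ∀ x : A, ∃ c : k, x - algebraMap k A c ∈ IsLocalRing.maximalIdeal A)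
    (a b : A) (hab : a ∉ Ideal.span {b}) :
    ∃ ρ : A →ₐ[k] PowerSeries k,
      (∀ x ∈ IsLocalRing.maximalIdeal A, ρ x ∈ Ideal.span {(PowerSeries.X : PowerSeries k)}) ∧
      ρ a ∉ Ideal.span {ρ b} := by
  by_cases hb : b = 0
  · subst hb
    obtain ⟨φ, hφ⟩ := exists_algHom_of_forall_exists_sub_mem
      (IsLocalRing.maximalIdeal.isMaximal A).ne_top hres
    obtain ⟨ρ, hρ, hρa⟩ := exists_algHom_powerSeries_of_essFiniteType φ (a := a)
      (by simpa using hab)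
    refine ⟨ρ, fun x hx ↦ ?_, by simpa using hρa⟩
    rw [Ideal.mem_span_singleton, PowerSeries.X_dvd_iff, hρ, hφ x hx]
  have ha : a ≠ 0 := by
    rintro rfl
    exact hab (zero_mem _)
  let K := FractionRing A
  have hinj := IsFractionRing.injective A K
  have haK : algebraMap A K a ≠ 0 := by simpa using ha
  have hbK : algebraMap A K b ≠ 0 := by simpa using hb
  let t : K := algebraMap A K b / algebraMap A K a
  have ht : ¬ IsIntegral A t⁻¹ := by
    intro h
    obtain ⟨y, hy⟩ := IsIntegrallyClosed.isIntegral_iff.1 h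
    refine hab (Ideal.mem_span_singleton.2 ⟨y, hinj ?_⟩)
    rw [map_mul, hy, inv_div, mul_div_cancel₀ _ hbK]
  let S := Algebra.adjoin A {t}
  let t' : S := ⟨t, Algebra.subset_adjoin rfl⟩
  have : Algebra.FiniteType A S :=
    (Subalgebra.fg_iff_finiteType _).1 ⟨{t}, by simp [S]⟩
  have : Algebra.EssFiniteType k S := .comp k A S
  obtain ⟨φ, hφ⟩ := exists_algHom_of_forall_exists_sub_mem
    (map_maximalIdeal_sup_span_ne_top t ht)
    (exists_sub_algebraMap_mem_map_maximalIdeal_sup_span hres t)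
  have ha' : algebraMap A S a ≠ 0 := fun h ↦ haK congr(($h : K))
  have hbt : algebraMap A S b = t' * algebraMap A S a :=
    Subtype.ext (div_mul_cancel₀ _ haK).symm
  obtain ⟨ρ, hρ, hρa⟩ := exists_algHom_powerSeries_of_essFiniteType φ ha'
  refine ⟨ρ.comp (IsScalarTower.toAlgHom k A S), fun x hx ↦ ?_, fun h ↦ ?_⟩
  · rw [Ideal.mem_span_singleton, PowerSeries.X_dvd_iff]
    exact (hρ _).trans (hφ _ (Ideal.mem_sup_left (Ideal.mem_map_of_mem _ hx)))
  · obtain ⟨c, hc⟩ := Ideal.mem_span_singleton.1 h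
    change ρ (algebraMap A S a) = ρ (algebraMap A S b) * c at hc
    have hunit : ρ t' * c = 1 := by
      refine mul_right_cancel₀ hρa ?_
      rw [one_mul]
      conv_rhs => rw [hc, hbt, map_mul]
      ring
    have h0 : PowerSeries.constantCoeff (ρ t') = 0 :=
      (hρ _).trans (hφ _ (Ideal.mem_sup_right (Ideal.mem_span_singleton_self _)))
    simpa [h0] using congr(PowerSeries.constantCoeff $hunit)
end

section
/- Let k be an algebraically closed field, let (A,m,k) be the local ring of an algebraic variety over k, let I be an ideal of A, and let h ∈ A. Then h belongs to the integral closure Ī of I if and only if for every k-algebra homomorphism ρ : A → k[[z]] with ρ(m) ⊆ (z), one has ρ(h) ∈ ρ(I)·k[[z]] (the ideal of k[[z]] generated by the image of I). -/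
/-- `a` is integral over the ideal `I`: `a^n + c_1 a^{n-1} + ⋯ + c_n = 0` with `c_i ∈ I^i`.
The set of such elements is the integral closure `Ī` of `I`. -/
def IntegralOverIdeal {A : Type*} [CommRing A] (I : Ideal A) (a : A) : Prop :=
  ∃ n : ℕ, 0 < n ∧ ∃ c : ℕ → A, (∀ i, c i ∈ I ^ i) ∧
    a ^ n + ∑ i ∈ Finset.Icc 1 n, c i * a ^ (n - i) = 0

open IsLocalRing

/-- Power series expansion along a uniformizer. -/
lemma exists_algHom_powerSeries_of_residue {k V : Type*} [Field k] [CommRing V] [Algebra k V]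
    {p : V} (hreg : IsLeftRegular p) (hp : ¬ IsUnit p)
    (hres : ∀ v : V, ∃ c : k, p ∣ v - algebraMap k V c) :
    ∃ f : V →ₐ[k] PowerSeries k,
      (∀ v, p ∣ v → PowerSeries.X ∣ f v) ∧ ∀ v, f v = 0 → ∀ n, p ^ n ∣ v := by
  let E : V → PowerSeries k → Prop := fun v F =>
    ∀ n, p ^ n ∣ v - Polynomial.aeval p (F.trunc n)
  have hdvd : ∀ c : k, p ∣ algebraMap k V c → c = 0 := fun c hc => by
    by_contra h0
    exact hp (isUnit_of_dvd_unit hc ((IsUnit.mk0 c h0).map _))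
  have hzero : ∀ F, E 0 F → F = 0 := by
    intro F hF
    ext n
    induction n using Nat.strong_induction_on with
    | _ n ih =>
      have h0 : F.trunc n = 0 := by
        ext i
        rw [PowerSeries.coeff_trunc]
        split_ifs with hi
        · simpa using ih i hi
        · simp
      have h1 := hF (n + 1)
      rw [PowerSeries.trunc_succ, h0, zero_add, zero_sub, dvd_neg, Polynomial.aeval_monomial,
        pow_succ, mul_comm (algebraMap _ _ _)] at h1
      obtain ⟨w, hw⟩ := h1
      rw [mul_assoc] at hw
      simpa using hdvd _ ⟨w, (hreg.pow n) hw⟩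
  have hadd : ∀ {v w F G}, E v F → E w G → E (v + w) (F + G) := by
    intro v w F G hv hw n
    have := dvd_add (hv n) (hw n)
    rw [map_add, map_add]
    convert! this using 1
    ring
  have hmul : ∀ {v w F G}, E v F → E w G → E (v * w) (F * G) := by
    intro v w F G hv hw n
    have h1 : (Polynomial.X : Polynomial k) ^ n ∣
        F.trunc n * G.trunc n - (F * G).trunc n := by
      rw [Polynomial.X_pow_dvd_iff]
      intro d hd
      rw [Polynomial.coeff_sub, PowerSeries.coeff_trunc, if_pos hd,
        PowerSeries.coeff_mul_eq_coeff_trunc_mul_trunc F G hd]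
      rw [← Polynomial.coeff_coe]
      simp
    have h2 : p ^ n ∣ Polynomial.aeval p (F.trunc n) * Polynomial.aeval p (G.trunc n) -
        Polynomial.aeval p ((F * G).trunc n) := by
      simpa using map_dvd (Polynomial.aeval p) h1
    have h3 := dvd_add (dvd_add ((hv n).mul_right w)
      ((hw n).mul_left (Polynomial.aeval p (F.trunc n)))) h2
    convert! h3 using 1
    ring
  have halg : ∀ c : k, E (algebraMap k V c) (algebraMap k (PowerSeries k) c) := by
    intro c n
    rcases n with _ | n
    · simp
    · rw [PowerSeries.algebraMap_apply, Algebra.algebraMap_self, RingHom.id_apply,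
        PowerSeries.trunc_C]
      simp
  have huniq : ∀ {v F G}, E v F → E v G → F = G := by
    intro v F G hF hG
    have hneg := hmul (halg (-1)) hG
    have := hadd hF hneg
    simp only [map_neg, map_one, neg_mul, one_mul, add_neg_cancel] at this
    exact add_neg_eq_zero.mp (hzero _ this)
  have hex : ∀ v, ∃ F, E v F := by
    choose c q hq using hres
    intro v
    refine ⟨PowerSeries.mk fun i => c (q^[i] v), fun n => ⟨q^[n] v, ?_⟩⟩
    induction n with
    | zero => simp
    | succ n ih =>
      rw [PowerSeries.trunc_succ, map_add, ← sub_sub, ih, Polynomial.aeval_monomial,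
        PowerSeries.coeff_mk, Function.iterate_succ_apply', pow_succ, mul_assoc, ← hq]
      ring
  choose f hf using hex
  refine ⟨{ toFun := f
            map_one' := huniq (hf 1) (by simpa using halg 1)
            map_zero' := huniq (hf 0) (by simpa using halg 0)
            map_add' := fun v w => huniq (hf _) (hadd (hf v) (hf w))
            map_mul' := fun v w => huniq (hf _) (hmul (hf v) (hf w))
            commutes' := fun c => huniq (hf _) (halg c) }, ?_, ?_⟩
  · intro v hv
    change PowerSeries.X ∣ f v
    rw [PowerSeries.X_dvd_iff]
    apply hdvd
    have h1 := hf v 1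
    rw [PowerSeries.trunc_succ] at h1
    simpa using (dvd_sub_right hv).mp (by simpa using h1)
  · intro v (hv : f v = 0) n
    simpa [hv] using hf v n

/-- The core of the Krull–Akizuki theorem: `V ⧸ a V` is a Noetherian `R`-module. -/
lemma isNoetherian_quotient_span_algebraMap {R V : Type*} [CommRing R] [IsNoetherianRing R]
    [CommRing V] [Algebra R V] {a : R} [IsArtinianRing (R ⧸ Ideal.span {a})]
    (hreg : IsLeftRegular (algebraMap R V a))
    (hfrac : ∀ v : V, ∃ (n : ℕ) (r : R), algebraMap R V a ^ n * v = algebraMap R V r) :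
    IsNoetherian R (V ⧸ Ideal.span {algebraMap R V a}) := by
  set b := algebraMap R V a with hb
  let J : ℕ → Ideal R := fun n => (Ideal.span {b ^ n}).comap (algebraMap R V)
  have hJ : Antitone J := fun m n hmn => Ideal.comap_mono
    ((Ideal.span_singleton_le_span_singleton).2 (pow_dvd_pow b hmn))
  let F : ℕ →o (Ideal (R ⧸ Ideal.span {a}))ᵒᵈ :=
    ⟨fun n => OrderDual.toDual ((J n).map (Ideal.Quotient.mk _)),
      fun m n hmn => Ideal.map_mono (hJ hmn)⟩
  obtain ⟨s, hs⟩ := IsArtinian.monotone_stabilizes F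
  have hstep : ∀ n, s ≤ n → ∀ r ∈ J n, ∃ r', r - a * r' ∈ J (n + 1) := by
    intro n hn r hr
    have h1 : (J n).map (Ideal.Quotient.mk (Ideal.span {a})) = (J (n + 1)).map _ :=
      (hs n hn).symm.trans (hs (n + 1) (by lia))
    have h2 := Ideal.mem_map_of_mem (Ideal.Quotient.mk (Ideal.span {a})) hr
    rw [h1, Ideal.mem_map_iff_of_surjective _ Ideal.Quotient.mk_surjective] at h2
    obtain ⟨x, hx, hxr⟩ := h2
    rw [eq_comm, Ideal.Quotient.eq, Ideal.mem_span_singleton] at hxr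
    obtain ⟨r', hr'⟩ := hxr
    exact ⟨r', by rwa [← hr', sub_sub_cancel]⟩
  have hkey : ∀ v : V, ∃ (r : R) (w : V), b ^ s * v = algebraMap R V r + b ^ (s + 1) * w := by
    intro v
    obtain ⟨n, r, hr⟩ := hfrac v
    have hQ : ∃ (r : R) (w : V), b ^ n * v = algebraMap R V r + b ^ (n + 1) * w :=
      ⟨r, 0, by simpa using hr⟩
    clear hr r
    rcases le_total n s with hns | hns
    · obtain ⟨d, rfl⟩ := Nat.exists_eq_add_of_le hns
      obtain ⟨r, w, h⟩ := hQ
      refine ⟨a ^ d * r, w, ?_⟩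
      rw [map_mul, map_pow, ← hb]
      linear_combination b ^ d * h
    · induction n, hns using Nat.le_induction with
      | base => exact hQ
      | succ n hn ih =>
        apply ih
        obtain ⟨r, w, h⟩ := hQ
        obtain ⟨r', hr'⟩ := hstep (n + 1) (by lia) r (by
          rw [Ideal.mem_comap, Ideal.mem_span_singleton]
          exact ⟨v - b * w, by linear_combination -h⟩)
        rw [Ideal.mem_comap, Ideal.mem_span_singleton] at hr'
        obtain ⟨u, hu⟩ := hr'
        rw [map_sub, map_mul, ← hb] at hu
        refine ⟨r', u + w, hreg ?_⟩
        simp only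
        linear_combination h + hu
  let μ : V →ₗ[R] V ⧸ Ideal.span {b ^ (s + 1)} :=
    (Ideal.Quotient.mkₐ R (Ideal.span {b ^ (s + 1)})).toLinearMap ∘ₗ LinearMap.mulLeft R (b ^ s)
  have hμ : ∀ v, μ v = Ideal.Quotient.mk _ (b ^ s * v) := fun v => rfl
  let P := LinearMap.range (Algebra.linearMap R (V ⧸ Ideal.span {b ^ (s + 1)}))
  have hμP : ∀ v, μ v ∈ P := by
    intro v
    obtain ⟨r, w, h⟩ := hkey v
    refine ⟨r, ?_⟩
    change Ideal.Quotient.mk (Ideal.span {b ^ (s + 1)}) (algebraMap R V r) =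
      Ideal.Quotient.mk _ (b ^ s * v)
    rw [Ideal.Quotient.eq, Ideal.mem_span_singleton]
    exact ⟨-w, by linear_combination -h⟩
  let ν := μ.codRestrict P hμP
  have hker : LinearMap.ker ν = (Ideal.span {b}).restrictScalars R := by
    ext v
    rw [LinearMap.ker_codRestrict, LinearMap.mem_ker, hμ, Ideal.Quotient.eq_zero_iff_mem,
      Submodule.restrictScalars_mem, Ideal.mem_span_singleton, Ideal.mem_span_singleton]
    constructor
    · rintro ⟨w, hw⟩
      exact ⟨w, (hreg.pow s) (by simp only; rw [hw]; ring)⟩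
    · rintro ⟨w, rfl⟩
      exact ⟨w, by ring⟩
  have hN : IsNoetherian R (V ⧸ LinearMap.ker ν) :=
    isNoetherian_of_linearEquiv ν.quotKerEquivRange.symm
  rw [hker] at hN
  exact isNoetherian_of_linearEquiv
    (Submodule.Quotient.restrictScalarsEquiv R (Ideal.span {b}))

/-- The residue map of a local `k`-algebra with residue field `k`. -/
lemma exists_residue_algHom {k R : Type*} [Field k] [CommRing R] [IsLocalRing R] [Algebra k R]
    (hres : ∀ x : R, ∃ c : k, x - algebraMap k R c ∈ maximalIdeal R) :
    ∃ θ : R →ₐ[k] k, ∀ x, x - algebraMap k R (θ x) ∈ maximalIdeal R := by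
  have hbij : Function.Bijective (Algebra.ofId k (ResidueField R)) := by
    refine ⟨(algebraMap k (ResidueField R)).injective, fun y => ?_⟩
    obtain ⟨x, rfl⟩ := residue_surjective y
    obtain ⟨c, hc⟩ := hres x
    refine ⟨c, ?_⟩
    rw [← residue_eq_zero_iff, map_sub, sub_eq_zero] at hc
    exact hc.symm
  let e := AlgEquiv.ofBijective _ hbij
  refine ⟨e.symm.toAlgHom.comp (IsScalarTower.toAlgHom k R (ResidueField R)), fun x => ?_⟩
  rw [← residue_eq_zero_iff, map_sub, sub_eq_zero]
  exact (e.apply_symm_apply (residue R x)).symm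

/-- A valuation ring which dominates `R` and whose elements become elements of `R` after
multiplication by a power of `a`, where `R ⧸ (a)` is Artinian, expands into power series. -/
lemma exists_algHom_powerSeries_of_valuationRing {k R V : Type*} [Field k] [IsAlgClosed k]
    [CommRing R] [IsNoetherianRing R] [IsLocalRing R] [Algebra k R]
    (hres : ∀ x : R, ∃ c : k, x - algebraMap k R c ∈ maximalIdeal R)
    [CommRing V] [IsDomain V] [ValuationRing V] [Algebra R V] [Algebra k V] [IsScalarTower k R V]
    [IsLocalHom (algebraMap R V)] {a : R} [IsArtinianRing (R ⧸ Ideal.span {a})]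
    (ha : a ∈ maximalIdeal R) (ha0 : algebraMap R V a ≠ 0)
    (hfrac : ∀ v : V, ∃ (n : ℕ) (r : R), algebraMap R V a ^ n * v = algebraMap R V r) :
    ∃ ρ : V →ₐ[k] PowerSeries k,
      (∀ x ∈ maximalIdeal V, PowerSeries.X ∣ ρ x) ∧ ρ (algebraMap R V a) ≠ 0 := by
  have hN : IsNoetherian R (V ⧸ Ideal.span {algebraMap R V a}) :=
    isNoetherian_quotient_span_algebraMap (IsLeftCancelMulZero.mul_left_cancel_of_ne_zero ha0) hfrac
  set b := algebraMap R V a with hb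
  have hbm : b ∈ maximalIdeal V := by
    rw [mem_maximalIdeal, mem_nonunits_iff] at ha ⊢
    exact fun h => ha (isUnit_of_map_unit _ _ h)
  have hNV : IsNoetherian V (V ⧸ Ideal.span {b}) := isNoetherian_of_tower R hN
  have hfg : (maximalIdeal V).FG := by
    refine Submodule.fg_of_fg_map_of_fg_inf_ker (Ideal.span {b}).mkQ (IsNoetherian.noetherian _) ?_
    rw [Submodule.ker_mkQ, inf_eq_right.mpr ((Ideal.span_singleton_le_iff_mem _).2 hbm)]
    exact ⟨{b}, by simp⟩
  obtain ⟨p, hp⟩ := (IsBezout.isPrincipal_of_FG _ hfg).principal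
  have hmem : ∀ v, v ∈ maximalIdeal V ↔ p ∣ v := fun v => by
    rw [hp]
    exact Ideal.mem_span_singleton
  have hp0 : p ≠ 0 := by
    rintro rfl
    exact ha0 (zero_dvd_iff.mp ((hmem b).1 hbm))
  have hpu : ¬ IsUnit p := (hmem p).2 dvd_rfl
  have hκ : Function.Bijective (algebraMap k (ResidueField V)) := by
    obtain ⟨θ, hθ⟩ := exists_residue_algHom hres
    have hθκ : ∀ r, algebraMap R (ResidueField V) r = algebraMap k (ResidueField V) (θ r) := by
      intro r
      have h1 : algebraMap R V (r - algebraMap k R (θ r)) ∈ maximalIdeal V := by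
        have := hθ r
        rw [mem_maximalIdeal, mem_nonunits_iff] at this ⊢
        exact fun h => this (isUnit_of_map_unit _ _ h)
      rw [map_sub, ← IsScalarTower.algebraMap_apply, ← residue_eq_zero_iff, map_sub,
        sub_eq_zero] at h1
      exact h1
    have hle : Ideal.span {b} ≤ maximalIdeal V := (Ideal.span_singleton_le_iff_mem _).2 hbm
    let f : (V ⧸ Ideal.span {b}) →ₐ[R] (V ⧸ maximalIdeal V) := Ideal.Quotient.factorₐ R hle
    have hf : Function.Surjective f := Ideal.Quotient.factor_surjective hle
    have hfin : Module.Finite R (ResidueField V) := Module.Finite.of_surjective f.toLinearMap hf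
    have : Algebra.IsIntegral k (ResidueField V) := ⟨fun x => by
      obtain ⟨q, hq, hqx⟩ := Algebra.IsIntegral.isIntegral (R := R) x
      refine ⟨q.map (θ : R →+* k), hq.map _, ?_⟩
      rw [Polynomial.eval₂_map, ← hqx]
      congr 1
      ext r
      exact (hθκ r).symm⟩
    exact IsAlgClosed.algebraMap_bijective_of_isIntegral
  obtain ⟨ρ, hρ, hρ0⟩ := exists_algHom_powerSeries_of_residue (k := k)
    (IsLeftCancelMulZero.mul_left_cancel_of_ne_zero hp0) hpu (fun v => by
      obtain ⟨c, hc⟩ := hκ.2 (residue V v)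
      refine ⟨c, (hmem _).1 ?_⟩
      rw [← residue_eq_zero_iff, map_sub, sub_eq_zero, ← hc]
      rfl)
  refine ⟨ρ, fun x hx => hρ x ((hmem x).1 hx), fun h0 => ?_⟩
  choose u hu using hρ0 b h0
  have hu1 : ∀ n, u n = p * u (n + 1) := fun n =>
    mul_left_cancel₀ (pow_ne_zero n hp0) (by rw [← hu, ← mul_assoc, ← pow_succ, ← hu])
  let F : ℕ →o Submodule V (V ⧸ Ideal.span {b}) :=
    ⟨fun n => Submodule.map (Ideal.span {b}).mkQ (Ideal.span {u n}), monotone_nat_of_le_succ fun n =>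
      Submodule.map_mono (Ideal.span_singleton_le_span_singleton.2 (Dvd.intro_left p (hu1 n).symm))⟩
  obtain ⟨n, hn⟩ := monotone_stabilizes_iff_noetherian.mpr hNV F
  have hn1 : (Ideal.span {b}).mkQ (u (n + 1)) ∈ Submodule.map (Ideal.span {b}).mkQ (Ideal.span {u n}) := by
    have h1 : Submodule.map (Ideal.span {b}).mkQ (Ideal.span {u n}) = _ := hn (n + 1) n.le_succ
    rw [h1]
    exact Submodule.mem_map_of_mem (Ideal.mem_span_singleton_self _)
  obtain ⟨y, hy, hyu⟩ := hn1
  have hdvd : u n ∣ u (n + 1) := by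
    rw [eq_comm, Submodule.mkQ_apply, Submodule.mkQ_apply, Submodule.Quotient.eq,
      Ideal.mem_span_singleton] at hyu
    have h2 : u n ∣ y := Ideal.mem_span_singleton.1 hy
    have h3 : u n ∣ b := ⟨p ^ n, by rw [mul_comm]; exact hu n⟩
    exact (dvd_sub_left h2).mp (h3.trans hyu)
  obtain ⟨w, hw⟩ := hdvd
  have hu0 : u n ≠ 0 := fun h => ha0 (by rw [hu n, h, mul_zero])
  refine hpu (IsUnit.of_mul_eq_one w (mul_left_cancel₀ hu0 ?_))
  rw [mul_one]
  conv_rhs => rw [hu1, hw]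
  ring

/-- In a Noetherian local domain, if a nonzero nonunit `a` lies in every nonzero prime, then the
maximal ideal is minimal over `a`. -/
lemma maximalIdeal_mem_minimalPrimes_of_mem_prime {R : Type*} [CommRing R] [IsDomain R]
    [IsNoetherianRing R] [IsLocalRing R] {a : R} (ha0 : a ≠ 0) (ha : a ∈ maximalIdeal R)
    (hprime : ∀ q : Ideal R, q.IsPrime → q ≠ ⊥ → a ∈ q) :
    maximalIdeal R ∈ (Ideal.span {a}).minimalPrimes := by
  by_contra hmin
  have hfin := Ideal.finite_minimalPrimes_of_isNoetherianRing R (Ideal.span {a})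
  have hnot : ¬ (maximalIdeal R : Set R) ⊆ ⋃ q ∈ (Ideal.span {a}).minimalPrimes, (q : Set R) := by
    have h := Ideal.subset_union_prime_finite hfin (f := id) ⊥ ⊥ (fun q hq _ _ => hq.1.1)
      (I := maximalIdeal R)
    simp only [id] at h
    rw [h]
    rintro ⟨q, hq, hle⟩
    have := (maximalIdeal.isMaximal R).eq_of_le hq.1.1.ne_top hle
    exact hmin (this ▸ hq)
  obtain ⟨y, hy, hyn⟩ := Set.not_subset.mp hnot
  simp only [Set.mem_iUnion, not_exists] at hyn
  have hy0 : y ≠ 0 := by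
    rintro rfl
    obtain ⟨q, hq, -⟩ := Ideal.exists_minimalPrimes_le
      ((Ideal.span_singleton_le_iff_mem _).2 ha)
    exact hyn q hq q.zero_mem
  obtain ⟨Q, hQ, -⟩ := Ideal.exists_minimalPrimes_le
    ((Ideal.span_singleton_le_iff_mem (maximalIdeal R)).2 hy)
  have hQp : Q.IsPrime := hQ.1.1
  have hyQ : y ∈ Q := hQ.1.2 (Ideal.mem_span_singleton_self y)
  have hQ1 := Ideal.height_le_one_of_isPrincipal_of_mem_minimalPrimes _ _ hQ
  have haQ : a ∈ Q := hprime Q hQp fun h => hy0 (by simpa [h] using hyQ)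
  obtain ⟨q, hq, hqQ⟩ := Ideal.exists_minimalPrimes_le ((Ideal.span_singleton_le_iff_mem Q).2 haQ)
  have hqlt : q < Q := lt_of_le_of_ne hqQ fun h => hyn q hq (h ▸ hyQ)
  have hq0 : q.height < ((1 : ℕ) : ℕ∞) :=
    Ideal.height_le_iff.mp (by exact_mod_cast hQ1) q hq.1.1 hqlt
  have : q = ⊥ := Ideal.height_eq_zero_iff_eq_bot.mp
    (by simpa using hq0)
  exact ha0 (by simpa [this] using hq.1.2 (Ideal.mem_span_singleton_self a))

/-- A formal arc on a local domain along which an element of all nonzero primes does not vanish. -/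
lemma exists_algHom_powerSeries_of_mem_prime {k R : Type*} [Field k] [IsAlgClosed k]
    [CommRing R] [IsDomain R] [IsNoetherianRing R] [IsLocalRing R] [Algebra k R]
    (hres : ∀ x : R, ∃ c : k, x - algebraMap k R c ∈ maximalIdeal R) {a : R} (ha0 : a ≠ 0)
    (hprime : ∀ q : Ideal R, q.IsPrime → q ≠ ⊥ → a ∈ q) :
    ∃ ρ : R →ₐ[k] PowerSeries k, (∀ x ∈ maximalIdeal R, PowerSeries.X ∣ ρ x) ∧ ρ a ≠ 0 := by
  by_cases ha : IsUnit a
  · obtain ⟨θ, hθ⟩ := exists_residue_algHom hres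
    refine ⟨(Algebra.ofId k (PowerSeries k)).comp θ, fun x hx => ?_, (ha.map _).ne_zero⟩
    have h1 : algebraMap k R (θ x) ∈ maximalIdeal R := by
      simpa using sub_mem hx (hθ x)
    have h2 : θ x = 0 := by
      by_contra h0
      exact h1 ((IsUnit.mk0 _ h0).map _)
    simp [h2]
  · have ham : a ∈ maximalIdeal R := ha
    have hmin := maximalIdeal_mem_minimalPrimes_of_mem_prime ha0 ham hprime
    have := quotient_artinian_of_mem_minimalPrimes_of_isLocalRing _ hmin
    obtain ⟨V, hV, hloc⟩ := exists_factor_valuationRing (algebraMap R (FractionRing R))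
    let f : R →+* V := (algebraMap R (FractionRing R)).codRestrict V.toSubring hV
    let : Algebra R V := f.toAlgebra
    let : Algebra k V := (f.comp (algebraMap k R)).toAlgebra
    have : IsScalarTower k R V := IsScalarTower.of_algebraMap_eq fun _ => rfl
    have : IsLocalHom (algebraMap R V) := hloc
    have hcoe : ∀ r : R, ((algebraMap R V r : V) : FractionRing R) = algebraMap R _ r :=
      fun _ => rfl
    have hinj : ∀ r : R, algebraMap R V r = 0 → r = 0 := fun r hr =>
      (IsFractionRing.injective R (FractionRing R))
        (by rw [← hcoe, hr, map_zero]; rfl)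
    obtain ⟨ρ, hρ, hρ0⟩ := exists_algHom_powerSeries_of_valuationRing (V := V) hres ham
      (fun h => ha0 (hinj _ h)) (fun v => by
        obtain ⟨x, y, hy, hxy⟩ := IsFractionRing.div_surjective (A := R) (v : FractionRing R)
        have hy0 : y ≠ 0 := nonZeroDivisors.ne_zero hy
        have hrad : a ∈ (Ideal.span {y}).radical := by
          rw [Ideal.radical_eq_sInf, Ideal.mem_sInf]
          rintro q ⟨hle, hq⟩
          exact hprime q hq fun h =>
            hy0 (by simpa [h] using hle (Ideal.mem_span_singleton_self y))
        obtain ⟨n, hn⟩ := hrad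
        obtain ⟨t, ht⟩ := Ideal.mem_span_singleton.1 hn
        refine ⟨n, t * x, Subtype.ext ?_⟩
        have hy1 : algebraMap R (FractionRing R) y ≠ 0 :=
          IsFractionRing.to_map_ne_zero_of_mem_nonZeroDivisors hy
        change ((algebraMap R V a : V) : FractionRing R) ^ n * (v : FractionRing R) =
          ((algebraMap R V (t * x) : V) : FractionRing R)
        rw [hcoe, hcoe, ← map_pow, ht, ← hxy]
        simp only [map_mul]
        field_simp)
    refine ⟨ρ.comp (IsScalarTower.toAlgHom k R V), fun x hx => hρ _ ?_, hρ0⟩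
    exact fun h => hx (isUnit_of_map_unit (algebraMap R V) _ h)

/-- Formal arcs through the closed point of a Noetherian local ring, lying on the closed subset cut
out by `K` and not inside the zero locus of `a`. -/
lemma exists_algHom_powerSeries_of_isLocalRing {k R : Type*} [Field k] [IsAlgClosed k]
    [CommRing R] [IsNoetherianRing R] [IsLocalRing R] [Algebra k R]
    (hres : ∀ x : R, ∃ c : k, x - algebraMap k R c ∈ maximalIdeal R) {K : Ideal R} {a : R}
    (ha : ∀ n, a ^ n ∉ K) :
    ∃ ρ : R →ₐ[k] PowerSeries k,
      (∀ x ∈ maximalIdeal R, PowerSeries.X ∣ ρ x) ∧ (∀ x ∈ K, ρ x = 0) ∧ ρ a ≠ 0 := by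
  obtain ⟨P₀, hP₀, hKP₀, hdisj⟩ := Ideal.exists_le_prime_disjoint K (Submonoid.powers a)
    (Set.disjoint_left.2 (by rintro _ hx ⟨n, rfl⟩; exact ha n hx))
  obtain ⟨P, ⟨hP, hKP, haP⟩, hmax⟩ := set_has_maximal_iff_noetherian.mpr
    (inferInstanceAs (IsNoetherian R R)) {P : Ideal R | P.IsPrime ∧ K ≤ P ∧ a ∉ P}
    ⟨P₀, hP₀, hKP₀, fun h => Set.disjoint_left.1 hdisj h (Submonoid.mem_powers a)⟩
  have hsurj := Ideal.Quotient.mk_surjective (I := P)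
  have : IsLocalRing (R ⧸ P) := IsLocalRing.of_surjective' _ hsurj
  have : IsLocalHom (Ideal.Quotient.mk P) := IsLocalHom.of_surjective _ hsurj
  have hm : ∀ x ∈ maximalIdeal R, Ideal.Quotient.mk P x ∈ maximalIdeal (R ⧸ P) :=
    fun x hx h => hx (isUnit_of_map_unit _ _ h)
  obtain ⟨ρ, hρ, hρ0⟩ := exists_algHom_powerSeries_of_mem_prime (k := k) (R := R ⧸ P)
    (a := Ideal.Quotient.mk P a)
    (fun x => by
      obtain ⟨x, rfl⟩ := hsurj x
      obtain ⟨c, hc⟩ := hres x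
      exact ⟨c, by simpa using hm _ hc⟩)
    (by rwa [Ne, Ideal.Quotient.eq_zero_iff_mem])
    (fun q hq hq0 => by
      by_contra haq
      refine hmax (q.comap (Ideal.Quotient.mk P)) ⟨inferInstance, ?_, haq⟩ ?_
      · exact hKP.trans (by simpa using Ideal.ker_le_comap (K := q) (Ideal.Quotient.mk P))
      · refine lt_of_le_of_ne
          (by simpa using Ideal.ker_le_comap (K := q) (Ideal.Quotient.mk P)) fun h => hq0 ?_
        rw [← Ideal.map_comap_of_surjective _ hsurj q, ← h, Ideal.map_quotient_self])
  refine ⟨ρ.comp (Ideal.Quotient.mkₐ k P), fun x hx => hρ _ (hm x hx), fun x hx => ?_, hρ0⟩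
  have : Ideal.Quotient.mk P x = 0 := Ideal.Quotient.eq_zero_iff_mem.2 (hKP hx)
  simp [this]

/-- Formal arcs centred at a rational point `N` of a Noetherian `k`-algebra. -/
lemma exists_algHom_powerSeries_of_isPrime {k S : Type*} [Field k] [IsAlgClosed k]
    [CommRing S] [IsNoetherianRing S] [Algebra k S] (N : Ideal S) [N.IsPrime]
    (hres : ∀ x : S, ∃ c : k, x - algebraMap k S c ∈ N) {K : Ideal S} {a : S}
    (ha : ∀ n, ∀ s ∉ N, s * a ^ n ∉ K) :
    ∃ ρ : S →ₐ[k] PowerSeries k,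
      (∀ x ∈ N, PowerSeries.X ∣ ρ x) ∧ (∀ x ∈ K, ρ x = 0) ∧ ρ a ≠ 0 := by
  let C := Localization.AtPrime N
  have hN : ∀ x, algebraMap S C x ∈ maximalIdeal C ↔ x ∈ N := fun x =>
    IsLocalization.AtPrime.to_map_mem_maximal_iff C N x
  have : IsNoetherianRing C := IsLocalization.isNoetherianRing N.primeCompl C inferInstance
  obtain ⟨ρ, hρ, hρK, hρ0⟩ := exists_algHom_powerSeries_of_isLocalRing (k := k) (R := C)
    (K := K.map (algebraMap S C)) (a := algebraMap S C a)
    (fun x => by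
      obtain ⟨y, s, rfl⟩ := IsLocalization.exists_mk'_eq N.primeCompl x
      obtain ⟨c, hc⟩ := hres y
      obtain ⟨d, hd⟩ := hres s
      have hd0 : d ≠ 0 := by
        rintro rfl
        exact s.2 (by simpa using hd)
      refine ⟨c / d, ?_⟩
      have hs : algebraMap S C s ∉ maximalIdeal C := fun h => s.2 ((hN _).1 h)
      refine ((maximalIdeal.isMaximal C).isPrime.mem_or_mem (y := algebraMap S C s) ?_).resolve_right
        hs
      rw [sub_mul, IsLocalization.mk'_spec, IsScalarTower.algebraMap_apply k S C, ← map_mul,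
        ← map_sub, hN]
      have h2 := sub_mem hc (N.mul_mem_left (algebraMap k S (c / d)) hd)
      convert! h2 using 1
      rw [mul_sub, ← map_mul, div_mul_cancel₀ _ hd0]
      ring)
    (fun n hn => by
      rw [← map_pow, IsLocalization.algebraMap_mem_map_algebraMap_iff N.primeCompl] at hn
      obtain ⟨s, hs, hsa⟩ := hn
      exact ha n s hs hsa)
  exact ⟨ρ.comp (IsScalarTower.toAlgHom k S C), fun x hx => hρ _ ((hN x).2 hx),
    fun x hx => hρK _ (Ideal.mem_map_of_mem _ hx), hρ0⟩

/-- In a valuation ring an element integral over a principal ideal belongs to it. -/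
lemma dvd_of_integralOverIdeal_span_singleton {V : Type*} [CommRing V] [IsDomain V]
    [ValuationRing V] {g x : V} (hx : IntegralOverIdeal (Ideal.span {g}) x) : g ∣ x := by
  rcases ValuationRing.dvd_total g x with h | ⟨y, rfl⟩
  · exact h
  obtain ⟨n, -, c, hc, h0⟩ := hx
  rcases eq_or_ne x 0 with rfl | hx0
  · simp
  choose d hd using fun i => Ideal.mem_span_singleton.1 (Ideal.span_singleton_pow (x * y) i ▸ hc i)
  have hsum : ∑ i ∈ Finset.Icc 1 n, c i * x ^ (n - i) =
      x ^ n * ∑ i ∈ Finset.Icc 1 n, y ^ i * d i := by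
    rw [Finset.mul_sum]
    refine Finset.sum_congr rfl fun i hi => ?_
    rw [hd, ← pow_mul_pow_sub x (Finset.mem_Icc.1 hi).2]
    ring
  have hy : y ∣ ∑ i ∈ Finset.Icc 1 n, y ^ i * d i := Finset.dvd_sum fun i hi =>
    (dvd_pow_self y (by have := (Finset.mem_Icc.1 hi).1; lia)).mul_right _
  rw [hsum, ← mul_one_add] at h0
  have h1 := (mul_eq_zero.1 h0).resolve_left (pow_ne_zero n hx0)
  have hu : IsUnit y := isUnit_of_dvd_one ((dvd_add_left hy).1 (h1 ▸ dvd_zero y))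
  exact (hu.mul_right_dvd).2 dvd_rfl

lemma IntegralOverIdeal.map {A B : Type*} [CommRing A] [CommRing B] {I : Ideal A} {a : A}
    (h : IntegralOverIdeal I a) (f : A →+* B) : IntegralOverIdeal (I.map f) (f a) := by
  obtain ⟨n, hn, c, hc, h0⟩ := h
  refine ⟨n, hn, fun i => f (c i), fun i => ?_, ?_⟩
  · rw [← Ideal.map_pow]
    exact Ideal.mem_map_of_mem f (hc i)
  · simpa using congrArg f h0

/-- An element `p = ∑ cᵢ tⁱ` of the Rees algebra of `I` with `c₀` a unit and `p(1/h) = 0` yields an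
equation of integral dependence for `h` over `I`. -/
lemma integralOverIdeal_of_aeval_invSelf_eq_zero {A : Type*} [CommRing A] {I : Ideal A} {h : A}
    {p : Polynomial A} (hp : p ∈ reesAlgebra I) (hu : IsUnit (p.coeff 0))
    (h0 : Polynomial.aeval (IsLocalization.Away.invSelf (S := Localization.Away h) h) p = 0) :
    IntegralOverIdeal I h := by
  set t := IsLocalization.Away.invSelf (S := Localization.Away h) h
  have ht : algebraMap A (Localization.Away h) h * t = 1 := IsLocalization.Away.mul_invSelf h
  have hn : algebraMap A (Localization.Away h)
      (∑ i ∈ Finset.range (p.natDegree + 1), p.coeff i * h ^ (p.natDegree - i)) = 0 := by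
    rw [← mul_zero (algebraMap A (Localization.Away h) h ^ p.natDegree), ← h0,
      Polynomial.aeval_eq_sum_range, Finset.mul_sum, map_sum]
    refine Finset.sum_congr rfl fun i hi => ?_
    have hi' : i ≤ p.natDegree := Nat.lt_succ_iff.1 (Finset.mem_range.1 hi)
    rw [Algebra.smul_def, map_mul, map_pow,
      ← pow_sub_mul_pow (algebraMap A (Localization.Away h) h) hi']
    have : (algebraMap A (Localization.Away h) h) ^ i * t ^ i = 1 := by
      rw [← mul_pow, ht, one_pow]
    linear_combination (-algebraMap A (Localization.Away h) (p.coeff i) *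
      algebraMap A (Localization.Away h) h ^ (p.natDegree - i)) * this
  rw [IsLocalization.map_eq_zero_iff (Submonoid.powers h)] at hn
  obtain ⟨⟨_, M, rfl⟩, hM⟩ := hn
  obtain ⟨u, hu⟩ := hu
  set n := p.natDegree
  have hE : ∑ i ∈ Finset.range (n + M + 1 + 1), p.coeff i * h ^ (n + M + 1 - i) = 0 := by
    have hsub : Finset.range (n + 1) ⊆ Finset.range (n + M + 1 + 1) :=
      Finset.range_subset_range.2 (by lia)
    rw [← Finset.sum_subset hsub, ← mul_zero h, ← hM, ← mul_assoc, Finset.mul_sum]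
    · refine Finset.sum_congr rfl fun i hi => ?_
      have hi' := Finset.mem_range.1 hi
      rw [show n + M + 1 - i = M + 1 + (n - i) by lia, pow_add, pow_succ]
      ring
    · intro i _ hi
      rw [Finset.mem_range, not_lt] at hi
      rw [Polynomial.coeff_eq_zero_of_natDegree_lt (by lia), zero_mul]
  refine ⟨n + M + 1, by lia, fun i => ↑u⁻¹ * p.coeff i,
    fun i => Ideal.mul_mem_left _ _ (hp i), ?_⟩
  rw [Finset.sum_range_succ', ← hu] at hE
  have hIcc : ∑ i ∈ Finset.Icc 1 (n + M + 1), ↑u⁻¹ * p.coeff i * h ^ (n + M + 1 - i) =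
      ↑u⁻¹ * ∑ i ∈ Finset.range (n + M + 1), p.coeff (i + 1) * h ^ (n + M + 1 - (i + 1)) := by
    rw [Finset.mul_sum, Finset.range_eq_Ico, Finset.sum_Ico_add'
      (fun i => (↑u⁻¹ : A) * (p.coeff i * h ^ (n + M + 1 - i))) 0 (n + M + 1) 1]
    exact Finset.sum_congr rfl fun i _ => mul_assoc _ _ _
  rw [hIcc]
  have huu : (↑u⁻¹ : A) * u = 1 := u.inv_mul
  rw [Nat.sub_zero] at hE
  linear_combination (↑u⁻¹ : A) * hE - h ^ (n + M + 1) * huu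

/-- Proposition 5.4, algebraic valuative criterion for integral closure:
let `k` be an algebraically closed field and `(A,m,k)` the local ring of an algebraic
variety over `k` (a reduced Noetherian local `k`-algebra, essentially of finite type, with
residue field `k`).  For an ideal `I` and `h ∈ A`, `h ∈ Ī` iff for every local `k`-algebra
homomorphism `ρ : A → k[[z]]` one has `ρ(h) ∈ ρ(I)·k[[z]]`. -/
theorem integralOverIdeal_iff_powerSeries {k A : Type*} [Field k] [IsAlgClosed k]
    [CommRing A] [IsReduced A] [IsNoetherianRing A] [IsLocalRing A]
    [Algebra k A] [Algebra.EssFiniteType k A]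
    (hres : ∀ x : A, ∃ c : k, x - algebraMap k A c ∈ IsLocalRing.maximalIdeal A)
    (I : Ideal A) (h : A) :
    IntegralOverIdeal I h ↔
      ∀ ρ : A →ₐ[k] PowerSeries k,
        (∀ x ∈ IsLocalRing.maximalIdeal A,
          ρ x ∈ Ideal.span {(PowerSeries.X : PowerSeries k)}) →
        ρ h ∈ Ideal.map (ρ : A →+* PowerSeries k) I := by
  constructor
  · intro hI ρ _
    obtain ⟨g, hg⟩ := IsPrincipalIdealRing.principal (Ideal.map (ρ : A →+* PowerSeries k) I)
    have hint := hI.map (ρ : A →+* PowerSeries k)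
    rw [hg] at hint ⊢
    exact Ideal.mem_span_singleton.2 (dvd_of_integralOverIdeal_span_singleton hint)
  · intro hρ
    by_contra hI
    let φ : reesAlgebra I →+* Localization.Away h :=
      (Polynomial.aeval (IsLocalization.Away.invSelf (S := Localization.Away h) h)).toRingHom.comp
        (reesAlgebra I).val.toRingHom
    let N : Ideal (reesAlgebra I) := (IsLocalRing.maximalIdeal A).comap
      (Polynomial.constantCoeff.comp (reesAlgebra I).val.toRingHom)
    have hN : ∀ x : reesAlgebra I, x ∈ N ↔ x.1.coeff 0 ∈ IsLocalRing.maximalIdeal A :=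
      fun _ => Iff.rfl
    have hφ : ∀ x : reesAlgebra I, φ x =
        Polynomial.aeval (IsLocalization.Away.invSelf (S := Localization.Away h) h) x.1 :=
      fun _ => rfl
    have hφA : ∀ x : A, φ (algebraMap A (reesAlgebra I) x) =
        algebraMap A (Localization.Away h) x := fun x => Polynomial.aeval_C _ _
    obtain ⟨ρ, hρN, hρK, hρh⟩ := exists_algHom_powerSeries_of_isPrime (k := k) N
      (K := RingHom.ker φ) (a := algebraMap A (reesAlgebra I) h)
      (fun x => by
        obtain ⟨c, hc⟩ := hres (x.1.coeff 0)
        refine ⟨c, (hN _).2 ?_⟩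
        have h1 : (algebraMap k (reesAlgebra I) c).1 = Polynomial.C (algebraMap k A c) := rfl
        rwa [Subalgebra.coe_sub, Polynomial.coeff_sub, h1, Polynomial.coeff_C_zero])
      (fun n s hs hmem => by
        rw [RingHom.mem_ker, map_mul, map_pow, hφA] at hmem
        have hunit := (IsLocalization.Away.algebraMap_isUnit (S := Localization.Away h) h).pow n
        rw [hunit.mul_left_eq_zero] at hmem
        exact hI (integralOverIdeal_of_aeval_invSelf_eq_zero s.2
          (not_not.1 fun hu => hs ((hN s).2 hu)) hmem))
    let σ : A →ₐ[k] PowerSeries k := ρ.comp (IsScalarTower.toAlgHom k A (reesAlgebra I))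
    have hσ : ∀ x, σ x = ρ (algebraMap A (reesAlgebra I) x) := fun _ => rfl
    have hle : Ideal.map (σ : A →+* PowerSeries k) I ≤ Ideal.span {PowerSeries.X * σ h} := by
      rw [Ideal.map_le_iff_le_comap]
      intro g hg
      let e : reesAlgebra I := ⟨Polynomial.monomial 1 g,
        reesAlgebra.monomial_mem.2 (by rwa [pow_one])⟩
      have heN : e ∈ N := by
        rw [hN]
        simp [e, Polynomial.coeff_monomial]
      have hek : algebraMap A (reesAlgebra I) g - e * algebraMap A (reesAlgebra I) h ∈
          RingHom.ker φ := by
        rw [RingHom.mem_ker, map_sub, map_mul, hφA, hφA, hφ, Polynomial.aeval_monomial, pow_one,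
          mul_assoc, mul_comm (IsLocalization.Away.invSelf h), IsLocalization.Away.mul_invSelf,
          mul_one, sub_self]
      have h1 := hρK _ hek
      rw [map_sub, map_mul, sub_eq_zero] at h1
      rw [Ideal.mem_comap, Ideal.mem_span_singleton]
      change PowerSeries.X * σ h ∣ σ g
      rw [hσ, hσ, h1]
      exact mul_dvd_mul_right (hρN e heN) _
    have hmem := hle (hρ σ fun x hx => Ideal.mem_span_singleton.2
      (hρN _ ((hN _).2 (by simpa [Polynomial.coeff_C_zero] using hx))))
    obtain ⟨w, hw⟩ := Ideal.mem_span_singleton.1 hmem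
    have hX : PowerSeries.X * w = 1 :=
      mul_left_cancel₀ (show σ h ≠ 0 from hρh) (by linear_combination -hw)
    exact PowerSeries.X_prime.not_isUnit (IsUnit.of_mul_eq_one w hX)
end

section
/- Let k be an algebraically closed field of characteristic 0, let (A,m,k) be the local ring of an algebraic variety over k, let I be an m-primary ideal of A, and let h ∈ A. Set B = A ⊗_k A. Then h belongs to the weak subintegral closure *I of I if and only if for every k-algebra homomorphism ρ : B → k[[z]] satisfying ρ(a ⊗ 1) ∈ (z) and ρ(1 ⊗ a) ∈ (z) for all a ∈ m, the vector (ρ(h ⊗ 1), ρ(1 ⊗ h)) ∈ k[[z]]^2 lies in M_ρ + z·N_ρ, where M_ρ is the k[[z]]-submodule of k[[z]]^2 generated by {(ρ(g ⊗ 1), ρ(1 ⊗ g)) : g ∈ I} and N_ρ is the k[[z]]-submodule of k[[z]]^2 generated by {(ρ(g ⊗ 1), 0) : g ∈ I} ∪ {(0, ρ(1 ⊗ g)) : g ∈ I}. -/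
open TensorProduct

/-- An element `b` is weakly subintegral over an ideal `I`:
there are `q ≥ 0` and `a_i ∈ I^i` with
`b^n + ∑_{i=1}^n (n choose i) a_i b^{n-i} = 0` for `q+1 ≤ n ≤ 2q+1`.
The set of such elements is the weak subintegral closure `*I`. -/
def WSubIdeal {A : Type*} [CommRing A] (I : Ideal A) (b : A) : Prop :=
  ∃ q : ℕ, ∃ a : ℕ → A, (∀ i, a i ∈ I ^ i) ∧
    ∀ n, q + 1 ≤ n → n ≤ 2 * q + 1 →
      b ^ n + ∑ i ∈ Finset.Icc 1 n, (n.choose i : A) * a i * b ^ (n - i) = 0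

section LinearFunctionals

open Polynomial

variable {S B N : Type*} [CommRing S] [CommRing B] [Algebra S B] [AddCommGroup N] [Module S N]
  [Module B N] [IsScalarTower S B N]

/-- Multiplication by the variable on the functionals `S[X] → N`, as a `B`-linear map. -/
noncomputable def shiftEnd (S B N : Type*) [CommRing S] [CommRing B] [Algebra S B]
    [AddCommGroup N] [Module S N] [Module B N] [IsScalarTower S B N] :
    Module.End B (S[X] →ₗ[S] N) where
  toFun ν := ν ∘ₗ LinearMap.mulLeft S X
  map_add' _ _ := rfl
  map_smul' _ _ := rfl

/-- The action of `B[X]` on the functionals `S[X] → N`. -/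
noncomputable def polyAct (S N : Type*) {B : Type*} [CommRing S] [CommRing B] [Algebra S B]
    [AddCommGroup N] [Module S N] [Module B N] [IsScalarTower S B N] :
    B[X] →ₐ[B] Module.End B (S[X] →ₗ[S] N) :=
  aeval (shiftEnd S B N)

lemma shiftEnd_pow_apply (n : ℕ) (ν : S[X] →ₗ[S] N) (g : S[X]) :
    (shiftEnd S B N ^ n) ν g = ν (X ^ n * g) := by
  induction n generalizing g with
  | zero => simp
  | succ n ih =>
    rw [pow_succ', Module.End.mul_apply]
    change ((shiftEnd S B N ^ n) ν) (X * g) = _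
    rw [ih, pow_succ, mul_assoc]

lemma polyAct_monomial_apply (n : ℕ) (c : B) (ν : S[X] →ₗ[S] N) (g : S[X]) :
    polyAct S N (monomial n c) ν g = c • ν (X ^ n * g) := by
  rw [polyAct, aeval_monomial, Module.End.mul_apply, Module.algebraMap_end_apply,
    LinearMap.smul_apply, shiftEnd_pow_apply]

lemma polyAct_map_apply (f : S[X]) (ν : S[X] →ₗ[S] N) (g : S[X]) :
    polyAct S N (f.map (algebraMap S B)) ν g = ν (f * g) := by
  induction f using Polynomial.induction_on' with
  | add p q hp hq => simp [add_mul, hp, hq]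
  | monomial n a =>
    rw [map_monomial, polyAct_monomial_apply, algebraMap_smul, ← map_smul,
      ← C_mul_X_pow_eq_monomial, mul_assoc, C_mul']

lemma polyAct_X_sub_C_surjective (b : B) :
    Function.Surjective (polyAct S N (X - C b)) := by
  intro η
  let u : ℕ → N := fun n => Nat.rec 0 (fun n y => b • y + η (X ^ n)) n
  refine ⟨(basisMonomials S).constr S u, ?_⟩
  refine (basisMonomials S).ext fun n => ?_
  have hbasis : ∀ n, basisMonomials S n = X ^ n := fun n => by
    rw [coe_basisMonomials]
    exact monomial_one_right_eq_X_pow n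
  have key : ∀ n, (basisMonomials S).constr S u (X ^ n) = u n := fun n => by
    rw [← hbasis, Module.Basis.constr_basis]
  have hX : (X - C b : B[X]) = monomial 1 1 - monomial 0 b := by
    rw [monomial_one_one_eq_X, monomial_zero_left]
  rw [hbasis, hX, map_sub, LinearMap.sub_apply,
    LinearMap.sub_apply, polyAct_monomial_apply, polyAct_monomial_apply, pow_zero, one_mul,
    ← pow_add, key, key, add_comm 1 n, one_smul]
  simp [u]

lemma polyAct_pow_surjective (b : B) (M : ℕ) :
    Function.Surjective (polyAct S N ((X - C b) ^ M)) := by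
  rw [map_pow, Module.End.coe_pow]
  exact (polyAct_X_sub_C_surjective b).iterate M

lemma map_pow_le_span (b : B) (M : ℕ) {f : S[X]}
    (hf : f ∈ (RingHom.ker (aeval b : S[X] →ₐ[S] B)) ^ M) :
    (X - C b) ^ M ∣ f.map (algebraMap S B) := by
  have h1 : (RingHom.ker (aeval b : S[X] →ₐ[S] B)).map (mapRingHom (algebraMap S B)) ≤
      Ideal.span {X - C b} := by
    rw [Ideal.map_le_iff_le_comap]
    intro g hg
    rw [Ideal.mem_comap, Ideal.mem_span_singleton, dvd_iff_isRoot, coe_mapRingHom, IsRoot,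
      eval_map_algebraMap]
    exact hg
  have h2 := Ideal.pow_right_mono h1 M
  rw [← Ideal.map_pow, Ideal.span_singleton_pow] at h2
  exact Ideal.mem_span_singleton.mp (h2 (Ideal.mem_map_of_mem _ hf))

/-- Functionals on a power of the ideal `K` into `M` with a prescribed value at `1` extend to all of
`S[X]`, after restriction to a higher power of `K`. -/
def ExtendsFunctionals (K : Ideal S[X]) (M : Type*) [AddCommGroup M] [Module S M] : Prop :=
  ∀ (j : ℕ) (L : (K ^ j).restrictScalars S →ₗ[S] M) (m : M), ∃ (i : ℕ) (hi : j ≤ i)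
    (L' : S[X] →ₗ[S] M), L' 1 = m ∧ ∀ f (hf : f ∈ K ^ i), L' f = L ⟨f, Ideal.pow_le_pow_right hi hf⟩

variable (N) in
lemma extendsFunctionals_of_module (b : B)
    (hb : X - C b ∈ ((RingHom.ker (aeval b : S[X] →ₐ[S] B)).map
      (mapRingHom (algebraMap S B))).radical) :
    ExtendsFunctionals (RingHom.ker (aeval b : S[X] →ₐ[S] B)) N := by
  set K := RingHom.ker (aeval b : S[X] →ₐ[S] B) with hK
  obtain ⟨n, hn⟩ := hb
  intro j L m
  -- the functional `g ↦ L (f * g)`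
  let ψ : S[X] → S[X] →ₗ[S] N := fun f => by
    classical
    exact if hf : f ∈ K ^ j then L ∘ₗ (LinearMap.mulLeft S f).codRestrict _
      (fun g => Ideal.mul_mem_right g _ hf) else 0
  have hψ : ∀ f (hf : f ∈ K ^ j) g, ψ f g = L ⟨f * g, Ideal.mul_mem_right g _ hf⟩ := by
    intro f hf g
    simp only [ψ, dif_pos hf]
    rfl
  have hψmul : ∀ f, f ∈ K ^ j → ∀ g, polyAct S N (g.map (algebraMap S B)) (ψ f) = ψ (g * f) := by
    intro f hf g
    refine LinearMap.ext fun x => ?_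
    rw [polyAct_map_apply, hψ f hf, hψ (g * f) (Ideal.mul_mem_left _ g hf)]
    congr 2
    ring
  have comm : ∀ (P Q : B[X]) (ν : S[X] →ₗ[S] N),
      polyAct S N P (polyAct S N Q ν) = polyAct S N Q (polyAct S N P ν) := by
    intro P Q ν
    rw [← Module.End.mul_apply, ← map_mul, mul_comm, map_mul, Module.End.mul_apply]
  have hη : ∀ P ∈ (K ^ j).map (mapRingHom (algebraMap S B)), ∃ η : S[X] →ₗ[S] N,
      ∀ f ∈ K ^ j, polyAct S N (f.map (algebraMap S B)) η = polyAct S N P (ψ f) := by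
    intro P hP
    induction hP using Submodule.span_induction with
    | mem P hP =>
      obtain ⟨f₀, hf₀, rfl⟩ := hP
      refine ⟨ψ f₀, fun f hf => ?_⟩
      rw [hψmul f₀ hf₀, coe_mapRingHom, hψmul f hf, mul_comm]
    | zero => exact ⟨0, fun f hf => by simp⟩
    | add P Q _ _ hP hQ =>
      obtain ⟨η, hη⟩ := hP
      obtain ⟨η', hη'⟩ := hQ
      exact ⟨η + η', fun f hf => by rw [map_add, hη f hf, hη' f hf, map_add, LinearMap.add_apply]⟩
    | smul Q P _ hP =>
      obtain ⟨η, hη⟩ := hP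
      refine ⟨polyAct S N Q η, fun f hf => ?_⟩
      rw [comm, hη f hf, smul_eq_mul, map_mul, Module.End.mul_apply]
  have hmem : (X - C b) ^ (n * j) ∈ (K ^ j).map (mapRingHom (algebraMap S B)) := by
    rw [Ideal.map_pow, pow_mul]
    exact Ideal.pow_mem_pow hn j
  obtain ⟨η, hη⟩ := hη _ hmem
  obtain ⟨ξ, rfl⟩ := polyAct_pow_surjective (S := S) (N := N) b (n * j) η
  have hδ : ∀ f ∈ K ^ j, polyAct S N ((X - C b) ^ (n * j))
      (polyAct S N (f.map (algebraMap S B)) ξ - ψ f) = 0 := by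
    intro f hf
    rw [map_sub, comm, hη f hf, sub_self]
  have hξ : ∀ f ∈ K ^ (n * j) * K ^ j, ∀ hf : f ∈ K ^ j, ξ f = L ⟨f, hf⟩ := by
    intro f hf
    induction hf using Submodule.mul_induction_on' with
    | mem_mul_mem f' hf' f hf =>
      intro hff
      obtain ⟨Q, hQ⟩ := map_pow_le_span b (n * j) hf'
      have h1 := congrArg (polyAct S N Q) (hδ f hf)
      rw [map_zero, ← Module.End.mul_apply, ← map_mul, mul_comm, ← hQ, map_sub, hψmul f hf,
        ← Module.End.mul_apply, ← map_mul, ← Polynomial.map_mul] at h1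
      have h2 := LinearMap.congr_fun h1 1
      rw [LinearMap.sub_apply, polyAct_map_apply, hψ _ hff, LinearMap.zero_apply, sub_eq_zero] at h2
      simpa using h2
    | add f hf g hg ihf ihg =>
      intro hfg
      have hf' := Ideal.mul_le_right hf
      have hg' := Ideal.mul_le_right hg
      rw [map_add, ihf hf', ihg hg', ← map_add]
      rfl
  refine ⟨n * j + j + 1, by omega,
    ξ + (LinearMap.toSpanSingleton B N (m - ξ 1)).restrictScalars S ∘ₗ
      (aeval b : S[X] →ₐ[S] B).toLinearMap, by simp, fun f hf => ?_⟩
  have hf1 : aeval b f = 0 := by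
    have : f ∈ K := Ideal.pow_le_self (by omega) hf
    simpa [hK] using this
  rw [LinearMap.add_apply, LinearMap.comp_apply, AlgHom.toLinearMap_apply, hf1, map_zero, add_zero]
  refine hξ f ?_ _
  rw [← pow_add]
  exact Ideal.pow_le_pow_right (by omega) hf

end LinearFunctionals

section Devissage

open Polynomial

variable {S B : Type*} [CommRing S] [CommRing B] [Algebra S B]

lemma ExtendsFunctionals.of_exact {K : Ideal S[X]} {M' M M'' : Type*} [AddCommGroup M']
    [Module S M'] [AddCommGroup M] [Module S M] [AddCommGroup M''] [Module S M'']
    (i : M' →ₗ[S] M) (hi : Function.Injective i) (π : M →ₗ[S] M'') (hπ : Function.Surjective π)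
    (hex : LinearMap.ker π ≤ LinearMap.range i)
    (h' : ExtendsFunctionals K M') (h'' : ExtendsFunctionals K M'') :
    ExtendsFunctionals K M := by
  intro j L m
  obtain ⟨j₁, hj₁, L₁, hL₁, hL₁'⟩ := h'' j (π ∘ₗ L) (π m)
  obtain ⟨L₂, hL₂⟩ := Module.projective_lifting_property π L₁ hπ
  let e := LinearEquiv.ofInjective i hi
  have hL₂' : ∀ f, π (L₂ f) = L₁ f := fun f => LinearMap.congr_fun hL₂ f
  let D : (K ^ j₁).restrictScalars S →ₗ[S] M :=
    L ∘ₗ Submodule.inclusion (Ideal.pow_le_pow_right hj₁ :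
      (K ^ j₁).restrictScalars S ≤ (K ^ j).restrictScalars S) - L₂ ∘ₗ Submodule.subtype _
  have hD : ∀ f, D f ∈ LinearMap.range i := by
    intro f
    apply hex
    rw [LinearMap.mem_ker, LinearMap.sub_apply, map_sub, sub_eq_zero]
    exact ((hL₂' f).trans (hL₁' f f.2)).symm
  have hm : m - L₂ 1 ∈ LinearMap.range i := by
    apply hex
    rw [LinearMap.mem_ker, map_sub, hL₂', hL₁, sub_self]
  obtain ⟨m', hm'⟩ := hm
  obtain ⟨j₂, hj₂, L₃, hL₃, hL₃'⟩ := h' j₁ (e.symm.toLinearMap ∘ₗ D.codRestrict _ hD) m'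
  refine ⟨j₂, hj₁.trans hj₂, L₂ + i ∘ₗ L₃, ?_, fun f hf => ?_⟩
  · rw [LinearMap.add_apply, LinearMap.comp_apply, hL₃, hm', add_sub_cancel]
  · rw [LinearMap.add_apply, LinearMap.comp_apply, hL₃' f hf]
    have : ∀ y : LinearMap.range i, i (e.symm y) = y := fun y => by
      conv_rhs => rw [← e.apply_symm_apply y]
      rfl
    rw [LinearMap.comp_apply, LinearEquiv.coe_coe, this]
    exact add_sub_cancel (L₂ f) _

lemma algebraMap_quotient_injective_of_liesOver (p : Ideal S) (q : Ideal B) [q.LiesOver p] :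
    Function.Injective (algebraMap (S ⧸ p) (B ⧸ q)) := by
  rw [injective_iff_map_eq_zero]
  intro x hx
  obtain ⟨x, rfl⟩ := Ideal.Quotient.mk_surjective x
  rw [Ideal.Quotient.eq_zero_iff_mem, Ideal.LiesOver.over (P := q) (p := p)]
  exact (Ideal.Quotient.eq_zero_iff_mem (I := q)).mp hx

/-- If `X - b` is nilpotent modulo the relations of `b`, then `b` takes a rational value at every
point of `Spec S`. -/
lemma exists_liesOver_mul_sub_mem (hQ : ∀ n : ℕ, n ≠ 0 → IsUnit (n : S))
    (hinj : Function.Injective (algebraMap S B)) [Algebra.IsIntegral S B] (b : B)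
    (hb : X - C b ∈ ((RingHom.ker (aeval b : S[X] →ₐ[S] B)).map
      (mapRingHom (algebraMap S B))).radical) (p : Ideal S) [p.IsPrime] :
    ∃ q : Ideal B, q.IsPrime ∧ q.LiesOver p ∧ ∃ a ∉ p, ∃ u : S,
      algebraMap S B a * b - algebraMap S B u ∈ q := by
  obtain ⟨q, -, hq, hqp⟩ := Ideal.exists_ideal_over_prime_of_isIntegral p (⊥ : Ideal B) (by
    rw [← RingHom.ker_eq_comap_bot, (RingHom.injective_iff_ker_eq_bot _).1 hinj]
    exact bot_le)
  have hover : q.LiesOver p := ⟨hqp.symm⟩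
  refine ⟨q, hq, hover, ?_⟩
  let F := FractionRing (S ⧸ p)
  let E := FractionRing (B ⧸ q)
  have : FaithfulSMul (S ⧸ p) (B ⧸ q) := by
    rw [faithfulSMul_iff_algebraMap_injective]
    exact algebraMap_quotient_injective_of_liesOver p q
  have : FaithfulSMul (S ⧸ p) E := FaithfulSMul.trans (S ⧸ p) (B ⧸ q) E
  let : Algebra F E := FractionRing.liftAlgebra (S ⧸ p) E
  have : IsScalarTower (S ⧸ p) F E := FractionRing.isScalarTower_liftAlgebra (S ⧸ p) E
  let β : E := algebraMap (B ⧸ q) E (Ideal.Quotient.mk q b)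
  let θ : B →+* E := (algebraMap (B ⧸ q) E).comp (Ideal.Quotient.mk q)
  let σ : S →+* F := (algebraMap (S ⧸ p) F).comp (Ideal.Quotient.mk p)
  have hcomp : θ.comp (algebraMap S B) = (algebraMap F E).comp σ := by
    ext s
    simp only [θ, σ, RingHom.comp_apply]
    rw [← IsScalarTower.algebraMap_apply (S ⧸ p) F E,
      IsScalarTower.algebraMap_apply (S ⧸ p) (B ⧸ q) E]
    rfl
  have hintg : IsIntegral F β := by
    obtain ⟨P, hP, hPb⟩ := Algebra.IsIntegral.isIntegral (R := S) b
    refine ⟨P.map σ, hP.map σ, ?_⟩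
    rw [eval₂_map, ← hcomp, show β = θ b from rfl, ← hom_eval₂, hPb, map_zero]
  obtain ⟨n, hn⟩ := hb
  have hle : (RingHom.ker (aeval b : S[X] →ₐ[S] B)).map (mapRingHom (algebraMap S B)) ≤
      (Ideal.span {(minpoly F β).map (algebraMap F E)}).comap (mapRingHom θ) := by
    rw [Ideal.map_le_iff_le_comap]
    intro f hf
    rw [Ideal.mem_comap, Ideal.mem_comap, Ideal.mem_span_singleton, coe_mapRingHom, coe_mapRingHom,
      Polynomial.map_map, hcomp, ← Polynomial.map_map]
    apply Polynomial.map_dvd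
    apply minpoly.dvd
    rw [aeval_def, eval₂_map, ← hcomp, show β = θ b from rfl, ← hom_eval₂]
    have : aeval b f = 0 := hf
    rw [aeval_def] at this
    rw [this, map_zero]
  have hdvd := Ideal.mem_span_singleton.mp (Ideal.mem_comap.mp (hle hn))
  rw [map_pow, map_sub, coe_mapRingHom, map_X, map_C, show θ b = β from rfl,
    dvd_prime_pow (prime_X_sub_C β)] at hdvd
  obtain ⟨e, -, hassoc⟩ := hdvd
  have heq : (minpoly F β).map (algebraMap F E) = (X - C β) ^ e :=
    eq_of_monic_of_associated ((minpoly.monic hintg).map _) ((monic_X_sub_C β).pow e) hassoc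
  have he : e ≠ 0 := by
    rintro rfl
    have h1 := congrArg natDegree heq
    rw [natDegree_map, pow_zero, natDegree_one] at h1
    exact (minpoly.natDegree_pos hintg).ne' h1
  have hnext := congrArg nextCoeff heq
  rw [nextCoeff_map (algebraMap F E).injective, (monic_X_sub_C β).nextCoeff_pow,
    nextCoeff_X_sub_C] at hnext
  obtain ⟨v, hv⟩ := hQ e he
  have hv' : (e : F) * σ ↑v⁻¹ = 1 := by
    rw [← map_natCast σ, ← map_mul, ← hv, v.mul_inv, map_one]
  have hβ : β = algebraMap F E (-(minpoly F β).nextCoeff * σ ↑v⁻¹) := by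
    rw [map_mul, map_neg, hnext, nsmul_eq_mul, mul_neg, neg_neg, mul_right_comm,
      ← map_natCast (algebraMap F E), ← map_mul, hv', map_one, one_mul]
  obtain ⟨u, a, ha, hua⟩ := IsFractionRing.div_surjective (A := S ⧸ p)
    (-(minpoly F β).nextCoeff * σ ↑v⁻¹)
  obtain ⟨u, rfl⟩ := Ideal.Quotient.mk_surjective u
  obtain ⟨a, rfl⟩ := Ideal.Quotient.mk_surjective a
  have ha0 := nonZeroDivisors.ne_zero ha
  refine ⟨a, fun h => ha0 (Ideal.Quotient.eq_zero_iff_mem.mpr h), u, ?_⟩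
  rw [← Ideal.Quotient.eq_zero_iff_mem]
  apply IsFractionRing.injective (B ⧸ q) E
  have h2 : σ a ≠ 0 := fun h => ha0 (IsFractionRing.injective (S ⧸ p) F (by rw [map_zero]; exact h))
  have h3 : algebraMap F E (σ a) * β = algebraMap F E (σ u) := by
    rw [hβ, ← hua, ← map_mul]
    congr 1
    exact mul_div_cancel₀ _ h2
  have h4 : ∀ s, θ (algebraMap S B s) = algebraMap F E (σ s) := fun s => RingHom.congr_fun hcomp s
  rw [map_zero]
  change θ _ = 0
  rw [map_sub, map_mul, h4, h4, sub_eq_zero]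
  exact h3

lemma exists_injective_quotient (b : B) (hsurj : Function.Surjective (aeval b : S[X] →ₐ[S] B))
    (hintg : IsIntegral S b) (p : Ideal S) [p.IsPrime] (q : Ideal B) [q.IsPrime] [q.LiesOver p]
    {a : S} (ha : a ∉ p) {u : S} (hau : algebraMap S B a * b - algebraMap S B u ∈ q) :
    ∃ i : (B ⧸ q) →ₗ[S] (S ⧸ p), Function.Injective i := by
  obtain ⟨P, hP, hPb⟩ := hintg
  let α : (S ⧸ p) →ₗ[S] (B ⧸ q) := (IsScalarTower.toAlgHom S (S ⧸ p) (B ⧸ q)).toLinearMap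
  have hα : Function.Injective α := algebraMap_quotient_injective_of_liesOver p q
  let μ : (B ⧸ q) →ₗ[S] (B ⧸ q) := LinearMap.lsmul S _ (a ^ P.natDegree)
  have haq : algebraMap S (B ⧸ q) a ≠ 0 := by
    rw [IsScalarTower.algebraMap_apply S B (B ⧸ q)]
    intro h
    apply ha
    rw [Ideal.LiesOver.over (P := q) (p := p)]
    exact (Ideal.Quotient.eq_zero_iff_mem (I := q)).mp h
  have hμ : Function.Injective μ := by
    intro x y hxy
    simp only [μ, LinearMap.lsmul_apply, Algebra.smul_def, map_pow] at hxy
    exact mul_left_cancel₀ (pow_ne_zero _ haq) hxy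
  have hab : algebraMap S (B ⧸ q) a * Ideal.Quotient.mk q b = algebraMap S (B ⧸ q) u := by
    rw [IsScalarTower.algebraMap_apply S B (B ⧸ q), IsScalarTower.algebraMap_apply S B (B ⧸ q),
      ← sub_eq_zero]
    exact Ideal.Quotient.eq_zero_iff_mem.mpr hau
  have hrange : ∀ x, μ x ∈ LinearMap.range α := by
    intro x
    obtain ⟨x, rfl⟩ := Ideal.Quotient.mk_surjective x
    obtain ⟨f, rfl⟩ := hsurj x
    rw [← modByMonic_add_div f P, map_add, map_mul, aeval_def b P, hPb, zero_mul, add_zero]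
    rw [aeval_eq_sum_range' (n := P.natDegree + 1)
      (Nat.lt_succ_of_le (natDegree_modByMonic_le f hP)), map_sum, map_sum]
    refine Submodule.sum_mem _ fun i hi => ?_
    have hi' : i ≤ P.natDegree := by simpa [Nat.lt_succ_iff] using hi
    obtain ⟨d, hd⟩ := Nat.exists_eq_add_of_le hi'
    refine ⟨algebraMap S _ ((f %ₘ P).coeff i * a ^ d * u ^ i), ?_⟩
    rw [show α (algebraMap S (S ⧸ p) ((f %ₘ P).coeff i * a ^ d * u ^ i)) = algebraMap S (B ⧸ q) _
      from (IsScalarTower.toAlgHom S (S ⧸ p) (B ⧸ q)).commutes _]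
    simp only [μ, LinearMap.lsmul_apply, Algebra.smul_def, map_mul, map_pow, ← hab, hd, pow_add,
      mul_pow]
    rw [IsScalarTower.algebraMap_apply S B (B ⧸ q) ((f %ₘ P).coeff i)]
    simp only [Ideal.Quotient.algebraMap_eq]
    ring
  refine ⟨(LinearEquiv.ofInjective α hα).symm.toLinearMap ∘ₗ μ.codRestrict _ hrange, ?_⟩
  rw [LinearMap.coe_comp]
  exact (LinearEquiv.injective _).comp ((LinearMap.injective_codRestrict_iff _).mpr hμ)

lemma ExtendsFunctionals.of_quotient {K : Ideal S[X]} {J : Ideal S}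
    (ih : ∀ J' : Ideal S, J < J' → ExtendsFunctionals K (S ⧸ J')) {M' : Type*} [AddCommGroup M']
    [Module S M'] (i : M' →ₗ[S] (S ⧸ J)) (hi : Function.Injective i) (hne : ∃ x, i x ≠ 0)
    (hM' : ExtendsFunctionals K M') : ExtendsFunctionals K (S ⧸ J) := by
  let J' : Ideal S := (LinearMap.range i).comap (Submodule.mkQ J)
  have hle : J ≤ J' := fun x hx => by
    have : Submodule.mkQ J x = 0 := Ideal.Quotient.eq_zero_iff_mem.mpr hx
    change Submodule.mkQ J x ∈ LinearMap.range i
    rw [this]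
    exact zero_mem _
  have hlt : J < J' := by
    refine lt_of_le_of_ne hle fun heq => ?_
    obtain ⟨x, hx⟩ := hne
    obtain ⟨y, hy⟩ := Submodule.mkQ_surjective J (i x)
    apply hx
    have : y ∈ J' := ⟨x, hy.symm⟩
    rw [← heq] at this
    rw [← hy]
    exact Ideal.Quotient.eq_zero_iff_mem.mpr this
  refine ExtendsFunctionals.of_exact i hi (Submodule.factor hle) (Submodule.factor_surjective hle)
    ?_ hM' (ih J' hlt)
  intro x hx
  obtain ⟨x, rfl⟩ := Submodule.mkQ_surjective J x
  have hx' : x ∈ J' := Ideal.Quotient.eq_zero_iff_mem.mp hx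
  exact hx'

theorem extendsFunctionals_quotient [IsNoetherianRing S] (hQ : ∀ n : ℕ, n ≠ 0 → IsUnit (n : S))
    (hinj : Function.Injective (algebraMap S B)) (b : B)
    (hsurj : Function.Surjective (aeval b : S[X] →ₐ[S] B)) (hintg : IsIntegral S b)
    (hb : X - C b ∈ ((RingHom.ker (aeval b : S[X] →ₐ[S] B)).map
      (mapRingHom (algebraMap S B))).radical) (J : Ideal S) :
    ExtendsFunctionals (RingHom.ker (aeval b : S[X] →ₐ[S] B)) (S ⧸ J) := by
  have hIntB : Algebra.IsIntegral S B := by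
    constructor
    intro x
    obtain ⟨f, rfl⟩ := hsurj x
    rw [aeval_eq_sum_range]
    exact IsIntegral.sum _ fun i _ => (hintg.pow i).smul _
  induction J using WellFoundedGT.induction with
  | ind J ih =>
  by_cases htop : J = ⊤
  · subst htop
    intro j L m
    exact ⟨j, le_rfl, 0, Subsingleton.elim _ _, fun f hf => Subsingleton.elim _ _⟩
  by_cases hprime : J.IsPrime
  · obtain ⟨q, hq, hqJ, a, ha, u, hau⟩ := exists_liesOver_mul_sub_mem hQ hinj b hb J
    obtain ⟨i, hi⟩ := exists_injective_quotient b hsurj hintg J q ha hau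
    refine ExtendsFunctionals.of_quotient ih i hi
      ⟨1, fun h => one_ne_zero (hi (h.trans (map_zero i).symm))⟩ ?_
    exact extendsFunctionals_of_module (B ⧸ q) b hb
  · obtain ⟨x, hx, y, hy, hxy⟩ := (Ideal.not_isPrime_iff.mp hprime).resolve_left htop
    let J₁ : Ideal S := Submodule.comap (LinearMap.lsmul S S x) J
    have hJ₁ : ∀ z, z ∈ J₁ ↔ x * z ∈ J := fun z => Iff.rfl
    have hJ₁lt : J < J₁ := by
      refine lt_of_le_of_ne (fun z hz => J.mul_mem_left x hz) fun heq => hy ?_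
      rw [heq]
      exact hxy
    let i : (S ⧸ J₁) →ₗ[S] (S ⧸ J) := Submodule.mapQ J₁ J (LinearMap.lsmul S S x) le_rfl
    refine ExtendsFunctionals.of_quotient ih i ?_ ⟨Submodule.mkQ J₁ 1, ?_⟩ (ih J₁ hJ₁lt)
    · rw [← LinearMap.ker_eq_bot, Submodule.ker_mapQ]
      simp [J₁]
    · intro h
      refine hx ?_
      rw [← mul_one x]
      exact Ideal.Quotient.eq_zero_iff_mem.mp h

/-- Reid–Roberts–Singh: a system of equations for subintegral elements. -/
theorem exists_binomial_equations [IsNoetherianRing S] (hQ : ∀ n : ℕ, n ≠ 0 → IsUnit (n : S))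
    (hinj : Function.Injective (algebraMap S B)) (b : B)
    (hsurj : Function.Surjective (aeval b : S[X] →ₐ[S] B)) (hintg : IsIntegral S b)
    (hb : X - C b ∈ ((RingHom.ker (aeval b : S[X] →ₐ[S] B)).map
      (mapRingHom (algebraMap S B))).radical) :
    ∃ (q : ℕ) (a : ℕ → S), a 0 = 1 ∧ ∀ n, q ≤ n →
      ∑ i ∈ Finset.range (n + 1), (n.choose i : B) * algebraMap S B (a i) * b ^ (n - i) = 0 := by
  set K := RingHom.ker (aeval b : S[X] →ₐ[S] B) with hK
  obtain ⟨i, hi0, L, hL1, hL⟩ := extendsFunctionals_quotient hQ hinj b hsurj hintg hb ⊥ 0 0 1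
  let e : (S ⧸ (⊥ : Ideal S)) ≃ₗ[S] S := Submodule.quotEquivOfEqBot ⊥ rfl
  have he1 : e 1 = 1 := rfl
  let ν : S[X] →ₗ[S] B := (Algebra.linearMap S B) ∘ₗ e.toLinearMap ∘ₗ L
  have hν : ∀ f ∈ K ^ i, ν f = 0 := fun f hf => by
    simp only [ν, LinearMap.comp_apply, hL f hf, LinearMap.zero_apply, map_zero]
  obtain ⟨N, hN⟩ := hb
  have hact : ∀ P ∈ (K ^ i).map (mapRingHom (algebraMap S B)), polyAct S B P ν = 0 := by
    intro P hP
    induction hP using Submodule.span_induction with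
    | mem P hP =>
      obtain ⟨f, hf, rfl⟩ := hP
      refine LinearMap.ext fun g => ?_
      rw [coe_mapRingHom, polyAct_map_apply, hν _ (Ideal.mul_mem_right g _ hf),
        LinearMap.zero_apply]
    | zero => simp
    | add P Q _ _ hP hQ => rw [map_add, LinearMap.add_apply, hP, hQ, add_zero]
    | smul Q P _ hP => rw [smul_eq_mul, map_mul, Module.End.mul_apply, hP, map_zero]
  refine ⟨N * i, fun n => (-1) ^ n * e (L (X ^ n)), by simp [hL1, he1], fun n hn => ?_⟩
  have hmem : (X - C b) ^ n ∈ (K ^ i).map (mapRingHom (algebraMap S B)) := by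
    obtain ⟨d, rfl⟩ := Nat.exists_eq_add_of_le hn
    rw [pow_add, Ideal.map_pow, pow_mul]
    exact Ideal.mul_mem_right _ _ (Ideal.pow_mem_pow hN i)
  have h0 := LinearMap.congr_fun (hact _ hmem) 1
  have hexp : (X - C b) ^ n = ∑ m ∈ Finset.range (n + 1),
      monomial m ((-b) ^ (n - m) * (n.choose m : B)) := by
    rw [sub_eq_add_neg, add_pow]
    refine Finset.sum_congr rfl fun m _ => ?_
    rw [← C_mul_X_pow_eq_monomial, map_mul, map_pow, map_neg, map_natCast]
    ring
  rw [hexp, map_sum, LinearMap.sum_apply, LinearMap.sum_apply] at h0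
  simp only [polyAct_monomial_apply, mul_one, LinearMap.zero_apply, smul_eq_mul] at h0
  have h1 := congrArg ((-1) ^ n * ·) h0
  simp only [mul_zero, Finset.mul_sum] at h1
  rw [← h1]
  refine Finset.sum_congr rfl fun m hm => ?_
  have hm' : m ≤ n := by simpa [Nat.lt_succ_iff] using hm
  obtain ⟨d, rfl⟩ := Nat.exists_eq_add_of_le hm'
  have hs : ((-1 : B) ^ d) * (-1) ^ d = 1 := by rw [← mul_pow]; simp
  have hνX : ν (X ^ m) = algebraMap S B (e (L (X ^ m))) := rfl
  rw [hνX, Nat.add_sub_cancel_left, map_mul, map_pow, map_neg, map_one, neg_pow b, pow_add]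
  linear_combination
    (-((m + d).choose m : B) * (-1) ^ m * algebraMap S B (e (L (X ^ m))) * b ^ d) * hs

end Devissage

section BinomialPolynomials

open Polynomial

/-- The polynomial `∑ i ≤ n, (n choose i) a_i X ^ (n - i)`. -/
noncomputable def binomialPoly {k : Type*} [Field k] (a : ℕ → k) (n : ℕ) : k[X] :=
  ∑ i ∈ Finset.range (n + 1), C ((n.choose i : k) * a i) * X ^ (n - i)

variable {k : Type*} [Field k]

lemma derivative_binomialPoly (a : ℕ → k) (n : ℕ) :
    derivative (binomialPoly a (n + 1)) = C ((n + 1 : ℕ) : k) * binomialPoly a n := by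
  rw [binomialPoly, Finset.sum_range_succ, derivative_add, derivative_sum, binomialPoly,
    Finset.mul_sum, Nat.sub_self, pow_zero, mul_one, derivative_C, add_zero]
  refine Finset.sum_congr rfl fun i hi => ?_
  have hi' : i ≤ n := by simpa [Nat.lt_succ_iff] using hi
  rw [derivative_C_mul_X_pow, Nat.sub_right_comm, Nat.add_sub_cancel, ← mul_assoc, ← C_mul]
  congr 2
  have := Nat.choose_mul_succ_eq n i
  have h2 : ((n.choose i : ℕ) : k) * ((n + 1 : ℕ) : k) =
      ((n + 1).choose i : k) * ((n + 1 - i : ℕ) : k) := by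
    rw [← Nat.cast_mul, this, Nat.cast_mul]
  linear_combination (-a i) * h2

lemma isRoot_iterate_derivative_binomialPoly (a : ℕ → k) (x : k) (j n : ℕ)
    (h : ∀ m, m ≤ n → n ≤ m + j → (binomialPoly a m).IsRoot x) (hj : j ≤ n) :
    (derivative^[j] (binomialPoly a n)).IsRoot x := by
  induction j generalizing n with
  | zero => exact h n le_rfl le_rfl
  | succ j ih =>
    obtain ⟨n, rfl⟩ : ∃ n', n = n' + 1 := ⟨n - 1, by omega⟩
    rw [Function.iterate_succ_apply, derivative_binomialPoly, iterate_derivative_C_mul, IsRoot,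
      eval_mul, (ih n (fun m h1 h2 => h m (by omega) (by omega)) (by omega)).eq_zero, mul_zero]

lemma natDegree_binomialPoly_le (a : ℕ → k) (n : ℕ) : (binomialPoly a n).natDegree ≤ n :=
  natDegree_sum_le_of_forall_le _ _ fun i _ =>
    (natDegree_C_mul_X_pow_le _ _).trans (Nat.sub_le n i)

lemma binomialPoly_ne_zero {a : ℕ → k} (ha : a 0 = 1) (n : ℕ) : binomialPoly a n ≠ 0 := by
  intro h
  have h1 := congrArg (coeff · n) h
  simp only [binomialPoly, finsetSum_coeff, coeff_C_mul, coeff_X_pow, coeff_zero] at h1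
  rw [Finset.sum_eq_single_of_mem 0 (by simp)] at h1
  · simp [ha] at h1
  · intro i hi hi0
    have : n ≠ n - i := by
      have : i < n + 1 := by simpa using hi
      omega
    simp [this]

lemma eq_of_isRoot_binomialPoly [CharZero k] {a : ℕ → k} (ha : a 0 = 1) (q : ℕ) {x y : k}
    (hx : ∀ n, q + 1 ≤ n → n ≤ 2 * q + 1 → (binomialPoly a n).IsRoot x)
    (hy : ∀ n, q + 1 ≤ n → n ≤ 2 * q + 1 → (binomialPoly a n).IsRoot y) : x = y := by
  by_contra hxy
  have key : ∀ z, (∀ n, q + 1 ≤ n → n ≤ 2 * q + 1 → (binomialPoly a n).IsRoot z) →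
      (X - C z) ^ (q + 1) ∣ binomialPoly a (2 * q + 1) := by
    intro z hz
    have := (lt_rootMultiplicity_iff_isRoot_iterate_derivative (n := q)
      (binomialPoly_ne_zero ha (2 * q + 1)) (t := z)).mpr fun m hm =>
        isRoot_iterate_derivative_binomialPoly a z m _
          (fun i h1 h2 => hz i (by omega) (by omega)) (by omega)
    exact (pow_dvd_pow _ this).trans (pow_rootMultiplicity_dvd _ _)
  have hcop : IsCoprime ((X - C x) ^ (q + 1)) ((X - C y) ^ (q + 1)) :=
    (isCoprime_X_sub_C_of_isUnit_sub (sub_ne_zero.mpr hxy).isUnit).pow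
  have hdvd := hcop.mul_dvd (key x hx) (key y hy)
  have hdeg := natDegree_le_of_dvd hdvd (binomialPoly_ne_zero ha _)
  rw [natDegree_mul (pow_ne_zero _ (X_sub_C_ne_zero x)) (pow_ne_zero _ (X_sub_C_ne_zero y)),
    natDegree_pow, natDegree_pow, natDegree_X_sub_C, natDegree_X_sub_C] at hdeg
  have := natDegree_binomialPoly_le a (2 * q + 1)
  omega

end BinomialPolynomials

section PowerSeriesPoints

open PowerSeries

variable {k : Type*} [Field k]

lemma exists_binomial_system {A : Type*} [CommRing A] {I : Ideal A} {h : A}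
    (hh : WSubIdeal I h) : ∃ q : ℕ, ∃ a : ℕ → A, a 0 = 1 ∧ (∀ i, a i ∈ I ^ i) ∧
    ∀ n, q + 1 ≤ n → n ≤ 2 * q + 1 →
      ∑ i ∈ Finset.range (n + 1), (n.choose i : A) * a i * h ^ (n - i) = 0 := by
  obtain ⟨q, a, ha, heq⟩ := hh
  refine ⟨q, fun i => if i = 0 then 1 else a i, by simp, fun i => ?_, fun n h1 h2 => ?_⟩
  · dsimp only
    split_ifs with hi
    · simp [hi]
    · exact ha i
  · rw [← heq n h1 h2, Finset.range_eq_Ico, Finset.sum_eq_sum_Ico_succ_bot (by omega)]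
    simp only [if_true, Nat.choose_zero_right, Nat.cast_one, one_mul, Nat.sub_zero]
    congr 1
    refine Finset.sum_congr (by ext; simp) fun i hi => ?_
    rw [if_neg (by simp at hi; omega)]

lemma dvd_of_wSubIdeal {A : Type*} [CommRing A] {I : Ideal A} {h : A} (hh : WSubIdeal I h)
    (φ : A →+* k⟦X⟧) {p : k⟦X⟧} (hp : I.map φ ≤ Ideal.span {p}) : p ∣ φ h := by
  obtain ⟨q, a, ha, heq⟩ := hh
  rcases ValuationRing.dvd_total p (φ h) with hd | ⟨r, hr⟩
  · exact hd
  by_cases hu : IsUnit r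
  · rw [hr]
    exact (associated_mul_unit_left _ r hu).dvd
  have hpow : ∀ i, p ^ i ∣ φ (a i) := fun i => by
    have h1 := Ideal.mem_map_of_mem φ (ha i)
    rw [Ideal.map_pow] at h1
    have h2 := Ideal.pow_right_mono hp i h1
    rwa [Ideal.span_singleton_pow, Ideal.mem_span_singleton] at h2
  have h0 := congrArg φ (heq (q + 1) le_rfl (by omega))
  rw [map_add, map_pow, map_sum, map_zero] at h0
  have hdvd : φ h ^ (q + 1) * r ∣ ∑ i ∈ Finset.Icc 1 (q + 1),
      φ (((q + 1).choose i : A) * a i * h ^ (q + 1 - i)) := by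
    refine Finset.dvd_sum fun i hi => ?_
    rw [Finset.mem_Icc] at hi
    obtain ⟨d, hd⟩ := Nat.exists_eq_add_of_le hi.2
    obtain ⟨s, hs⟩ := hpow i
    rw [map_mul, map_mul, hs, hr, hd, Nat.add_sub_cancel_left, map_pow, mul_pow, pow_add]
    have : r ∣ r ^ i := dvd_pow_self r (by omega)
    obtain ⟨w, hw⟩ := this
    rw [hw]
    exact ⟨φ ((i + d).choose i : A) * w * s, by ring⟩
  obtain ⟨s, hs⟩ := hdvd
  rw [hs] at h0
  have hunit : IsUnit (1 + r * s) := by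
    have hmem : r * s ∈ IsLocalRing.maximalIdeal k⟦X⟧ :=
      Ideal.mul_mem_right _ _ ((IsLocalRing.mem_maximalIdeal r).mpr hu)
    by_contra hnu
    have := Ideal.sub_mem _ ((IsLocalRing.mem_maximalIdeal _).mpr hnu) hmem
    rw [add_sub_cancel_right] at this
    exact (IsLocalRing.mem_maximalIdeal _).mp this isUnit_one
  have hz : φ h = 0 := by
    have : φ h ^ (q + 1) * (1 + r * s) = 0 := by linear_combination h0
    exact pow_eq_zero_iff (by omega) |>.mp ((hunit.mul_left_eq_zero).mp this)
  rw [hz]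
  exact dvd_zero p

lemma constantCoeff_eq_of_wSubIdeal [CharZero k] {A : Type*} [CommRing A] {I : Ideal A} {h : A}
    (hh : WSubIdeal I h) (φ₁ φ₂ : A →+* k⟦X⟧) {p₁ p₂ e₁ e₂ : k⟦X⟧} (hp₁ : p₁ ≠ 0) (hp₂ : p₂ ≠ 0)
    {c : k} (hc : c ≠ 0)
    (hI : ∀ g ∈ I, ∃ y₁ y₂, φ₁ g = p₁ * y₁ ∧ φ₂ g = p₂ * y₂ ∧
      constantCoeff y₂ = c * constantCoeff y₁)
    (he₁ : φ₁ h = p₁ * e₁) (he₂ : φ₂ h = p₂ * e₂) :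
    constantCoeff e₂ = c * constantCoeff e₁ := by
  obtain ⟨q, a, ha0, ha, heq⟩ := exists_binomial_system hh
  have hpow : ∀ (i : ℕ), ∀ x ∈ I ^ (i + 1), ∃ y₁ y₂, φ₁ x = p₁ ^ (i + 1) * y₁ ∧
      φ₂ x = p₂ ^ (i + 1) * y₂ ∧ constantCoeff y₂ = c ^ (i + 1) * constantCoeff y₁ := by
    intro i
    induction i with
    | zero => simpa using hI
    | succ i ih =>
      intro x hx
      rw [pow_succ] at hx
      induction hx using Submodule.mul_induction_on' with
      | mem_mul_mem x hx g hg =>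
        obtain ⟨y₁, y₂, h1, h2, h3⟩ := ih x hx
        obtain ⟨z₁, z₂, h1', h2', h3'⟩ := hI g hg
        refine ⟨y₁ * z₁, y₂ * z₂, ?_, ?_, ?_⟩
        · rw [map_mul, h1, h1']; ring
        · rw [map_mul, h2, h2']; ring
        · rw [map_mul, h3, h3', map_mul]; ring
      | add x hx y hy ihx ihy =>
        obtain ⟨y₁, y₂, h1, h2, h3⟩ := ihx
        obtain ⟨z₁, z₂, h1', h2', h3'⟩ := ihy
        refine ⟨y₁ + z₁, y₂ + z₂, ?_, ?_, ?_⟩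
        · rw [map_add, h1, h1', mul_add]
        · rw [map_add, h2, h2', mul_add]
        · rw [map_add, h3, h3', map_add, mul_add]
  have hα : ∀ i, ∃ y₁ y₂, φ₁ (a i) = p₁ ^ i * y₁ ∧ φ₂ (a i) = p₂ ^ i * y₂ ∧
      constantCoeff y₂ = c ^ i * constantCoeff y₁ ∧ (i = 0 → y₁ = 1) := by
    intro i
    cases i with
    | zero => exact ⟨1, 1, by simp [ha0]⟩
    | succ i =>
      obtain ⟨y₁, y₂, h1, h2, h3⟩ := hpow i _ (ha (i + 1))
      exact ⟨y₁, y₂, h1, h2, h3, by simp⟩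
  choose α₁ α₂ hα₁ hα₂ hα hα0 using hα
  have expand : ∀ (φ : A →+* k⟦X⟧) (p e : k⟦X⟧) (α : ℕ → k⟦X⟧), p ≠ 0 → φ h = p * e →
      (∀ i, φ (a i) = p ^ i * α i) → ∀ n, q + 1 ≤ n → n ≤ 2 * q + 1 →
      ∑ i ∈ Finset.range (n + 1), (n.choose i : k) * constantCoeff (α i) *
        constantCoeff e ^ (n - i) = 0 := by
    intro φ p e α hp he hα n h1 h2
    have h0 := congrArg φ (heq n h1 h2)
    rw [map_sum, map_zero] at h0
    have h3 : p ^ n * ∑ i ∈ Finset.range (n + 1), (n.choose i : k⟦X⟧) * α i * e ^ (n - i) = 0 := by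
      rw [← h0, Finset.mul_sum]
      refine Finset.sum_congr rfl fun i hi => ?_
      have hi' : i ≤ n := by simpa [Nat.lt_succ_iff] using hi
      obtain ⟨d, rfl⟩ := Nat.exists_eq_add_of_le hi'
      rw [map_mul, map_mul, map_natCast, map_pow, he, hα, Nat.add_sub_cancel_left]
      ring
    have h4 := congrArg constantCoeff ((mul_eq_zero.mp h3).resolve_left (pow_ne_zero n hp))
    simpa [map_sum] using h4
  have hroot : constantCoeff e₁ = constantCoeff e₂ / c := by
    refine eq_of_isRoot_binomialPoly (a := fun i => constantCoeff (α₁ i)) (by simp [hα0 0]) q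
      (fun n h1 h2 => ?_) (fun n h1 h2 => ?_)
    · rw [Polynomial.IsRoot, binomialPoly, Polynomial.eval_finsetSum,
        ← expand φ₁ p₁ e₁ α₁ hp₁ he₁ hα₁ n h1 h2]
      simp
    · have h0 := expand φ₂ p₂ e₂ α₂ hp₂ he₂ hα₂ n h1 h2
      rw [Polynomial.IsRoot, binomialPoly, Polynomial.eval_finsetSum]
      refine (mul_eq_zero.mp ?_).resolve_left (pow_ne_zero n hc)
      rw [← h0, Finset.mul_sum]
      refine Finset.sum_congr rfl fun i hi => ?_
      have hi' : i ≤ n := by simpa [Nat.lt_succ_iff] using hi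
      obtain ⟨d, rfl⟩ := Nat.exists_eq_add_of_le hi'
      simp only [Polynomial.eval_mul, Polynomial.eval_C, Polynomial.eval_pow, Polynomial.eval_X,
        Nat.add_sub_cancel_left, hα, div_pow, pow_add]
      field_simp
  rw [hroot, mul_div_cancel₀ _ hc]

/-- The module `M + z N` attached to a pair of power series points. -/
noncomputable def relativeModule {A : Type*} [CommRing A] (I : Ideal A) (φ₁ φ₂ : A → k⟦X⟧) :
    Submodule (k⟦X⟧) (k⟦X⟧ × k⟦X⟧) :=
  Submodule.span (k⟦X⟧) {v | ∃ g ∈ I, v = (φ₁ g, φ₂ g)} +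
    (Ideal.span {(X : k⟦X⟧)}) •
      Submodule.span (k⟦X⟧) {v | ∃ g ∈ I, v = (φ₁ g, 0) ∨ v = (0, φ₂ g)}

lemma mem_relativeModule_of_constantCoeff {A : Type*} [CommRing A] {I : Ideal A}
    {φ₁ φ₂ : A →+* k⟦X⟧} {p₁ p₂ : k⟦X⟧} (hp₁ : p₁ ∈ I.map φ₁) (hp₂ : p₂ ∈ I.map φ₂) {w₁ w₂ : k⟦X⟧}
    (hw₁ : constantCoeff w₁ = 0) (hw₂ : constantCoeff w₂ = 0) :
    (p₁ * w₁, p₂ * w₂) ∈ relativeModule I φ₁ φ₂ := by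
  refine Submodule.mem_sup_right ?_
  set N := Submodule.span (k⟦X⟧)
    {v : k⟦X⟧ × k⟦X⟧ | ∃ g ∈ I, v = (φ₁ g, 0) ∨ v = (0, φ₂ g)}
  have h1 : I.map φ₁ ≤ N.comap (LinearMap.inl k⟦X⟧ k⟦X⟧ k⟦X⟧) := by
    refine Submodule.span_le.mpr ?_
    rintro _ ⟨g, hg, rfl⟩
    exact Submodule.subset_span ⟨g, hg, Or.inl rfl⟩
  have h2 : I.map φ₂ ≤ N.comap (LinearMap.inr k⟦X⟧ k⟦X⟧ k⟦X⟧) := by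
    refine Submodule.span_le.mpr ?_
    rintro _ ⟨g, hg, rfl⟩
    exact Submodule.subset_span ⟨g, hg, Or.inr rfl⟩
  obtain ⟨v₁, rfl⟩ := X_dvd_iff.mpr hw₁
  obtain ⟨v₂, rfl⟩ := X_dvd_iff.mpr hw₂
  have : (p₁ * (X * v₁), p₂ * (X * v₂)) = (X : k⟦X⟧) • (v₁ • LinearMap.inl k⟦X⟧ k⟦X⟧ k⟦X⟧ p₁ +
      v₂ • LinearMap.inr k⟦X⟧ k⟦X⟧ k⟦X⟧ p₂) := by
    ext1 <;> simp <;> ring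
  rw [this]
  exact Submodule.smul_mem_smul (Ideal.mem_span_singleton_self _)
    (N.add_mem (N.smul_mem _ (h1 hp₁)) (N.smul_mem _ (h2 hp₂)))

lemma exists_constantCoeff_ne_zero {A : Type*} [CommRing A] {I : Ideal A} {φ : A →+* k⟦X⟧}
    {p : k⟦X⟧} (hp : p ∈ I.map φ) (hp0 : p ≠ 0) {y : A → k⟦X⟧} (hy : ∀ g ∈ I, φ g = p * y g) :
    ∃ g ∈ I, constantCoeff (y g) ≠ 0 := by
  by_contra! hcon
  have hle : I.map φ ≤ Ideal.span {p * X} := by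
    refine Ideal.map_le_iff_le_comap.mpr fun g hg => ?_
    rw [Ideal.mem_comap, Ideal.mem_span_singleton, hy g hg]
    exact mul_dvd_mul_left p (X_dvd_iff.mpr (hcon g hg))
  obtain ⟨s, hs⟩ := Ideal.mem_span_singleton.mp (hle hp)
  have h1 : p * (1 - X * s) = 0 := by linear_combination hs
  have h2 := congrArg constantCoeff ((mul_eq_zero.mp h1).resolve_left hp0)
  simp at h2

lemma exists_solution_of_det_ne_zero {a b c d : k} (hd : a * d - b * c ≠ 0) (u v : k) :
    ∃ s t, s * a + t * b = u ∧ s * c + t * d = v := by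
  refine ⟨(u * d - v * b) / (a * d - b * c), (v * a - u * c) / (a * d - b * c), ?_, ?_⟩
  · rw [div_mul_eq_mul_div, div_mul_eq_mul_div, ← add_div, div_eq_iff hd]
    ring
  · rw [div_mul_eq_mul_div, div_mul_eq_mul_div, ← add_div, div_eq_iff hd]
    ring

theorem mem_relativeModule_of_wSubIdeal [CharZero k] {A : Type*} [CommRing A] {I : Ideal A} {h : A}
    (hh : WSubIdeal I h) (φ₁ φ₂ : A →+* k⟦X⟧) : (φ₁ h, φ₂ h) ∈ relativeModule I φ₁ φ₂ := by
  have gen : ∀ φ : A →+* k⟦X⟧, ∃ p, p ∈ I.map φ ∧ I.map φ = Ideal.span {p} := fun φ =>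
    ⟨_, Submodule.IsPrincipal.generator_mem _, (Ideal.span_singleton_generator _).symm⟩
  obtain ⟨p₁, hp₁, hs₁⟩ := gen φ₁
  obtain ⟨p₂, hp₂, hs₂⟩ := gen φ₂
  obtain ⟨e₁, he₁⟩ := dvd_of_wSubIdeal hh φ₁ hs₁.le
  obtain ⟨e₂, he₂⟩ := dvd_of_wSubIdeal hh φ₂ hs₂.le
  have hdiv₁ : ∀ g ∈ I, ∃ y, φ₁ g = p₁ * y := fun g hg =>
    Ideal.mem_span_singleton.mp (hs₁ ▸ Ideal.mem_map_of_mem φ₁ hg)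
  have hdiv₂ : ∀ g ∈ I, ∃ y, φ₂ g = p₂ * y := fun g hg =>
    Ideal.mem_span_singleton.mp (hs₂ ▸ Ideal.mem_map_of_mem φ₂ hg)
  set M := Submodule.span (k⟦X⟧) {v : k⟦X⟧ × k⟦X⟧ | ∃ g ∈ I, v = (φ₁ g, φ₂ g)} with hM
  by_cases hp₁0 : p₁ = 0
  · refine Submodule.mem_sup_left ?_
    have hle : I.map φ₂ ≤ M.comap (LinearMap.inr k⟦X⟧ k⟦X⟧ k⟦X⟧) := by
      refine Submodule.span_le.mpr ?_
      rintro _ ⟨g, hg, rfl⟩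
      obtain ⟨y, hy⟩ := hdiv₁ g hg
      refine Submodule.subset_span ⟨g, hg, ?_⟩
      rw [hy, hp₁0, zero_mul]
      rfl
    rw [he₁, hp₁0, zero_mul]
    have hmem : φ₂ h ∈ I.map φ₂ := he₂ ▸ Ideal.mul_mem_right _ _ hp₂
    exact hle hmem
  by_cases hp₂0 : p₂ = 0
  · refine Submodule.mem_sup_left ?_
    have hle : I.map φ₁ ≤ M.comap (LinearMap.inl k⟦X⟧ k⟦X⟧ k⟦X⟧) := by
      refine Submodule.span_le.mpr ?_
      rintro _ ⟨g, hg, rfl⟩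
      obtain ⟨y, hy⟩ := hdiv₂ g hg
      refine Submodule.subset_span ⟨g, hg, ?_⟩
      rw [hy, hp₂0, zero_mul]
      rfl
    rw [he₂, hp₂0, zero_mul]
    have hmem : φ₁ h ∈ I.map φ₁ := he₁ ▸ Ideal.mul_mem_right _ _ hp₁
    exact hle hmem
  have hy₁ : ∀ g, ∃ y, g ∈ I → φ₁ g = p₁ * y := fun g => by
    by_cases hg : g ∈ I
    · obtain ⟨y, hy⟩ := hdiv₁ g hg
      exact ⟨y, fun _ => hy⟩
    · exact ⟨0, fun h => absurd h hg⟩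
  have hy₂ : ∀ g, ∃ y, g ∈ I → φ₂ g = p₂ * y := fun g => by
    by_cases hg : g ∈ I
    · obtain ⟨y, hy⟩ := hdiv₂ g hg
      exact ⟨y, fun _ => hy⟩
    · exact ⟨0, fun h => absurd h hg⟩
  choose y₁ hy₁ using hy₁
  choose y₂ hy₂ using hy₂
  suffices hsolve : ∃ g ∈ I, ∃ g' ∈ I, ∃ s t : k,
      s * constantCoeff (y₁ g) + t * constantCoeff (y₁ g') = constantCoeff e₁ ∧
      s * constantCoeff (y₂ g) + t * constantCoeff (y₂ g') = constantCoeff e₂ by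
    obtain ⟨g, hg, g', hg', s, t, h1, h2⟩ := hsolve
    have hmem : C s • (φ₁ g, φ₂ g) + C t • (φ₁ g', φ₂ g') ∈ M :=
      M.add_mem (M.smul_mem _ (Submodule.subset_span ⟨g, hg, rfl⟩))
        (M.smul_mem _ (Submodule.subset_span ⟨g', hg', rfl⟩))
    have hrem := mem_relativeModule_of_constantCoeff (φ₁ := φ₁) (φ₂ := φ₂) hp₁ hp₂
      (w₁ := e₁ - (C s * y₁ g + C t * y₁ g'))
      (w₂ := e₂ - (C s * y₂ g + C t * y₂ g'))
      (by simp [← h1]) (by simp [← h2])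
    have hmem' := Submodule.add_mem (relativeModule I φ₁ φ₂) (Submodule.mem_sup_left hmem) hrem
    refine (congrArg (· ∈ relativeModule I φ₁ φ₂) ?_).mp hmem'
    simp only [Prod.smul_mk, Prod.mk_add_mk, smul_eq_mul, he₁, he₂, hy₁ g hg, hy₁ g' hg', hy₂ g hg,
      hy₂ g' hg']
    ext1 <;> ring
  by_cases hdet : ∃ g ∈ I, ∃ g' ∈ I, constantCoeff (y₁ g) * constantCoeff (y₂ g') -
      constantCoeff (y₁ g') * constantCoeff (y₂ g) ≠ 0
  · obtain ⟨g, hg, g', hg', hd⟩ := hdet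
    obtain ⟨s, t, h1, h2⟩ := exists_solution_of_det_ne_zero hd (constantCoeff e₁) (constantCoeff e₂)
    exact ⟨g, hg, g', hg', s, t, h1, h2⟩
  push Not at hdet
  obtain ⟨g₁, hg₁, hne₁⟩ := exists_constantCoeff_ne_zero hp₁ hp₁0 hy₁
  obtain ⟨g₂, hg₂, hne₂⟩ := exists_constantCoeff_ne_zero hp₂ hp₂0 hy₂
  set c := constantCoeff (y₂ g₁) / constantCoeff (y₁ g₁) with hc
  have hprop : ∀ g ∈ I, constantCoeff (y₂ g) = c * constantCoeff (y₁ g) := fun g hg => by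
    rw [hc]
    field_simp
    linear_combination hdet g₁ hg₁ g hg
  have hc0 : c ≠ 0 := fun h0 => hne₂ (by rw [hprop g₂ hg₂, h0, zero_mul])
  have hfin := constantCoeff_eq_of_wSubIdeal hh φ₁ φ₂ hp₁0 hp₂0 hc0
    (fun g hg => ⟨y₁ g, y₂ g, hy₁ g hg, hy₂ g hg, hprop g hg⟩) he₁ he₂
  refine ⟨g₁, hg₁, g₁, hg₁, constantCoeff e₁ / constantCoeff (y₁ g₁), 0, ?_, ?_⟩
  · field_simp
    ring
  · rw [hfin, hprop g₁ hg₁]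
    field_simp
    ring

end PowerSeriesPoints

section PowerSeriesExpansion

open PowerSeries

variable {k V : Type*} [Field k] [CommRing V] [IsDomain V] [Algebra k V]

/-- Expansion of elements of a domain as power series in a generator of the kernel of a rational
point. -/
theorem exists_algHom_powerSeries (κ : V →ₐ[k] k) {ϖ : V} (hϖ : ϖ ≠ 0)
    (hker : RingHom.ker κ = Ideal.span {ϖ}) :
    ∃ ψ : V →ₐ[k] k⟦X⟧, (∀ v, constantCoeff (ψ v) = κ v) ∧ ∀ v, ψ v = 0 → ∀ n, ϖ ^ n ∣ v := by
  have hdvd : ∀ v, ∃ w, v = algebraMap k V (κ v) + ϖ * w := fun v => by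
    have hmem : v - algebraMap k V (κ v) ∈ RingHom.ker κ := by
      rw [RingHom.mem_ker, map_sub, AlgHom.commutes]
      exact sub_self _
    rw [hker, Ideal.mem_span_singleton] at hmem
    obtain ⟨w, hw⟩ := hmem
    exact ⟨w, by rw [← hw]; ring⟩
  choose s hs using hdvd
  have uniq : ∀ v w, v = algebraMap k V (κ v) + ϖ * w → s v = w := fun v w h => by
    have h1 := (hs v).symm.trans h
    exact mul_left_cancel₀ hϖ (add_left_cancel h1)
  let ex : V → k⟦X⟧ := fun v => PowerSeries.mk fun n => κ (s^[n] v)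
  have ex_zero : ∀ v, coeff 0 (ex v) = κ v := fun v => by simp [ex]
  have ex_succ : ∀ v n, coeff (n + 1) (ex v) = coeff n (ex (s v)) := fun v n => by simp [ex]
  have ex_eq : ∀ v, ex v = C (κ v) + X * ex (s v) := fun v => by
    ext n
    cases n with
    | zero => simp [ex_zero]
    | succ n => simp [ex_succ, coeff_succ_X_mul]
  have s_add : ∀ v w, s (v + w) = s v + s w := fun v w => by
    apply uniq
    rw [map_add, map_add]
    linear_combination hs v + hs w
  have s_C : ∀ c, s (algebraMap k V c) = 0 := fun c => by
    apply uniq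
    rw [AlgHom.commutes]
    simp
  have s_mul : ∀ v w, s (v * w) = algebraMap k V (κ v) * s w + s v * w := fun v w => by
    apply uniq
    rw [map_mul, map_mul]
    linear_combination w * hs v + algebraMap k V (κ v) * hs w
  have ex_add : ∀ v w, ex (v + w) = ex v + ex w := by
    intro v w
    ext n
    induction n generalizing v w with
    | zero => rw [map_add, ex_zero, ex_zero, ex_zero, map_add]
    | succ n ih => rw [map_add, ex_succ, ex_succ, ex_succ, s_add, ih, map_add]
  have ex_zero' : ex 0 = 0 := by
    have := ex_add 0 0
    rw [add_zero] at this
    exact left_eq_add.mp this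
  have ex_C : ∀ c, ex (algebraMap k V c) = C c := fun c => by
    rw [ex_eq, s_C, ex_zero', mul_zero, add_zero, AlgHom.commutes]
    rfl
  have ex_mul : ∀ v w, ex (v * w) = ex v * ex w := by
    suffices h : ∀ n v w, coeff n (ex (v * w)) = coeff n (ex v * ex w) from
      fun v w => PowerSeries.ext fun n => h n v w
    intro n
    induction n with
    | zero =>
      intro v w
      rw [ex_zero, map_mul, coeff_zero_eq_constantCoeff_apply, map_mul constantCoeff,
        ← coeff_zero_eq_constantCoeff_apply, ← coeff_zero_eq_constantCoeff_apply, ex_zero, ex_zero]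
    | succ n ih =>
      intro v w
      rw [ex_succ, s_mul, ex_add, map_add, ih, ih, ex_C]
      have : ex v * ex w = C (κ v) * C (κ w) + X * (C (κ v) * ex (s w) + ex (s v) * ex w) := by
        rw [ex_eq v]
        conv_lhs => rw [add_mul]; arg 1; rw [ex_eq w]
        ring
      rw [this, map_add, coeff_succ_X_mul, map_add, ← map_mul, coeff_succ_C, zero_add]
  let ψ : V →ₐ[k] k⟦X⟧ :=
    { toFun := ex
      map_one' := by simpa using ex_C 1
      map_mul' := ex_mul
      map_zero' := ex_zero'
      map_add' := ex_add
      commutes' := ex_C }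
  refine ⟨ψ, fun v => by rw [← coeff_zero_eq_constantCoeff_apply]; exact ex_zero v, ?_⟩
  intro v hv n
  have hv' : ex v = 0 := hv
  clear hv
  induction n generalizing v with
  | zero => simp
  | succ n ih =>
    have h0 : κ v = 0 := by rw [← ex_zero, hv', map_zero]
    have h1 : ex (s v) = 0 := by
      ext n
      rw [← ex_succ, hv', map_zero, map_zero]
    rw [hs v, h0, map_zero, zero_add, pow_succ']
    exact mul_dvd_mul_left ϖ (ih _ h1)

end PowerSeriesExpansion

section Curves

open Polynomial

theorem exists_injective_algHom_powerSeries_of_isDedekindDomain {k O : Type*} [Field k]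
    [CommRing O] [IsDedekindDomain O] [Algebra k O] (κ : O →ₐ[k] k) (hκ : RingHom.ker κ ≠ ⊥) :
    ∃ ψ : O →ₐ[k] PowerSeries k, (∀ r, PowerSeries.constantCoeff (ψ r) = κ r) ∧
      Function.Injective ψ := by
  have hprime : (RingHom.ker κ).IsPrime := RingHom.ker_isPrime _
  let V := Localization.AtPrime (RingHom.ker κ)
  have : IsDiscreteValuationRing V :=
    IsLocalization.AtPrime.isDiscreteValuationRing_of_dedekind_domain O hκ V
  have hunit : ∀ y : (RingHom.ker κ).primeCompl, IsUnit (κ y) := fun y => Ne.isUnit y.2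
  let κV : V →ₐ[k] k := IsLocalization.liftAlgHom (M := (RingHom.ker κ).primeCompl) (f := κ) hunit
  have hκV : ∀ r, κV (algebraMap O V r) = κ r := fun r => IsLocalization.lift_eq _ r
  obtain ⟨ϖ, hϖ⟩ := IsDiscreteValuationRing.exists_irreducible V
  have hmax : (RingHom.ker κV).IsMaximal :=
    RingHom.ker_isMaximal_of_surjective _ fun c => ⟨algebraMap k V c, κV.commutes c⟩
  obtain ⟨ψ, hψ, hψ0⟩ := exists_algHom_powerSeries κV hϖ.ne_zero
    ((IsLocalRing.eq_maximalIdeal hmax).trans hϖ.maximalIdeal_eq)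
  refine ⟨ψ.comp (IsScalarTower.toAlgHom k O V), fun r => (hψ _).trans (hκV r), ?_⟩
  rw [AlgHom.coe_comp]
  refine Function.Injective.comp ?_
    (IsLocalization.injective V (RingHom.ker κ).primeCompl_le_nonZeroDivisors)
  rw [injective_iff_map_eq_zero]
  intro v hv
  by_contra hv0
  obtain ⟨n, hn⟩ := IsDiscreteValuationRing.associated_pow_irreducible hv0 hϖ
  have h1 := (hψ0 v hv (n + 1)).trans hn.dvd
  exact hϖ.not_isUnit (isUnit_of_dvd_one ((mul_dvd_mul_iff_left (pow_ne_zero n hϖ.ne_zero)).mp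
    (by rwa [mul_one, ← pow_succ])))

variable {k R : Type*} [Field k] [IsAlgClosed k] [CharZero k] [CommRing R] [IsDomain R]
  [Algebra k R] [Algebra k[X] R] [IsScalarTower k k[X] R]

theorem exists_injective_algHom_powerSeries_of_finite [Module.Finite k[X] R]
    [FaithfulSMul k[X] R] (ω : R →ₐ[k] k) :
    ∃ ψ : R →ₐ[k] PowerSeries k, (∀ r, PowerSeries.constantCoeff (ψ r) = ω r) ∧
      Function.Injective ψ := by
  let L := FractionRing R
  have : FaithfulSMul k[X] L := FaithfulSMul.trans k[X] R L
  let K := FractionRing k[X]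
  let : Algebra K L := FractionRing.liftAlgebra k[X] L
  have : IsScalarTower k[X] K L := FractionRing.isScalarTower_liftAlgebra k[X] L
  have : FiniteDimensional K L := .of_isLocalization k[X] R (nonZeroDivisors k[X])
  let O := integralClosure k[X] L
  have : IsDedekindDomain O := integralClosure.isDedekindDomain k[X] K L
  let ι : R →ₐ[k[X]] O := (IsScalarTower.toAlgHom k[X] R L).codRestrict _ fun r =>
    (Algebra.IsIntegral.isIntegral (R := k[X]) r).algebraMap
  have hι : Function.Injective ι := by
    intro x y hxy
    exact IsFractionRing.injective R L (congrArg Subtype.val hxy)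
  let : Algebra R O := ι.toRingHom.toAlgebra
  have : IsScalarTower k[X] R O := IsScalarTower.of_algebraMap_eq fun x => (ι.commutes x).symm
  have : Algebra.IsIntegral R O := Algebra.IsIntegral.tower_top k[X]
  have : IsScalarTower k R O := IsScalarTower.of_algebraMap_eq fun x => by
    rw [IsScalarTower.algebraMap_apply k k[X] O, IsScalarTower.algebraMap_apply k k[X] R,
      ← IsScalarTower.algebraMap_apply k[X] R O]
  have hmax : (RingHom.ker ω).IsMaximal :=
    RingHom.ker_isMaximal_of_surjective _ fun c => ⟨algebraMap k R c, ω.commutes c⟩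
  obtain ⟨Q, hQ, hQω⟩ := Ideal.exists_ideal_over_maximal_of_isIntegral (S := O) (RingHom.ker ω) (by
    rw [(RingHom.injective_iff_ker_eq_bot (algebraMap R O)).1 hι]
    exact bot_le)
  have hintg : Algebra.IsIntegral k (O ⧸ Q) := by
    constructor
    intro x
    obtain ⟨x, rfl⟩ := Ideal.Quotient.mk_surjective x
    obtain ⟨P, hP, hPx⟩ := Algebra.IsIntegral.isIntegral (R := R) x
    refine ⟨P.map ω.toRingHom, hP.map _, ?_⟩
    have hcomp : (algebraMap k (O ⧸ Q)).comp ω.toRingHom =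
        (Ideal.Quotient.mk Q).comp (algebraMap R O) := by
      ext r
      have hmem : algebraMap k R (ω r) - r ∈ RingHom.ker ω := by
        rw [RingHom.mem_ker, map_sub, AlgHom.commutes]
        exact sub_self _
      rw [← hQω, Ideal.mem_comap, map_sub, ← IsScalarTower.algebraMap_apply] at hmem
      exact Ideal.Quotient.eq.mpr hmem
    rw [eval₂_map, hcomp, ← hom_eval₂, hPx, map_zero]
  let e : k ≃ₐ[k] (O ⧸ Q) := AlgEquiv.ofBijective (Algebra.ofId k (O ⧸ Q))
    (IsAlgClosed.algebraMap_bijective_of_isIntegral)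
  let κ : O →ₐ[k] k := e.symm.toAlgHom.comp (Ideal.Quotient.mkₐ k Q)
  have hκ : RingHom.ker κ = Q := by
    ext x
    rw [RingHom.mem_ker, ← Ideal.Quotient.eq_zero_iff_mem]
    exact e.symm.map_eq_zero_iff
  have hκω : ∀ r, κ (algebraMap R O r) = ω r := by
    intro r
    have hmem : r - algebraMap k R (ω r) ∈ RingHom.ker ω := by
      rw [RingHom.mem_ker, map_sub, AlgHom.commutes]
      exact sub_self _
    rw [← hQω, Ideal.mem_comap, map_sub, ← IsScalarTower.algebraMap_apply, ← hκ, RingHom.mem_ker,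
      map_sub, AlgHom.commutes, sub_eq_zero] at hmem
    exact hmem
  have hne : RingHom.ker κ ≠ ⊥ := by
    intro h0
    have hmem : algebraMap k[X] O (X - C (κ (algebraMap k[X] O X))) ∈ RingHom.ker κ := by
      rw [RingHom.mem_ker, map_sub, map_sub, C_eq_algebraMap,
        ← IsScalarTower.algebraMap_apply k k[X] O, AlgHom.commutes]
      exact sub_self _
    rw [h0, Ideal.mem_bot, IsScalarTower.algebraMap_apply k[X] R O] at hmem
    have h1 := (map_eq_zero_iff (algebraMap R O) hι).mp hmem
    exact X_sub_C_ne_zero _ ((map_eq_zero_iff _ (FaithfulSMul.algebraMap_injective k[X] R)).mp h1)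
  obtain ⟨ψ, hψ, hψi⟩ := exists_injective_algHom_powerSeries_of_isDedekindDomain κ hne
  refine ⟨ψ.comp (IsScalarTower.toAlgHom k R O), fun r => (hψ _).trans (hκω r), ?_⟩
  rw [AlgHom.coe_comp]
  exact hψi.comp hι

end Curves

section CurveSelection

open Polynomial

lemma exists_line {k : Type*} [Field k] [Infinite k] {s : ℕ} (o : Fin s → k)
    {G : MvPolynomial (Fin s) k} (hG : G ≠ 0)
    (hGo : MvPolynomial.aeval o G = 0) :
    ∃ l : MvPolynomial (Fin s) k →ₐ[k] k[X], Function.Surjective l ∧ l G ≠ 0 ∧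
      ∀ x, (l x).eval 0 = MvPolynomial.aeval o x := by
  obtain ⟨c, hc⟩ : ∃ c, MvPolynomial.eval c G ≠ 0 := by
    by_contra! hcon
    exact hG (MvPolynomial.funext fun x => by rw [hcon, map_zero])
  let l : MvPolynomial (Fin s) k →ₐ[k] k[X] :=
    MvPolynomial.aeval fun i => C (o i) + C (c i - o i) * X
  have h0 : ∀ x, (l x).eval 0 = MvPolynomial.aeval o x := by
    intro x
    have : (aeval (0 : k)).comp l = MvPolynomial.aeval o := by
      ext i
      simp [l]
    rw [← this, AlgHom.comp_apply, coe_aeval_eq_eval]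
  have h1 : (l G).eval 1 = MvPolynomial.eval c G := by
    have : (aeval (1 : k)).comp l = MvPolynomial.aeval c := by
      ext i
      simp [l]
    rw [← MvPolynomial.coe_aeval_eq_eval, RingHom.coe_coe, ← this, AlgHom.comp_apply,
      coe_aeval_eq_eval]
  refine ⟨l, ?_, fun h => hc (by rw [← h1, h, eval_zero]), h0⟩
  obtain ⟨i, hi⟩ : ∃ i, c i - o i ≠ 0 := by
    by_contra! hcon
    apply hc
    rw [← hGo, funext fun i => sub_eq_zero.mp (hcon i)]
    simp [MvPolynomial.aeval_eq_eval]
  have hX : (X : k[X]) ∈ l.range := by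
    refine ⟨MvPolynomial.C (c i - o i)⁻¹ * (MvPolynomial.X i - MvPolynomial.C (o i)), ?_⟩
    change l _ = _
    simp only [l, map_mul, map_sub, MvPolynomial.aeval_X, MvPolynomial.aeval_C,
      Polynomial.algebraMap_eq]
    rw [← map_sub, add_sub_cancel_left, ← mul_assoc, ← C_mul, inv_mul_cancel₀ hi, C_1, one_mul]
  rw [← AlgHom.range_eq_top, eq_top_iff, ← Polynomial.adjoin_X]
  exact Algebra.adjoin_le (Set.singleton_subset_iff.mpr hX)

variable {k : Type*} [Field k] [IsAlgClosed k] [CharZero k]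

lemma exists_algHom_powerSeries_of_isDomain {R : Type*} [CommRing R] [IsDomain R] [Algebra k R]
    [Algebra.FiniteType k R] (ω : R →ₐ[k] k) {g : R} (hg : g ≠ 0) :
    ∃ ψ : R →ₐ[k] PowerSeries k, (∀ r, PowerSeries.constantCoeff (ψ r) = ω r) ∧ ψ g ≠ 0 := by
  by_cases hωg : ω g = 0
  swap
  · refine ⟨(Algebra.ofId k (PowerSeries k)).comp ω, fun r => PowerSeries.constantCoeff_C _,
      fun h => hωg ?_⟩
    exact (map_eq_zero_iff _ (algebraMap k (PowerSeries k)).injective).mp h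
  obtain ⟨s, f, hf, hfin⟩ := exists_finite_inj_algHom_of_fg k R
  let Q := MvPolynomial (Fin s) k
  let : Algebra Q R := f.toRingHom.toAlgebra
  have : IsScalarTower k Q R := IsScalarTower.of_algebraMap_eq fun x => (f.commutes x).symm
  have : Module.Finite Q R := hfin
  have : FaithfulSMul Q R := (faithfulSMul_iff_algebraMap_injective Q R).mpr hf
  obtain ⟨G, hGg, hG⟩ := Submodule.exists_mem_ne_zero_of_ne_bot
    (Ideal.comap_ne_bot_of_integral_mem hg (Ideal.mem_span_singleton_self g)
      (Algebra.IsIntegral.isIntegral (R := Q) g))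
  rw [Ideal.mem_comap, Ideal.mem_span_singleton] at hGg
  have ho : ω.comp f = MvPolynomial.aeval fun i => ω (f (MvPolynomial.X i)) := by
    ext i
    simp
  have hGo : (MvPolynomial.aeval fun i => ω (f (MvPolynomial.X i))) G = 0 := by
    rw [← ho]
    obtain ⟨r, hr⟩ := hGg
    change ω (algebraMap Q R G) = 0
    rw [hr, map_mul, hωg, zero_mul]
  obtain ⟨l, hl, hlG, hl0⟩ := exists_line _ hG hGo
  have hprime : (RingHom.ker ω).IsPrime := RingHom.ker_isPrime _
  have hprime' : (RingHom.ker l).IsPrime := RingHom.ker_isPrime _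
  have hle : RingHom.ker l ≤ (RingHom.ker ω).under Q := by
    intro x hx
    have h1 := hl0 x
    rw [RingHom.mem_ker.mp hx, eval_zero, ← ho] at h1
    exact h1.symm
  obtain ⟨P, hPle, hP, hPl⟩ := Ideal.exists_ideal_le_liesOver_of_le (RingHom.ker ω) hle
  let θ : k[X] →ₐ[k] R ⧸ P :=
    (IsScalarTower.toAlgHom k (Q ⧸ RingHom.ker l) (R ⧸ P)).comp
      (Ideal.quotientKerAlgEquivOfSurjective hl).symm.toAlgHom
  have hθl : θ.toRingHom.comp l.toRingHom = (Ideal.Quotient.mk P).comp (algebraMap Q R) := by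
    refine RingHom.ext fun x => ?_
    have : (Ideal.quotientKerAlgEquivOfSurjective hl).symm (l x) =
        Ideal.Quotient.mk (RingHom.ker l) x := by
      rw [AlgEquiv.symm_apply_eq]
      rfl
    change algebraMap (Q ⧸ RingHom.ker l) (R ⧸ P)
      ((Ideal.quotientKerAlgEquivOfSurjective hl).symm (l x)) = _
    rw [this]
    rfl
  have hθ : Function.Injective θ :=
    (algebraMap_quotient_injective_of_liesOver (RingHom.ker l) P).comp
      (Ideal.quotientKerAlgEquivOfSurjective hl).symm.injective
  have hθfin : θ.toRingHom.Finite := by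
    apply RingHom.Finite.of_comp_finite (f := l.toRingHom)
    rw [hθl]
    exact (RingHom.Finite.of_surjective _ Ideal.Quotient.mk_surjective).comp hfin
  let : Algebra k[X] (R ⧸ P) := θ.toRingHom.toAlgebra
  have : IsScalarTower k k[X] (R ⧸ P) :=
    IsScalarTower.of_algebraMap_eq fun x => (θ.commutes x).symm
  have : Module.Finite k[X] (R ⧸ P) := hθfin
  have : FaithfulSMul k[X] (R ⧸ P) := (faithfulSMul_iff_algebraMap_injective _ _).mpr hθ
  obtain ⟨ψ, hψ, hψi⟩ := exists_injective_algHom_powerSeries_of_finite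
    (Ideal.Quotient.liftₐ P ω fun a ha => hPle ha)
  refine ⟨ψ.comp (Ideal.Quotient.mkₐ k P), fun r => hψ _, fun h => hlG ?_⟩
  have hgP : g ∈ P := Ideal.Quotient.eq_zero_iff_mem.mp
    ((map_eq_zero_iff ψ hψi).mp h)
  have hGP : G ∈ P.under Q := P.mem_of_dvd hGg hgP
  rw [← hPl.over] at hGP
  exact hGP

lemma exists_algHom_powerSeries_of_finiteType_s19 {R : Type*} [CommRing R] [Algebra k R]
    [Algebra.FiniteType k R] (ω : R →ₐ[k] k) {g : R} (hg : ∀ s n, s * g ^ n = 0 → ω s = 0) :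
    ∃ ψ : R →ₐ[k] PowerSeries k, (∀ r, PowerSeries.constantCoeff (ψ r) = ω r) ∧ ψ g ≠ 0 := by
  have hprime : (RingHom.ker ω).IsPrime := RingHom.ker_isPrime _
  obtain ⟨P, hP, -, hdisj⟩ := Ideal.exists_le_prime_disjoint ⊥
    ((RingHom.ker ω).primeCompl ⊔ Submonoid.powers g) (by
      rw [Set.disjoint_left]
      rintro x hx hx'
      obtain ⟨s, hs, _, ⟨n, rfl⟩, rfl⟩ := Submonoid.mem_sup.mp hx'
      exact hs (hg s n hx))
  rw [Set.disjoint_left] at hdisj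
  have hgP : g ∉ P := fun h => hdisj h (Submonoid.mem_sup_right (Submonoid.mem_powers g))
  have hle : P ≤ RingHom.ker ω := fun x hx => by
    by_contra hxω
    exact hdisj hx (Submonoid.mem_sup_left hxω)
  obtain ⟨ψ, hψ, hψg⟩ := exists_algHom_powerSeries_of_isDomain
    (Ideal.Quotient.liftₐ P ω fun a ha => hle ha)
    (fun h => hgP (Ideal.Quotient.eq_zero_iff_mem.mp h) : Ideal.Quotient.mk P g ≠ 0)
  exact ⟨ψ.comp (Ideal.Quotient.mkₐ k P), fun r => hψ _, hψg⟩

/-- Curve selection: a rational point in the closure of the locus `g ≠ 0` is the centre of a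
formal arc along which `g` does not vanish identically. -/
theorem exists_algHom_powerSeries_of_essFiniteType_s19 {R : Type*} [CommRing R] [Algebra k R]
    [Algebra.EssFiniteType k R] (ω : R →ₐ[k] k) {g : R} (hg : ∀ s n, s * g ^ n = 0 → ω s = 0) :
    ∃ ψ : R →ₐ[k] PowerSeries k, (∀ r, PowerSeries.constantCoeff (ψ r) = ω r) ∧ ψ g ≠ 0 := by
  let R₀ := Algebra.EssFiniteType.subalgebra k R
  let M := Algebra.EssFiniteType.submonoid k R
  have hloc : IsLocalization M R := Algebra.EssFiniteType.isLocalization k R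
  obtain ⟨⟨g₀, s⟩, hgs⟩ := IsLocalization.surj M g
  dsimp only at hgs
  obtain ⟨ψ₀, hψ₀, hψ₀g⟩ := exists_algHom_powerSeries_of_finiteType_s19 (ω.comp R₀.val) (g := g₀)
    fun t n htn => by
      refine hg t n ?_
      have h1 := congrArg (algebraMap R₀ R) htn
      rw [map_mul, map_pow, ← hgs, mul_pow, map_zero, ← mul_assoc] at h1
      exact ((IsLocalization.map_units R s).pow n).mul_left_eq_zero.mp h1
  have hunit : ∀ y : M, IsUnit (ψ₀ y) := fun y => by
    rw [PowerSeries.isUnit_iff_constantCoeff, hψ₀]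
    exact (IsLocalization.map_units R y).map ω
  let ψ : R →ₐ[k] PowerSeries k := IsLocalization.liftAlgHom (M := M) (f := ψ₀) hunit
  have hψ : ∀ r : R₀, ψ (algebraMap R₀ R r) = ψ₀ r := fun r => IsLocalization.lift_eq _ r
  refine ⟨ψ, fun r => ?_, fun h => hψ₀g ?_⟩
  · have : PowerSeries.constantCoeff.comp ψ.toRingHom = ω.toRingHom := by
      refine IsLocalization.ringHom_ext M (RingHom.ext fun x => ?_)
      exact (congrArg PowerSeries.constantCoeff (hψ x)).trans (hψ₀ x)
    exact RingHom.congr_fun this r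
  · rw [← hψ, ← hgs, map_mul, h, zero_mul]

end CurveSelection

section PointSeparation

open PowerSeries

lemma constantCoeff_eq_of_mem_relativeModule {k A : Type*} [Field k] [CommRing A] {I : Ideal A}
    {h : A} {φ₁ φ₂ : A → k⟦X⟧} {p₁ p₂ e₁ e₂ : k⟦X⟧} (hp₁ : p₁ ≠ 0) (hp₂ : p₂ ≠ 0)
    (hI : ∀ g ∈ I, ∃ y₁ y₂, φ₁ g = p₁ * y₁ ∧ φ₂ g = p₂ * y₂ ∧ constantCoeff y₁ = constantCoeff y₂)
    (he₁ : φ₁ h = p₁ * e₁) (he₂ : φ₂ h = p₂ * e₂) (hmem : (φ₁ h, φ₂ h) ∈ relativeModule I φ₁ φ₂) :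
    constantCoeff e₁ = constantCoeff e₂ := by
  let W : Submodule k⟦X⟧ (k⟦X⟧ × k⟦X⟧) :=
    { carrier := {v | ∃ y₁ y₂, v = (p₁ * y₁, p₂ * y₂) ∧ constantCoeff y₁ = constantCoeff y₂}
      zero_mem' := ⟨0, 0, by rw [mul_zero, mul_zero]; rfl, rfl⟩
      add_mem' := by
        rintro _ _ ⟨y₁, y₂, rfl, hy⟩ ⟨z₁, z₂, rfl, hz⟩
        exact ⟨y₁ + z₁, y₂ + z₂, by simp [mul_add], by rw [map_add, map_add, hy, hz]⟩
      smul_mem' := by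
        rintro c _ ⟨y₁, y₂, rfl, hy⟩
        exact ⟨c * y₁, c * y₂, by simp [mul_left_comm], by rw [map_mul, map_mul, hy]⟩ }
  have hle : relativeModule I φ₁ φ₂ ≤ W := by
    refine sup_le (Submodule.span_le.mpr ?_) ?_
    · rintro _ ⟨g, hg, rfl⟩
      obtain ⟨y₁, y₂, h1, h2, h3⟩ := hI g hg
      exact ⟨y₁, y₂, by rw [h1, h2], h3⟩
    · rw [Submodule.ideal_span_singleton_smul]
      rintro _ ⟨v, hv, rfl⟩
      have hv' : v ∈ W.comap (LinearMap.lsmul k⟦X⟧ (k⟦X⟧ × k⟦X⟧) X) := by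
        refine Submodule.span_le.mpr ?_ hv
        rintro _ ⟨g, hg, rfl | rfl⟩
        · obtain ⟨y₁, y₂, h1, h2, h3⟩ := hI g hg
          exact ⟨X * y₁, 0, by simp [h1, mul_left_comm], by simp⟩
        · obtain ⟨y₁, y₂, h1, h2, h3⟩ := hI g hg
          exact ⟨0, X * y₂, by simp [h2, mul_left_comm], by simp⟩
      exact hv'
  obtain ⟨y₁, y₂, hy, hyy⟩ := hle hmem
  rw [Prod.mk.injEq, he₁, he₂] at hy
  rw [mul_left_cancel₀ hp₁ hy.1, mul_left_cancel₀ hp₂ hy.2, hyy]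

open IsLocalRing in
lemma exists_algHom_of_residue {k A : Type*} [Field k] [CommRing A] [IsLocalRing A] [Algebra k A]
    (hres : ∀ x : A, ∃ c : k, x - algebraMap k A c ∈ maximalIdeal A) :
    ∃ π : A →ₐ[k] k, ∀ a, π a = 0 ↔ a ∈ maximalIdeal A := by
  have hbij : Function.Bijective (algebraMap k (ResidueField A)) := by
    refine ⟨(algebraMap k (ResidueField A)).injective, fun x => ?_⟩
    obtain ⟨x, rfl⟩ := residue_surjective x
    obtain ⟨c, hc⟩ := hres x
    refine ⟨c, ?_⟩
    rw [IsScalarTower.algebraMap_apply k A (ResidueField A), eq_comm, ← sub_eq_zero]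
    exact (residue_eq_zero_iff _).mpr hc
  let e : k ≃ₐ[k] ResidueField A := AlgEquiv.ofBijective (Algebra.ofId k _) hbij
  refine ⟨e.symm.toAlgHom.comp (IsScalarTower.toAlgHom k A (ResidueField A)), fun a => ?_⟩
  rw [← residue_eq_zero_iff]
  exact e.symm.map_eq_zero_iff

/-- Power series points `φ` whose closed point is the closed point of `Spec A`. -/
def IsLocalPoint {k A : Type*} [Field k] [CommRing A] [IsLocalRing A] [Algebra k A]
    (φ : A →ₐ[k] k⟦X⟧) : Prop :=
  ∀ a ∈ IsLocalRing.maximalIdeal A, constantCoeff (φ a) = 0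

variable {k A : Type*} [Field k] [CharZero k] [CommRing A] [IsLocalRing A] [Algebra k A]
  {I : Ideal A} {h : A}

lemma mem_maximalIdeal_of_criterion
    (hres : ∀ x : A, ∃ c : k, x - algebraMap k A c ∈ IsLocalRing.maximalIdeal A)
    (hI : I ≤ IsLocalRing.maximalIdeal A)
    (hcrit : ∀ φ₁ φ₂ : A →ₐ[k] k⟦X⟧, IsLocalPoint φ₁ → IsLocalPoint φ₂ →
      (φ₁ h, φ₂ h) ∈ relativeModule I φ₁ φ₂) :
    h ∈ IsLocalRing.maximalIdeal A := by
  obtain ⟨π, hπ⟩ := exists_algHom_of_residue hres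
  let φ : A →ₐ[k] k⟦X⟧ := (Algebra.ofId k k⟦X⟧).comp π
  have hφ : ∀ a, φ a = C (π a) := fun a => rfl
  have hloc : IsLocalPoint φ := fun a ha => by rw [hφ, constantCoeff_C, (hπ a).mpr ha]
  have h0 : ∀ g ∈ I, φ g = 0 := fun g hg => by rw [hφ, (hπ g).mpr (hI hg), map_zero]
  have key := constantCoeff_eq_of_mem_relativeModule (p₁ := 1) (p₂ := -1) (e₁ := φ h) (e₂ := -φ h)
    one_ne_zero (neg_ne_zero.mpr one_ne_zero)
    (fun g hg => ⟨0, 0, by simp [h0 g hg], by simp [h0 g hg], rfl⟩) (by simp) (by simp)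
    (hcrit φ φ hloc hloc)
  rw [map_neg, hφ, constantCoeff_C] at key
  exact (hπ h).mp (self_eq_neg.mp key)

variable [IsAlgClosed k] {B : Type*} [CommRing B] [Algebra k B] [Algebra A B] [IsScalarTower k A B]
  [Algebra.EssFiniteType k B] {ι : B →ₐ[A] Polynomial A}

lemma exists_arc (hι : Function.Injective ι) (ω : B →ₐ[k] k)
    (hω : ∀ a ∈ IsLocalRing.maximalIdeal A, ω (algebraMap A B a) = 0) {g₀ : A} {u₀ : B}
    (hu₀ : ι u₀ = Polynomial.monomial 1 g₀) (hωu₀ : ω u₀ ≠ 0) :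
    ∃ φ : A →ₐ[k] k⟦X⟧, IsLocalPoint φ ∧ ∃ p : k⟦X⟧, p ≠ 0 ∧
      ∀ g u, ι u = Polynomial.monomial 1 g → ∃ y, φ g = p * y ∧ constantCoeff y = ω u := by
  obtain ⟨ψ, hψ, hψg⟩ := exists_algHom_powerSeries_of_essFiniteType_s19 ω (g := algebraMap A B g₀) (by
    intro s n hsn
    have h1 : s * u₀ ^ n = 0 := by
      apply hι
      have h2 := congrArg ι hsn
      rw [map_mul, map_pow, AlgHom.commutes, map_zero, Polynomial.algebraMap_eq] at h2
      rw [map_mul, map_pow, hu₀, ← Polynomial.C_mul_X_pow_eq_monomial, mul_pow, ← mul_assoc, h2,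
        zero_mul, map_zero]
    have h3 := congrArg ω h1
    rw [map_mul, map_pow, map_zero] at h3
    exact (mul_eq_zero.mp h3).resolve_right (pow_ne_zero n hωu₀))
  obtain ⟨v, hv⟩ : IsUnit (ψ u₀) := by
    rw [isUnit_iff_constantCoeff, hψ]
    exact hωu₀.isUnit
  refine ⟨ψ.comp (IsScalarTower.toAlgHom k A B), fun a ha => (hψ _).trans (hω a ha),
    ψ (algebraMap A B g₀) * ↑v⁻¹, mul_ne_zero hψg v⁻¹.ne_zero, fun g u hu => ⟨ψ u, ?_, hψ u⟩⟩
  have h1 : algebraMap A B g * u₀ = algebraMap A B g₀ * u := by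
    apply hι
    rw [map_mul, map_mul, AlgHom.commutes, AlgHom.commutes, hu, hu₀, Polynomial.algebraMap_eq,
      Polynomial.C_mul_monomial, Polynomial.C_mul_monomial, mul_comm]
  have h2 := congrArg ψ h1
  rw [map_mul, map_mul, ← hv] at h2
  change ψ (algebraMap A B g) = _
  rw [mul_right_comm, ← h2, Units.mul_inv_cancel_right]

variable (hι : Function.Injective ι)
  (hres : ∀ x : A, ∃ c : k, x - algebraMap k A c ∈ IsLocalRing.maximalIdeal A)
  (hI : I ≤ IsLocalRing.maximalIdeal A)
  (hcrit : ∀ φ₁ φ₂ : A →ₐ[k] k⟦X⟧, IsLocalPoint φ₁ → IsLocalPoint φ₂ →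
    (φ₁ h, φ₂ h) ∈ relativeModule I φ₁ φ₂)
  (hT : ∀ g ∈ I, ∃ u, ι u = Polynomial.monomial 1 g) {b : B} (hb : ι b = Polynomial.monomial 1 h)

include hι hres hI hcrit hT hb

lemma apply_eq_zero_of_criterion (ω : B →ₐ[k] k)
    (hω : ∀ a ∈ IsLocalRing.maximalIdeal A, ω (algebraMap A B a) = 0)
    (hωT : ∀ g ∈ I, ∀ u, ι u = Polynomial.monomial 1 g → ω u = 0) : ω b = 0 := by
  by_contra hωb
  obtain ⟨φ, hφ, p, hp, harc⟩ := exists_arc hι ω hω hb hωb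
  obtain ⟨π, hπ⟩ := exists_algHom_of_residue hres
  let φ₀ : A →ₐ[k] k⟦X⟧ := (Algebra.ofId k k⟦X⟧).comp π
  have hφ₀ : ∀ a ∈ IsLocalRing.maximalIdeal A, φ₀ a = 0 := fun a ha => by
    change C (π a) = 0
    rw [(hπ a).mpr ha, map_zero]
  obtain ⟨e, he, hee⟩ := harc h b hb
  have key := constantCoeff_eq_of_mem_relativeModule (p₂ := 1) (e₂ := 0) hp one_ne_zero
    (fun g hg => by
      obtain ⟨u, hu⟩ := hT g hg
      obtain ⟨y, hy, hyu⟩ := harc g u hu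
      exact ⟨y, 0, hy, by rw [hφ₀ g (hI hg), mul_zero], by rw [hyu, hωT g hg u hu, map_zero]⟩) he
    (by rw [hφ₀ h (mem_maximalIdeal_of_criterion hres hI hcrit), mul_zero])
    (hcrit φ φ₀ hφ fun a ha => by rw [hφ₀ a ha, map_zero])
  exact hωb (by rw [← hee, key, map_zero])

lemma apply_eq_apply_of_criterion (ω₁ ω₂ : B →ₐ[k] k)
    (hω₁ : ∀ a ∈ IsLocalRing.maximalIdeal A, ω₁ (algebraMap A B a) = 0)
    (hω₂ : ∀ a ∈ IsLocalRing.maximalIdeal A, ω₂ (algebraMap A B a) = 0)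
    (hωT : ∀ g ∈ I, ∀ u, ι u = Polynomial.monomial 1 g → ω₁ u = ω₂ u) : ω₁ b = ω₂ b := by
  by_cases hall : ∀ g ∈ I, ∀ u, ι u = Polynomial.monomial 1 g → ω₁ u = 0
  · rw [apply_eq_zero_of_criterion hι hres hI hcrit hT hb ω₁ hω₁ hall,
      apply_eq_zero_of_criterion hι hres hI hcrit hT hb ω₂ hω₂
        fun g hg u hu => by rw [← hωT g hg u hu, hall g hg u hu]]
  push Not at hall
  obtain ⟨g₀, hg₀, u₀, hu₀, hne⟩ := hall
  obtain ⟨φ₁, hφ₁, p₁, hp₁, harc₁⟩ := exists_arc hι ω₁ hω₁ hu₀ hne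
  obtain ⟨φ₂, hφ₂, p₂, hp₂, harc₂⟩ := exists_arc hι ω₂ hω₂ hu₀ (hωT g₀ hg₀ u₀ hu₀ ▸ hne)
  obtain ⟨e₁, he₁, hee₁⟩ := harc₁ h b hb
  obtain ⟨e₂, he₂, hee₂⟩ := harc₂ h b hb
  rw [← hee₁, ← hee₂]
  refine constantCoeff_eq_of_mem_relativeModule hp₁ hp₂ (fun g hg => ?_) he₁ he₂
    (hcrit φ₁ φ₂ hφ₁ hφ₂)
  obtain ⟨u, hu⟩ := hT g hg
  obtain ⟨y₁, hy₁, hyu₁⟩ := harc₁ g u hu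
  obtain ⟨y₂, hy₂, hyu₂⟩ := harc₂ g u hu
  exact ⟨y₁, y₂, hy₁, hy₂, by rw [hyu₁, hyu₂, hωT g hg u hu]⟩

end PointSeparation

section ReesAlgebra

open Polynomial IsLocalRing

variable {k A : Type*} [Field k] [IsAlgClosed k] [CommRing A] [IsLocalRing A] [Algebra k A]

/-- Nullstellensatz for finite type algebras over a local ring with residue field `k`. -/
lemma mem_radical_of_forall_algHom
    (hres : ∀ x : A, ∃ c : k, x - algebraMap k A c ∈ maximalIdeal A) {I : Ideal A}
    (hI : I.radical = maximalIdeal A) {R : Type*} [CommRing R] [Algebra k R] [Algebra A R]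
    [IsScalarTower k A R] [Algebra.FiniteType A R] {E : Ideal R} {x : R}
    (hx : ∀ g ∈ I, algebraMap A R g * x ∈ E)
    (hω : ∀ ω : R →ₐ[k] k, (∀ a ∈ maximalIdeal A, ω (algebraMap A R a) = 0) →
      (∀ y ∈ E, ω y = 0) → ω x = 0) : x ∈ E.radical := by
  rw [Ideal.radical_eq_sInf, Submodule.mem_sInf]
  rintro (P : Ideal R) ⟨hEP, hP⟩
  by_cases hIP : I ≤ P.comap (algebraMap A R)
  swap
  · obtain ⟨g, hg, hgP⟩ := SetLike.not_le_iff_exists.mp hIP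
    exact (hP.mem_or_mem (hEP (hx g hg))).resolve_left hgP
  have hmP : ∀ a ∈ maximalIdeal A, algebraMap A R a ∈ P := fun a ha =>
    (hP.comap (algebraMap A R)).radical_le_iff.mpr hIP (hI ▸ ha)
  have hft : Algebra.FiniteType k (R ⧸ P) := by
    obtain ⟨s, hs⟩ := (Algebra.FiniteType.trans (S := R) inferInstance inferInstance :
      Algebra.FiniteType A (R ⧸ P)).out
    refine ⟨s, top_le_iff.mp fun y _ => ?_⟩
    have hy : y ∈ Algebra.adjoin A (s : Set (R ⧸ P)) := hs ▸ trivial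
    induction hy using Algebra.adjoin_induction with
    | mem y hy => exact Algebra.subset_adjoin hy
    | algebraMap a =>
      obtain ⟨c, hc⟩ := hres a
      have h2 : algebraMap A (R ⧸ P) a = algebraMap k (R ⧸ P) c := by
        rw [IsScalarTower.algebraMap_apply k A (R ⧸ P), ← sub_eq_zero, ← map_sub]
        exact Ideal.Quotient.eq_zero_iff_mem.mpr (hmP _ hc)
      rw [h2]
      exact Subalgebra.algebraMap_mem _ _
    | add y z _ _ hy hz => exact add_mem (hy trivial) (hz trivial)
    | mul y z _ _ hy hz => exact mul_mem (hy trivial) (hz trivial)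
  have hjac : IsJacobsonRing (R ⧸ P) := isJacobsonRing_of_finiteType (A := k)
  rw [← Ideal.Quotient.eq_zero_iff_mem, ← Ideal.mem_bot,
    ← (Ideal.isPrime_bot (α := R ⧸ P)).isRadical.radical, Ideal.radical_eq_jacobson,
    Ideal.jacobson, Submodule.mem_sInf]
  rintro M ⟨-, hM⟩
  let : Field ((R ⧸ P) ⧸ M) := Ideal.Quotient.field M
  have hfin : Module.Finite k ((R ⧸ P) ⧸ M) := finite_of_finite_type_of_isJacobsonRing k _
  let e : k ≃ₐ[k] (R ⧸ P) ⧸ M := AlgEquiv.ofBijective (Algebra.ofId k _)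
    (IsAlgClosed.algebraMap_bijective_of_isIntegral)
  have he := hω (e.symm.toAlgHom.comp ((Ideal.Quotient.mkₐ k M).comp (Ideal.Quotient.mkₐ k P)))
    (fun a ha => by
      refine e.symm.map_eq_zero_iff.mpr (Ideal.Quotient.eq_zero_iff_mem.mpr ?_)
      exact (Ideal.Quotient.eq_zero_iff_mem.mpr (hmP a ha)).symm ▸ M.zero_mem)
    (fun y hy => by
      refine e.symm.map_eq_zero_iff.mpr (Ideal.Quotient.eq_zero_iff_mem.mpr ?_)
      exact (Ideal.Quotient.eq_zero_iff_mem.mpr (hEP hy)).symm ▸ M.zero_mem)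
  exact Ideal.Quotient.eq_zero_iff_mem.mp (e.symm.map_eq_zero_iff.mp he)

section

variable {A : Type*} [CommRing A] {I : Ideal A} {h : A} {S B : Type*} [CommRing S] [CommRing B]
  [Algebra S B] {ι : B →+* A[X]} {b : B}

lemma isIntegral_of_mem_radical_map (hι : Function.Injective ι)
    (hS : ∀ f, (∃ s, ι (algebraMap S B s) = f) ↔ f ∈ reesAlgebra I) (hb : ι b = monomial 1 h)
    (hsurj : Function.Surjective (aeval b : S[X] →ₐ[S] B))
    (hrad : b ∈ ((RingHom.ker ((constantCoeff.comp ι).comp (algebraMap S B))).map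
      (algebraMap S B)).radical) : IsIntegral S b := by
  obtain ⟨n, hn⟩ := hrad
  have hcomp : algebraMap S B = (aeval b : S[X] →ₐ[S] B).toRingHom.comp C := by
    ext s
    simp
  rw [hcomp, ← Ideal.map_map, ← hcomp] at hn
  obtain ⟨f, hf, hfb⟩ := (Ideal.mem_map_iff_of_surjective _ hsurj).mp hn
  replace hfb : aeval b f = b ^ n := hfb
  rw [Ideal.mem_map_C_iff] at hf
  have hbn : ∀ i, ι b ^ i = monomial i (h ^ i) := fun i => by
    rw [hb, monomial_pow, one_mul]
  let c : ℕ → A := fun i => (ι (algebraMap S B (f.coeff i))).coeff (n - i)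
  choose d hd using fun i => (hS (monomial (n - i) (c i))).mpr
    (reesAlgebra.monomial_mem.mpr ((hS _).mp ⟨f.coeff i, rfl⟩ _))
  have key : h ^ n = ∑ i ∈ Finset.range n, c i * h ^ i := by
    have h1 := congrArg (fun y => (ι y).coeff n) hfb
    simp only [map_pow, hbn, coeff_monomial_same] at h1
    rw [← h1, aeval_eq_sum_range' (n := n + 1 + f.natDegree) (by omega)]
    simp only [Algebra.smul_def, map_sum, map_mul, map_pow, hbn, finsetSum_coeff]
    symm
    refine (Finset.sum_congr rfl fun i hi => ?_).trans
      (Finset.sum_subset (Finset.range_mono (by omega)) fun i _ hi => ?_)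
    · rw [← C_mul_X_pow_eq_monomial, ← mul_assoc, coeff_mul_X_pow',
        if_pos (Finset.mem_range.mp hi).le, coeff_mul_C]
    · rw [← C_mul_X_pow_eq_monomial, ← mul_assoc, coeff_mul_X_pow']
      split_ifs with hin
      · obtain rfl : i = n := by rw [Finset.mem_range] at hi; omega
        rw [coeff_mul_C, Nat.sub_self]
        exact mul_eq_zero_of_left (hf i) _
      · rfl
  let P : S[X] := ∑ i ∈ Finset.range n, C (d i) * X ^ i
  refine ⟨X ^ n - P, monic_X_pow_sub ?_, hι ?_⟩
  · refine (degree_sum_le _ _).trans_lt ?_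
    refine (Finset.sup_lt_iff (WithBot.bot_lt_coe n)).mpr fun i hi => ?_
    exact (degree_C_mul_X_pow_le _ _).trans_lt (WithBot.coe_lt_coe.mpr (Finset.mem_range.mp hi))
  · rw [eval₂_sub, eval₂_X_pow, map_sub, map_pow, hbn, key, map_zero, sub_eq_zero]
    simp only [P, eval₂_finsetSum, eval₂_mul, eval₂_C, eval₂_X_pow, map_sum, map_mul, map_pow,
      hd, hbn, monomial_mul_monomial]
    refine Finset.sum_congr rfl fun i hi => ?_
    rw [Nat.sub_add_cancel (Finset.mem_range.mp hi).le]

lemma wSubIdeal_of_binomial_equations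
    (hS : ∀ s, ι (algebraMap S B s) ∈ reesAlgebra I) (hb : ι b = monomial 1 h)
    {q : ℕ} {a : ℕ → S} (ha0 : a 0 = 1) (ha : ∀ n, q ≤ n →
      ∑ i ∈ Finset.range (n + 1), (n.choose i : B) * algebraMap S B (a i) * b ^ (n - i) = 0) :
    WSubIdeal I h := by
  refine ⟨q, fun i => (ι (algebraMap S B (a i))).coeff i, fun i => hS (a i) i, fun n hn _ => ?_⟩
  have h1 := congrArg (fun y => (ι y).coeff n) (ha n (by omega))
  simp only [map_sum, map_mul, map_natCast, map_pow, hb, monomial_pow, one_mul, map_zero,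
    coeff_zero, finsetSum_coeff] at h1
  rw [← h1, Finset.range_eq_Ico, Finset.sum_eq_sum_Ico_succ_bot (Nat.succ_pos n)]
  congr 1
  · simp [ha0]
  · refine Finset.sum_congr rfl fun i hi => ?_
    have hin : n = i + (n - i) := by
      have := Finset.mem_Icc.mp hi
      omega
    have h2 := coeff_mul_monomial ((n.choose i : A[X]) * ι (algebraMap S B (a i))) (n - i) i
      (h ^ (n - i))
    rw [← hin, coeff_natCast_mul] at h2
    exact h2.symm

end

variable {I : Ideal A} {h : A} {S B : Type*} [CommRing S] [CommRing B] [Algebra k S] [Algebra k B]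
  [Algebra A S] [Algebra A B] [Algebra S B] [IsScalarTower k A B] [IsScalarTower A S B]
  {ι : B →ₐ[A] A[X]} {b : B}

lemma algebraMap_mul_eq_of_monomial {A B : Type*} [CommRing A] [CommRing B] [Algebra A B]
    {ι : B →ₐ[A] A[X]} (hι : Function.Injective ι) {b u : B} {g h : A}
    (hb : ι b = monomial 1 h) (hu : ι u = monomial 1 g) :
    algebraMap A B g * b = algebraMap A B h * u := by
  apply hι
  rw [map_mul, map_mul, hb, hu, AlgHom.commutes, AlgHom.commutes, algebraMap_eq, C_mul_monomial,
    C_mul_monomial, mul_comm]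

variable [CharZero k] [Algebra.EssFiniteType k B]
  [Algebra.FiniteType A B] (hι : Function.Injective ι) (hb : ι b = monomial 1 h)
  (hsurj : Function.Surjective (aeval b : S[X] →ₐ[S] B))
  (hres : ∀ x : A, ∃ c : k, x - algebraMap k A c ∈ maximalIdeal A)
  (hI : I.radical = maximalIdeal A)
  (hcrit : ∀ φ₁ φ₂ : A →ₐ[k] PowerSeries k, IsLocalPoint φ₁ → IsLocalPoint φ₂ →
    (φ₁ h, φ₂ h) ∈ relativeModule I φ₁ φ₂)

include hι hb hsurj hres hI hcrit

omit [Algebra k S] [Algebra A S] [IsScalarTower A S B] in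
lemma isIntegral_of_criterion (hS : ∀ f, (∃ s, ι (algebraMap S B s) = f) ↔ f ∈ reesAlgebra I) :
    IsIntegral S b := by
  have hT : ∀ g ∈ I, ∃ s, ι (algebraMap S B s) = monomial 1 g := fun g hg =>
    (hS _).mpr (reesAlgebra.monomial_mem.mpr (by rwa [pow_one]))
  have hmem : ∀ g s, ι (algebraMap S B s) = monomial 1 g → algebraMap S B s ∈
      (RingHom.ker ((constantCoeff.comp ι.toRingHom).comp (algebraMap S B))).map
      (algebraMap S B) := fun g s hs => by
    refine Ideal.mem_map_of_mem _ ?_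
    change (ι (algebraMap S B s)).coeff 0 = 0
    rw [hs, coeff_monomial_of_ne g zero_ne_one]
  refine isIntegral_of_mem_radical_map (ι := ι.toRingHom) hι hS hb hsurj
    (mem_radical_of_forall_algHom hres hI (fun g hg => ?_) fun ω hωm hω => ?_)
  · obtain ⟨s, hs⟩ := hT g hg
    rw [algebraMap_mul_eq_of_monomial hι hb hs]
    exact Ideal.mul_mem_left _ _ (hmem g s hs)
  · refine apply_eq_zero_of_criterion hι hres (hI ▸ Ideal.le_radical) hcrit
      (fun g hg => (hT g hg).imp' _ fun _ => id) hb ω hωm fun g hg u hu => ?_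
    obtain ⟨s, hs⟩ := hT g hg
    obtain rfl : u = algebraMap S B s := hι (hu.trans hs.symm)
    exact hω _ (hmem g s hs)

lemma X_sub_C_mem_radical_of_criterion [IsScalarTower k S B]
    (hT : ∀ g ∈ I, ∃ s, ι (algebraMap S B s) = monomial 1 g) :
    X - C b ∈ ((RingHom.ker (aeval b : S[X] →ₐ[S] B)).map
      (mapRingHom (algebraMap S B))).radical := by
  refine mem_radical_of_forall_algHom hres hI (fun g hg => ?_) fun ω hωm hω => ?_
  · obtain ⟨s, hs⟩ := hT g hg
    have hgb := algebraMap_mul_eq_of_monomial hι hb hs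
    rw [IsScalarTower.algebraMap_apply A S B, IsScalarTower.algebraMap_apply A S B h] at hgb
    have hker : C (algebraMap A S g) * X - C (algebraMap A S h * s) ∈
        RingHom.ker (aeval b : S[X] →ₐ[S] B) := by
      rw [RingHom.mem_ker, map_sub, map_mul, aeval_C, aeval_C, aeval_X, map_mul, hgb, sub_self]
    have hmem := Ideal.mem_map_of_mem (mapRingHom (algebraMap S B)) hker
    rw [map_sub, map_mul, coe_mapRingHom, map_C, map_C, map_X, map_mul, ← hgb, C_mul, ← mul_sub,
      ← IsScalarTower.algebraMap_apply] at hmem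
    exact hmem
  · let ω₁ : B →ₐ[k] k := ω.comp (IsScalarTower.toAlgHom k B B[X])
    let ψ : S[X] →ₐ[k] k := ω.comp (mapAlgHom (IsScalarTower.toAlgHom k S B))
    have hψ : ∀ f, aeval b f = 0 → ψ f = 0 := fun f hf => hω _ (Ideal.mem_map_of_mem _ hf)
    let ω₂ : B →ₐ[k] k := AlgHom.liftOfSurjective
      ((aeval b : S[X] →ₐ[S] B).restrictScalars k) hsurj ψ hψ
    have hω₂ : ∀ f : S[X], ω₂ (aeval b f) = ψ f := fun f =>
      AlgHom.liftOfSurjective_apply _ _ _ _ f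
    have hωS : ∀ s : S, ω₁ (algebraMap S B s) = ω₂ (algebraMap S B s) := fun s => by
      rw [← aeval_C b s, hω₂, aeval_C]
      exact (congrArg ω (map_C _)).symm
    have hbb : ω₁ b = ω₂ b := by
      refine apply_eq_apply_of_criterion hι hres (hI ▸ Ideal.le_radical) hcrit
        (fun g hg => (hT g hg).imp' _ fun _ => id) hb ω₁ ω₂ hωm
        (fun a ha => ?_) fun g hg u hu => ?_
      · rw [IsScalarTower.algebraMap_apply A S B, ← hωS, ← IsScalarTower.algebraMap_apply]
        exact hωm a ha
      · obtain ⟨s, hs⟩ := hT g hg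
        obtain rfl : u = algebraMap S B s := hι (hu.trans hs.symm)
        exact hωS _
    have hX : ω₂ b = ω X := by
      conv_lhs => rw [← aeval_X (R := S) b]
      rw [hω₂]
      exact congrArg ω (map_X _)
    rw [map_sub, ← hX, ← hbb, sub_eq_zero]
    rfl

lemma wSubIdeal_of_adjoin [IsNoetherianRing S] [IsScalarTower k S B]
    (hinj : Function.Injective (algebraMap S B))
    (hS : ∀ f, (∃ s, ι (algebraMap S B s) = f) ↔ f ∈ reesAlgebra I) : WSubIdeal I h := by
  obtain ⟨q, a, ha0, ha⟩ := exists_binomial_equations (fun n hn => by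
    have hn' := ((Nat.cast_ne_zero (R := k)).mpr hn).isUnit.map (algebraMap k S)
    rwa [map_natCast] at hn') hinj b hsurj
    (isIntegral_of_criterion hι hb hsurj hres hI hcrit hS)
    (X_sub_C_mem_radical_of_criterion hι hb hsurj hres hI hcrit fun g hg =>
      (hS _).mpr (reesAlgebra.monomial_mem.mpr (by rwa [pow_one])))
  exact wSubIdeal_of_binomial_equations (ι := ι.toRingHom) (fun s => (hS _).mp ⟨s, rfl⟩) hb ha0 ha

end ReesAlgebra

section Criterion

open Polynomial IsLocalRing

lemma adjoin_singleton_properties (k : Type*) {A T : Type*} [Field k] [CommRing A] [CommRing T]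
    [Algebra k A] [Algebra A T] [Algebra k T] [IsScalarTower k A T] [Algebra.EssFiniteType k A]
    (S : Subalgebra A T) [Algebra.FiniteType A S] (t : T) :
    Algebra.FiniteType A (Algebra.adjoin S {t}) ∧ Algebra.EssFiniteType k (Algebra.adjoin S {t}) ∧
      Function.Injective (algebraMap S (Algebra.adjoin S {t})) ∧
      ∃ b : Algebra.adjoin S {t}, (b : T) = t ∧
        Function.Surjective (aeval b : S[X] →ₐ[S] Algebra.adjoin S {t}) := by
  let b : Algebra.adjoin S {t} := ⟨t, Algebra.subset_adjoin rfl⟩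
  have hsurj : Function.Surjective (aeval b : S[X] →ₐ[S] Algebra.adjoin S {t}) := by
    rintro ⟨x, hx⟩
    obtain ⟨f, hf⟩ := (Algebra.adjoin_singleton_eq_range_aeval S t).le hx
    exact ⟨f, Subtype.ext ((aeval_subalgebra_coe f _ b).trans hf)⟩
  have hftS : Algebra.FiniteType S (Algebra.adjoin S {t}) := .of_surjective (aeval b) hsurj
  have hftA : Algebra.FiniteType A (Algebra.adjoin S {t}) := .trans (S := S) inferInstance hftS
  refine ⟨hftA, .comp k A _, fun x y hxy => Subtype.ext ?_, b, rfl, hsurj⟩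
  exact congrArg (fun z : Algebra.adjoin S {t} => (z : T)) hxy

theorem wSubIdeal_of_criterion {k A : Type*} [Field k] [IsAlgClosed k] [CharZero k] [CommRing A]
    [IsLocalRing A] [IsNoetherianRing A] [Algebra k A] [Algebra.EssFiniteType k A]
    (hres : ∀ x : A, ∃ c : k, x - algebraMap k A c ∈ maximalIdeal A) {I : Ideal A}
    (hI : I.radical = maximalIdeal A) {h : A}
    (hcrit : ∀ φ₁ φ₂ : A →ₐ[k] PowerSeries k, IsLocalPoint φ₁ → IsLocalPoint φ₂ →
      (φ₁ h, φ₂ h) ∈ relativeModule I φ₁ φ₂) : WSubIdeal I h := by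
  obtain ⟨_, _, hinj, b, hb, hsurj⟩ :=
    adjoin_singleton_properties k (reesAlgebra I) (monomial 1 h : A[X])
  refine wSubIdeal_of_adjoin (k := k) (S := reesAlgebra I) (b := b)
    (ι := (Algebra.adjoin (reesAlgebra I) {(monomial 1 h : A[X])}).val.restrictScalars A)
    ?_ ?_ ?_ hres hI hcrit ?_ ?_
  · exact Subtype.val_injective
  · exact hb
  · exact hsurj
  · exact hinj
  · exact fun f => ⟨fun ⟨s, hs⟩ => hs ▸ s.2, fun hf => ⟨⟨f, hf⟩, rfl⟩⟩

end Criterion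

/-- Theorem 5.11, algebraic valuative criterion for weak subintegral
closure: let `k` be an algebraically closed field of characteristic 0, `(A,m,k)` the local
ring of an algebraic variety over `k`, `I` an `m`-primary ideal and `h ∈ A`.  Set
`B = A ⊗_k A`.  Then `h ∈ *I` iff for every local `k`-algebra homomorphism
`ρ : B → k[[z]]`, the vector `(ρ(h⊗1), ρ(1⊗h))` lies in `M_ρ + z·N_ρ`, where `M_ρ` is the
`k[[z]]`-submodule of `k[[z]]²` spanned by the `(ρ(g⊗1), ρ(1⊗g))` for `g ∈ I`, and `N_ρ`
that spanned by the `(ρ(g⊗1), 0)` and `(0, ρ(1⊗g))` for `g ∈ I`. -/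
theorem weakSubintegral_iff_relativeClosure {k A : Type*} [Field k] [IsAlgClosed k]
    [CharZero k] [CommRing A] [IsReduced A] [IsNoetherianRing A] [IsLocalRing A]
    [Algebra k A] [Algebra.EssFiniteType k A]
    (hres : ∀ x : A, ∃ c : k, x - algebraMap k A c ∈ IsLocalRing.maximalIdeal A)
    (I : Ideal A) (hIm : I.radical = IsLocalRing.maximalIdeal A) (h : A) :
    WSubIdeal I h ↔
      ∀ ρ : (A ⊗[k] A) →ₐ[k] PowerSeries k,
        (∀ a ∈ IsLocalRing.maximalIdeal A,
          ρ (Algebra.TensorProduct.includeLeft (S := k) a)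
              ∈ Ideal.span {(PowerSeries.X : PowerSeries k)} ∧
          ρ (Algebra.TensorProduct.includeRight (R := k) a)
              ∈ Ideal.span {(PowerSeries.X : PowerSeries k)}) →
        (ρ (Algebra.TensorProduct.includeLeft (S := k) h),
          ρ (Algebra.TensorProduct.includeRight (R := k) h)) ∈
          (Submodule.span (PowerSeries k)
            {v : PowerSeries k × PowerSeries k | ∃ g ∈ I,
              v = (ρ (Algebra.TensorProduct.includeLeft (S := k) g),
                   ρ (Algebra.TensorProduct.includeRight (R := k) g))}
          + (Ideal.span {(PowerSeries.X : PowerSeries k)}) •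
            Submodule.span (PowerSeries k)
            {v : PowerSeries k × PowerSeries k | ∃ g ∈ I,
              v = (ρ (Algebra.TensorProduct.includeLeft (S := k) g), 0) ∨
              v = (0, ρ (Algebra.TensorProduct.includeRight (R := k) g))}) := by
  refine ⟨fun hh ρ _ => ?_, fun hρ => ?_⟩
  · exact mem_relativeModule_of_wSubIdeal hh
      (ρ.comp Algebra.TensorProduct.includeLeft).toRingHom
      (ρ.comp Algebra.TensorProduct.includeRight).toRingHom
  · refine wSubIdeal_of_criterion hres hIm fun φ₁ φ₂ h₁ h₂ => ?_
    have hl : ∀ a, Algebra.TensorProduct.productMap φ₁ φ₂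
        (Algebra.TensorProduct.includeLeft (S := k) a) = φ₁ a := fun a => by simp
    have hr : ∀ a, Algebra.TensorProduct.productMap φ₁ φ₂
        (Algebra.TensorProduct.includeRight (R := k) a) = φ₂ a := fun a => by simp
    have key := hρ (Algebra.TensorProduct.productMap φ₁ φ₂) fun a ha => by
      rw [hl, hr, Ideal.mem_span_singleton, Ideal.mem_span_singleton, PowerSeries.X_dvd_iff,
        PowerSeries.X_dvd_iff]
      exact ⟨h₁ a ha, h₂ a ha⟩
    simp only [hl, hr] at key
    exact key
end
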